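/- arXiv:0805.0349 — 2 statements merged into one kernel-verified Lean document; each statement's English description precedes it below -/
import Mathlib

section
/- The set of real periods equals the ℚ-subalgebra of ℝ generated by the volumes vol(D) of bounded basic open semialgebraic sets: every real period is a ℚ-linear combination of finite products of numbers vol(D), where D ⊆ ℝ^k is a bounded set of the form {x | G_1(x) > 0, …, G_q(x) > 0} with G_i polynomials with rational coefficients, and conversely every element of this subalgebra is a real period. -/
/-- A real number is a real period if it is the value of an absolutely convergent
integral of a rational function with rational coefficients over a domain in
`ℝ^ℓ` given by polynomial inequalities with rational coefficients. -/
def IsRealPeriod (α : ℝ) : Prop :=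
  ∃ (ℓ q : ℕ) (G : Fin q → MvPolynomial (Fin ℓ) ℚ)
    (P Q : MvPolynomial (Fin ℓ) ℚ),
    (∀ x ∈ {x : Fin ℓ → ℝ | ∀ i, 0 < MvPolynomial.aeval x (G i)},
      MvPolynomial.aeval x Q ≠ 0) ∧
    MeasureTheory.IntegrableOn
      (fun x => MvPolynomial.aeval x P / MvPolynomial.aeval x Q)
      {x : Fin ℓ → ℝ | ∀ i, 0 < MvPolynomial.aeval x (G i)} ∧
    α = ∫ x in {x : Fin ℓ → ℝ | ∀ i, 0 < MvPolynomial.aeval x (G i)},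
      MvPolynomial.aeval x P / MvPolynomial.aeval x Q

/-- The set of volumes of bounded basic open semialgebraic sets (with rational
coefficient polynomials). -/
def BasicSemialgebraicVolumes : Set ℝ :=
  {v : ℝ | ∃ (k q : ℕ) (G : Fin q → MvPolynomial (Fin k) ℚ),
    Bornology.IsBounded {x : Fin k → ℝ | ∀ i, 0 < MvPolynomial.aeval x (G i)} ∧
    v = (MeasureTheory.volume
      {x : Fin k → ℝ | ∀ i, 0 < MvPolynomial.aeval x (G i)}).toReal}


namespace PeriodProof
open MeasureTheory MvPolynomial Set

/-- Basic open set with general finite index types. -/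
def bdom {ι κ : Type} (G : κ → MvPolynomial ι ℚ) : Set (ι → ℝ) :=
  {x | ∀ j, 0 < aeval x (G j)}

lemma mem_bdom {ι κ : Type} {G : κ → MvPolynomial ι ℚ} {x : ι → ℝ} :
    x ∈ bdom G ↔ ∀ j, 0 < aeval x (G j) := Iff.rfl

lemma continuous_aeval' {ι : Type} (P : MvPolynomial ι ℚ) :
    Continuous (fun x : ι → ℝ => aeval x P) := by
  induction P using MvPolynomial.induction_on with
  | C a => simpa using continuous_const
  | add p q hp hq => simp only [map_add]; fun_prop
  | mul_X p i hp => simp only [map_mul, aeval_X]; fun_prop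

lemma isOpen_bdom {ι κ : Type} [Finite κ] (G : κ → MvPolynomial ι ℚ) : IsOpen (bdom G) := by
  have : bdom G = ⋂ j, {x | 0 < aeval x (G j)} := by ext; simp [mem_bdom]
  rw [this]
  exact isOpen_iInter_of_finite fun j => isOpen_lt continuous_const (continuous_aeval' _)

lemma measurableSet_bdom {ι κ : Type} [Fintype ι] [Finite κ] (G : κ → MvPolynomial ι ℚ) :
    MeasurableSet (bdom G) := (isOpen_bdom G).measurableSet

lemma isBounded_iff_coord {ι : Type} [Fintype ι] {S : Set (ι → ℝ)} :
    Bornology.IsBounded S ↔ ∃ R : ℕ, ∀ x ∈ S, ∀ i, |x i| < R := by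
  rw [isBounded_iff_forall_norm_le]
  constructor
  · rintro ⟨R, hR⟩
    obtain ⟨N, hN⟩ := exists_nat_gt R
    refine ⟨N, fun x hx i => ?_⟩
    have := norm_le_pi_norm x i
    rw [Real.norm_eq_abs] at this
    linarith [hR x hx]
  · rintro ⟨R, hR⟩
    refine ⟨R, fun x hx => ?_⟩
    rw [pi_norm_le_iff_of_nonneg (by positivity)]
    exact fun i => (hR x hx i).le

/-- Reindexing as measurable equivalence. -/
def reidx {ι ι' : Type} (e : ι ≃ ι') : (ι' → ℝ) ≃ᵐ (ι → ℝ) :=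
  MeasurableEquiv.piCongrLeft (fun _ => ℝ) e.symm

lemma reidx_apply {ι ι' : Type} (e : ι ≃ ι') (x : ι' → ℝ) : reidx e x = fun i => x (e i) := by
  ext i
  have := Equiv.piCongrLeft_apply_apply (fun _ => ℝ) e.symm x (e i)
  simp only [Equiv.symm_apply_apply] at this
  exact this

lemma reidx_mp {ι ι' : Type} [Fintype ι] [Fintype ι'] (e : ι ≃ ι') :
    MeasurePreserving (reidx e) volume volume :=
  volume_measurePreserving_piCongrLeft (fun _ => ℝ) e.symm

lemma bdom_rename {ι ι' κ κ' : Type} (e : ι ≃ ι') (f : κ ≃ κ') (G : κ → MvPolynomial ι ℚ) :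
    bdom (fun j => rename e (G (f.symm j))) = (reidx e) ⁻¹' (bdom G) := by
  ext x
  simp only [mem_bdom, mem_preimage, reidx_apply, aeval_rename]
  constructor
  · intro h j
    simpa [Function.comp_def] using h (f j)
  · intro h j
    exact h _

lemma vol_mem {ι κ : Type} [Fintype ι] [Fintype κ] (G : κ → MvPolynomial ι ℚ)
    (hb : Bornology.IsBounded (bdom G)) :
    (volume (bdom G)).toReal ∈ BasicSemialgebraicVolumes := by
  let e := Fintype.equivFin ι
  let f := Fintype.equivFin κ
  refine ⟨Fintype.card ι, Fintype.card κ, fun j => rename e (G (f.symm j)), ?_, ?_⟩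
  · change Bornology.IsBounded (bdom (fun j => rename e (G (f.symm j))))
    rw [bdom_rename]
    rw [isBounded_iff_coord] at hb ⊢
    obtain ⟨R, hR⟩ := hb
    refine ⟨R, fun x hx i => ?_⟩
    have := hR _ hx (e.symm i)
    simpa [reidx_apply] using this
  · change _ = (volume (bdom (fun j => rename e (G (f.symm j))))).toReal
    rw [bdom_rename, (reidx_mp e).measure_preimage_equiv]

lemma isRealPeriod_of {ι κ : Type} [Fintype ι] [Fintype κ] (G : κ → MvPolynomial ι ℚ)
    (P Q : MvPolynomial ι ℚ) (hQ : ∀ x ∈ bdom G, aeval x Q ≠ 0)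
    (hi : IntegrableOn (fun x : ι → ℝ => aeval x P / aeval x Q) (bdom G)) :
    IsRealPeriod (∫ x in bdom G, aeval x P / aeval x Q) := by
  let e := Fintype.equivFin ι
  let f := Fintype.equivFin κ
  have key : ∀ (P : MvPolynomial ι ℚ) (x : Fin (Fintype.card ι) → ℝ),
      aeval x (rename e P) = aeval (reidx e x) P := by
    intro P x
    rw [aeval_rename, reidx_apply]; rfl
  have hfun : (fun x : Fin (Fintype.card ι) → ℝ => aeval x (rename e P) / aeval x (rename e Q))
      = (fun x : ι → ℝ => aeval x P / aeval x Q) ∘ (reidx e) := by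
    ext x; simp [key]
  refine ⟨Fintype.card ι, Fintype.card κ, fun j => rename e (G (f.symm j)), rename e P,
    rename e Q, ?_, ?_, ?_⟩
  · change ∀ x ∈ bdom (fun j => rename e (G (f.symm j))), _
    rw [bdom_rename]
    intro x hx
    rw [key]
    exact hQ _ hx
  · change IntegrableOn _ (bdom (fun j => rename e (G (f.symm j))))
    rw [bdom_rename, hfun, (reidx_mp e).integrableOn_comp_preimage (reidx e).measurableEmbedding]
    exact hi
  · change _ = ∫ x in (bdom (fun j => rename e (G (f.symm j)))), _
    rw [bdom_rename]
    rw [show (fun x : Fin (Fintype.card ι) → ℝ => aeval x (rename e P) / aeval x (rename e Q))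
      = fun x => (fun x : ι → ℝ => aeval x P / aeval x Q) (reidx e x) from hfun]
    exact ((reidx_mp e).setIntegral_preimage_emb (reidx e).measurableEmbedding
      (fun x : ι → ℝ => aeval x P / aeval x Q) (bdom G)).symm

/-- The rational span of the volumes. -/
noncomputable def VS : Submodule ℚ ℝ := Submodule.span ℚ BasicSemialgebraicVolumes

lemma vol_mem_VS {ι κ : Type} [Fintype ι] [Fintype κ] (G : κ → MvPolynomial ι ℚ)
    (hb : Bornology.IsBounded (bdom G)) : (volume (bdom G)).toReal ∈ VS :=
  Submodule.subset_span (vol_mem G hb)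

/-- Splitting variables. -/
def split (ι ι' : Type) : (ι ⊕ ι' → ℝ) ≃ᵐ (ι → ℝ) × (ι' → ℝ) :=
  MeasurableEquiv.sumPiEquivProdPi (fun _ => ℝ)

lemma split_mp (ι ι' : Type) [Fintype ι] [Fintype ι'] :
    MeasurePreserving (split ι ι') volume volume :=
  volume_measurePreserving_sumPiEquivProdPi (fun _ => ℝ)

lemma split_apply {ι ι' : Type} (x : ι ⊕ ι' → ℝ) :
    split ι ι' x = (fun i => x (Sum.inl i), fun i => x (Sum.inr i)) := rfl

lemma aeval_inl {ι ι' : Type} (P : MvPolynomial ι ℚ) (x : ι ⊕ ι' → ℝ) :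
    aeval x (rename Sum.inl P) = aeval (split ι ι' x).1 P := by
  rw [aeval_rename]; rfl

lemma aeval_inr {ι ι' : Type} (P : MvPolynomial ι' ℚ) (x : ι ⊕ ι' → ℝ) :
    aeval x (rename Sum.inr P) = aeval (split ι ι' x).2 P := by
  rw [aeval_rename]; rfl

/-- products of bounded volumes are bounded volumes -/
lemma bsv_mul {a b : ℝ} (ha : a ∈ BasicSemialgebraicVolumes) (hb : b ∈ BasicSemialgebraicVolumes) :
    a * b ∈ BasicSemialgebraicVolumes := by
  obtain ⟨k, q, G, hG, rfl⟩ := ha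
  obtain ⟨k', q', G', hG', rfl⟩ := hb
  change Bornology.IsBounded (bdom G) at hG
  change Bornology.IsBounded (bdom G') at hG'
  change (volume (bdom G)).toReal * (volume (bdom G')).toReal ∈ _
  let H : Fin q ⊕ Fin q' → MvPolynomial (Fin k ⊕ Fin k') ℚ :=
    Sum.elim (fun j => rename Sum.inl (G j)) (fun j => rename Sum.inr (G' j))
  have hH : bdom H = (split _ _) ⁻¹' (bdom G ×ˢ bdom G') := by
    ext x
    simp only [mem_bdom, H, Sum.forall, Sum.elim_inl, Sum.elim_inr, aeval_inl, aeval_inr,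
      mem_preimage, mem_prod]
  have := vol_mem H (by
    rw [hH, isBounded_iff_coord]
    rw [isBounded_iff_coord] at hG hG'
    obtain ⟨R, hR⟩ := hG
    obtain ⟨R', hR'⟩ := hG'
    refine ⟨R + R', ?_⟩
    rintro x ⟨h1, h2⟩ (i | i)
    · have := hR _ h1 i
      simp only [split_apply] at this
      push_cast
      have : (0:ℝ) ≤ R' := by positivity
      linarith
    · have := hR' _ h2 i
      simp only [split_apply] at this
      push_cast
      have : (0:ℝ) ≤ R := by positivity
      linarith)
  rw [hH, (split_mp _ _).measure_preimage_equiv, Measure.volume_eq_prod, Measure.prod_prod,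
    ENNReal.toReal_mul] at this
  exact this

lemma bsv_one : (1:ℝ) ∈ BasicSemialgebraicVolumes := by
  have := vol_mem (ι := Fin 0) (κ := Fin 0) (fun j => 0) (by
    rw [isBounded_iff_coord]; exact ⟨0, fun x _ i => i.elim0⟩)
  have h : bdom (ι := Fin 0) (κ := Fin 0) (fun j => 0) = Set.univ := by
    ext x; simp [mem_bdom]
  rw [h] at this
  have h2 : (volume (Set.univ : Set (Fin 0 → ℝ))) = 1 := by
    rw [volume_pi, Measure.pi_univ]; simp
  simpa [h2] using this

lemma VS_mul {a b : ℝ} (ha : a ∈ VS) (hb : b ∈ VS) : a * b ∈ VS := by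
  have : a * b ∈ VS * VS := Submodule.mul_mem_mul ha hb
  rw [VS, Submodule.span_mul_span] at this
  refine Submodule.span_mono ?_ this
  rintro _ ⟨x, hx, y, hy, rfl⟩
  exact bsv_mul hx hy

lemma adjoin_sub {a : ℝ} (ha : a ∈ Algebra.adjoin ℚ BasicSemialgebraicVolumes) : a ∈ VS := by
  induction ha using Algebra.adjoin_induction with
  | mem x hx => exact Submodule.subset_span hx
  | algebraMap r =>
    rw [Algebra.algebraMap_eq_smul_one]
    exact VS.smul_mem _ (Submodule.subset_span bsv_one)
  | add x y _ _ hx hy => exact VS.add_mem hx hy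
  | mul x y _ _ hx hy => exact VS_mul hx hy

end PeriodProof

namespace PeriodProof
open MeasureTheory MvPolynomial Set

/-- Splitting off one variable. -/
noncomputable def split1 (ι : Type) : (ι ⊕ Unit → ℝ) ≃ᵐ (ι → ℝ) × ℝ :=
  (split ι Unit).trans ((MeasurableEquiv.refl _).prodCongr (MeasurableEquiv.funUnique Unit ℝ))

lemma split1_apply {ι : Type} (x : ι ⊕ Unit → ℝ) :
    split1 ι x = (fun i => x (Sum.inl i), x (Sum.inr ())) := rfl

lemma split1_mp (ι : Type) [Fintype ι] : MeasurePreserving (split1 ι) volume volume := by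
  refine MeasurePreserving.trans (split_mp ι Unit) ?_
  exact (MeasurePreserving.id volume).prod (volume_preserving_funUnique Unit ℝ)

lemma aeval_inl1 {ι : Type} (P : MvPolynomial ι ℚ) (x : ι ⊕ Unit → ℝ) :
    aeval x (rename Sum.inl P) = aeval (split1 ι x).1 P := by
  rw [aeval_rename]; rfl

lemma measurable_rat {ι : Type} [Fintype ι] (P Q : MvPolynomial ι ℚ) :
    Measurable (fun x : ι → ℝ => aeval x P / aeval x Q) :=
  (continuous_aeval' P).measurable.div (continuous_aeval' Q).measurable

lemma volume_bdom_lt_top {ι κ : Type} [Fintype ι] (G : κ → MvPolynomial ι ℚ)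
    (hb : Bornology.IsBounded (bdom G)) : volume (bdom G) < ⊤ := hb.measure_lt_top

lemma posint_mem {ι κ : Type} [Fintype ι] [Fintype κ] (G : κ → MvPolynomial ι ℚ)
    (hb : Bornology.IsBounded (bdom G)) (P Q : MvPolynomial ι ℚ)
    (hQ : ∀ x ∈ bdom G, aeval x Q ≠ 0) (B : ℝ)
    (hB : ∀ x ∈ bdom G, |aeval x P / aeval x Q| ≤ B) :
    ∫ x in bdom G, max (aeval x P / aeval x Q) 0 ∈ VS := by
  let H : κ ⊕ Bool → MvPolynomial (ι ⊕ Unit) ℚ :=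
    Sum.elim (fun j => rename Sum.inl (G j)) (fun b => if b then X (Sum.inr ()) else
      rename Sum.inl (P * Q) - X (Sum.inr ()) * rename Sum.inl (Q ^ 2))
  have hH : bdom H = (split1 ι) ⁻¹' (regionBetween (fun _ => 0)
      (fun x => max (aeval x P / aeval x Q) 0) (bdom G)) := by
    ext x
    simp only [mem_bdom, H, Sum.forall, Sum.elim_inl, Sum.elim_inr, aeval_inl1, Bool.forall_bool,
      mem_preimage, regionBetween, mem_ofPred_eq, if_true, map_mul,
      aeval_X, mem_Ioo, map_pow]
    refine and_congr_right fun hx => ?_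
    have h2 : (split1 ι x).2 = x (Sum.inr ()) := rfl
    rw [h2]
    have hq := hQ _ hx
    set q := aeval (split1 ι x).1 Q
    set p := aeval (split1 ι x).1 P
    set t := x (Sum.inr ())
    have hq2 : 0 < q ^ 2 := by positivity
    have e : p / q = (p * q) / q ^ 2 := by field_simp
    simp only [Bool.false_eq_true, if_false, map_sub, map_mul, aeval_X, map_pow, aeval_inl1]
    change 0 < p * q - t * q ^ 2 ∧ 0 < t ↔ _
    constructor
    · rintro ⟨h1, h3⟩
      refine ⟨h3, lt_max_of_lt_left ?_⟩
      rw [e, lt_div_iff₀ hq2]; linarith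
    · rintro ⟨h3, h1⟩
      refine ⟨?_, h3⟩
      rcases lt_max_iff.mp h1 with h | h
      · rw [e, lt_div_iff₀ hq2] at h; linarith
      · linarith
  have hbH : Bornology.IsBounded (bdom H) := by
    rw [hH, isBounded_iff_coord]
    rw [isBounded_iff_coord] at hb
    obtain ⟨R, hR⟩ := hb
    obtain ⟨N, hN⟩ := exists_nat_gt B
    refine ⟨R + N, ?_⟩
    have hRn : (0:ℝ) ≤ R := by positivity
    have hNn : (0:ℝ) ≤ N := by positivity
    push_cast
    rintro x ⟨h1, h2, h3⟩ (i | i)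
    · have : |x (Sum.inl i)| < R := hR _ h1 i
      linarith
    · change 0 < x (Sum.inr i) at h2
      change x (Sum.inr i) < _ at h3
      rw [abs_of_pos h2]
      have := (abs_le.mp (hB _ h1)).2
      have h0 : 0 ≤ B := (abs_nonneg _).trans (hB _ h1)
      have := max_le this h0
      linarith
  have hm : AEStronglyMeasurable (fun x : ι → ℝ => max (aeval x P / aeval x Q) 0) volume :=
    ((measurable_rat P Q).max measurable_const).aestronglyMeasurable
  have hIntg : IntegrableOn (fun x : ι → ℝ => max (aeval x P / aeval x Q) 0) (bdom G) := by
    refine Measure.integrableOn_of_bounded (M := B) (volume_bdom_lt_top G hb).ne hm ?_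
    refine (ae_restrict_iff' (measurableSet_bdom G)).mpr (Filter.Eventually.of_forall ?_)
    intro x hx
    have := (abs_le.mp (hB _ hx)).2
    have h0 : 0 ≤ B := (abs_nonneg _).trans (hB _ hx)
    rw [Real.norm_eq_abs, abs_of_nonneg (le_max_right _ _)]
    exact max_le this h0
  have hv := vol_mem_VS H hbH
  rw [hH, (split1_mp ι).measure_preimage_equiv, Measure.volume_eq_prod,
    volume_regionBetween_eq_integral (integrableOn_const (volume_bdom_lt_top G hb).ne) hIntg
      (measurableSet_bdom G) (fun x _ => le_max_right _ _), ENNReal.toReal_ofReal] at hv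
  · simpa using hv
  · refine integral_nonneg fun x => ?_
    simp

lemma ratint_mem {ι κ : Type} [Fintype ι] [Fintype κ] (G : κ → MvPolynomial ι ℚ)
    (hb : Bornology.IsBounded (bdom G)) (P Q : MvPolynomial ι ℚ)
    (hQ : ∀ x ∈ bdom G, aeval x Q ≠ 0) (B : ℝ)
    (hB : ∀ x ∈ bdom G, |aeval x P / aeval x Q| ≤ B) :
    ∫ x in bdom G, aeval x P / aeval x Q ∈ VS := by
  have hIntg : IntegrableOn (fun x : ι → ℝ => aeval x P / aeval x Q) (bdom G) := by
    refine Measure.integrableOn_of_bounded (M := B) (volume_bdom_lt_top G hb).ne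
      (measurable_rat P Q).aestronglyMeasurable ?_
    exact (ae_restrict_iff' (measurableSet_bdom G)).mpr (Filter.Eventually.of_forall hB)
  have h1 := posint_mem G hb P Q hQ B hB
  have h2 := posint_mem G hb (-P) Q hQ B (by
    intro x hx
    rw [map_neg, neg_div, abs_neg]
    exact hB x hx)
  have h3 := VS.sub_mem h1 h2
  rw [← integral_sub hIntg.pos_part (by
    have := hIntg.neg_part
    refine this.congr (Filter.Eventually.of_forall fun x => ?_)
    simp [neg_div])] at h3
  convert h3 using 2
  ext x
  rw [map_neg, neg_div]
  rcases le_total 0 (aeval x P / aeval x Q) with h | h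
  · rw [max_eq_left h, max_eq_right (by linarith)]; ring
  · rw [max_eq_right h, max_eq_left (by linarith)]; ring

end PeriodProof

namespace PeriodProof
open MeasureTheory MvPolynomial Set

lemma integral_split {ι ι' : Type} [Fintype ι] [Fintype ι'] (F : (ι ⊕ ι' → ℝ) → ℝ)
    (hF : Integrable F) (Φ : (ι → ℝ) → (ι' → ℝ) → ℝ)
    (h : ∀ y, F y = Φ (split ι ι' y).1 (split ι ι' y).2) :
    ∫ y, F y = ∫ x, ∫ s, Φ x s := by
  have h1 : F = (fun z : (ι → ℝ) × (ι' → ℝ) => Φ z.1 z.2) ∘ split ι ι' := by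
    ext y; exact h y
  have h2 : Integrable (fun z : (ι → ℝ) × (ι' → ℝ) => Φ z.1 z.2) volume := by
    rw [h1] at hF
    exact ((split_mp ι ι').integrable_comp_emb (split ι ι').measurableEmbedding).mp hF
  rw [h1]
  have := (split_mp ι ι').integral_comp (split ι ι').measurableEmbedding
    (fun z : (ι → ℝ) × (ι' → ℝ) => Φ z.1 z.2)
  simp only [Function.comp_apply]
  rw [this, Measure.volume_eq_prod, integral_prod _ h2]

lemma exists_bound {ι : Type} [Fintype ι] {S : Set (ι → ℝ)} (hS : Bornology.IsBounded S)
    (p : MvPolynomial ι ℚ) : ∃ B : ℕ, ∀ x ∈ S, |aeval x p| < B := by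
  have hc : IsCompact (closure S) := hS.isCompact_closure
  obtain ⟨C, hC⟩ := hc.exists_bound_of_continuousOn (continuous_aeval' p).continuousOn
  obtain ⟨N, hN⟩ := exists_nat_gt C
  exact ⟨N, fun x hx => (hC x (subset_closure hx)).trans_lt hN⟩

open Classical in
/-- one-dimensional piece for the logarithm -/
noncomputable def lphi (k : ℕ) (a s : ℝ) : ℝ := if 0 < s ∧ s < 1 ∧ a < s ^ k then s⁻¹ else 0

lemma integral_lphi {k : ℕ} (hk : k ≠ 0) {a : ℝ} (ha : 0 < a) (ha1 : a < 1) :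
    ∫ s, lphi k a s = - Real.log a / k := by
  have hkp : (0:ℝ) < k := by positivity
  set b := a ^ ((k:ℝ)⁻¹) with hb
  have hb0 : 0 < b := Real.rpow_pos_of_pos ha _
  have hb1 : b < 1 := Real.rpow_lt_one ha.le ha1 (by positivity)
  have hbk : b ^ k = a := Real.rpow_inv_natCast_pow ha.le hk
  have h1 : lphi k a = (Ioo b 1).indicator (fun s => s⁻¹) := by
    ext s
    simp only [lphi, Set.indicator, mem_Ioo]
    congr 1
    apply propext
    constructor
    · rintro ⟨h0, h1, h2⟩
      refine ⟨?_, h1⟩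
      rw [← hbk] at h2
      exact lt_of_pow_lt_pow_left₀ k h0.le h2
    · rintro ⟨h1, h2⟩
      refine ⟨hb0.trans h1, h2, ?_⟩
      rw [← hbk]
      exact pow_lt_pow_left₀ h1 hb0.le hk
  rw [h1, integral_indicator measurableSet_Ioo, ← integral_Ioc_eq_integral_Ioo,
    ← intervalIntegral.integral_of_le hb1.le, integral_inv_of_pos hb0 one_pos, one_div, Real.log_inv,
    hb, Real.log_rpow ha]
  field_simp

lemma log_mem {ι κ : Type} [Fintype ι] [Fintype κ] (G : κ → MvPolynomial ι ℚ)
    (hb : Bornology.IsBounded (bdom G)) (p g : MvPolynomial ι ℚ)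
    (hg : ∀ x ∈ bdom G, 0 < aeval x g ∧ aeval x g < 1) (k : ℕ) :
    ∫ x in bdom G, aeval x p * aeval x g * (Real.log (aeval x g)) ^ k ∈ VS := by
  classical
  let H : κ ⊕ (Fin k × Fin 3) → MvPolynomial (ι ⊕ Fin k) ℚ :=
    Sum.elim (fun j => rename Sum.inl (G j)) (fun z =>
      if z.2 = 0 then X (Sum.inr z.1) else if z.2 = 1 then 1 - X (Sum.inr z.1) else
      X (Sum.inr z.1) ^ k - rename Sum.inl g)
  have hH : ∀ y, y ∈ bdom H ↔ ((split _ _ y).1 ∈ bdom G ∧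
      ∀ i, 0 < (split _ _ y).2 i ∧ (split _ _ y).2 i < 1 ∧
        aeval (split _ _ y).1 g < (split _ _ y).2 i ^ k) := by
    intro y
    simp only [mem_bdom, H, Sum.forall, Sum.elim_inl, Sum.elim_inr, aeval_inl, Prod.forall]
    refine and_congr_right fun _ => forall_congr' fun i => ?_
    rw [Fin.forall_fin_succ, Fin.forall_fin_two]
    have h20 : ¬ ((Fin.succ 1 : Fin 3) = 0) := by decide
    have h21 : ¬ ((Fin.succ 1 : Fin 3) = 1) := by decide
    have h10 : ¬ ((1 : Fin 3) = 0) := by decide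
    have h11 : ((Fin.succ 0 : Fin 3) = 1) := by decide
    simp only [h20, h21, h10, h11, if_true, if_false, map_sub, map_pow, aeval_X, map_one, aeval_inl,
      sub_pos]
    rfl
  let P : MvPolynomial (ι ⊕ Fin k) ℚ := rename Sum.inl (p * g)
  let Q : MvPolynomial (ι ⊕ Fin k) ℚ := ∏ i, X (Sum.inr i)
  have hQv : ∀ y : ι ⊕ Fin k → ℝ, aeval y Q = ∏ i, (split _ _ y).2 i := by
    intro y
    simp only [Q, map_prod, aeval_X]; rfl
  have hPv : ∀ y : ι ⊕ Fin k → ℝ, aeval y P = aeval (split _ _ y).1 p * aeval (split _ _ y).1 g := by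
    intro y
    simp only [P, aeval_inl, map_mul]
  have hbH : Bornology.IsBounded (bdom H) := by
    rw [isBounded_iff_coord] at hb ⊢
    obtain ⟨R, hR⟩ := hb
    refine ⟨R + 1, fun y hy i => ?_⟩
    rw [hH] at hy
    have hRn : (0:ℝ) ≤ R := by positivity
    push_cast
    rcases i with i | i
    · have : |y (Sum.inl i)| < R := hR _ hy.1 i
      linarith
    · obtain ⟨h1, h2, -⟩ := hy.2 i
      change 0 < y (Sum.inr i) at h1
      change y (Sum.inr i) < 1 at h2
      rw [abs_of_pos h1]; linarith
  have hQ : ∀ y ∈ bdom H, aeval y Q ≠ 0 := by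
    intro y hy
    rw [hQv]
    exact Finset.prod_ne_zero_iff.mpr fun i _ => (((hH y).mp hy).2 i).1.ne'
  obtain ⟨B, hB⟩ := exists_bound hb p
  have hbd : ∀ y ∈ bdom H, |aeval y P / aeval y Q| ≤ B := by
    intro y hy
    have hy' := (hH y).mp hy
    obtain ⟨g0, g1⟩ := hg _ hy'.1
    have hpos : 0 < ∏ i, (split _ _ y).2 i := Finset.prod_pos fun i _ => (hy'.2 i).1
    have hge : aeval (split _ _ y).1 g ≤ ∏ i, (split _ _ y).2 i := by
      rcases Nat.eq_zero_or_pos k with rfl | hk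
      · simpa using g1.le
      · have : aeval (split _ _ y).1 g ^ k ≤ (∏ i, (split _ _ y).2 i) ^ k := by
          rw [← Finset.prod_pow]
          calc aeval (split _ _ y).1 g ^ k = ∏ i : Fin k, aeval (split _ _ y).1 g := by simp
            _ ≤ _ := Finset.prod_le_prod (fun _ _ => g0.le) fun i _ => (hy'.2 i).2.2.le
        exact le_of_pow_le_pow_left₀ hk.ne' hpos.le this
    rw [hPv, hQv, abs_div, abs_mul, abs_of_pos g0, abs_of_pos hpos, div_le_iff₀ hpos]
    exact mul_le_mul (hB _ hy'.1).le hge g0.le (by positivity)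
  have hmem := ratint_mem H hbH P Q hQ B hbd
  have hIntg : IntegrableOn (fun x => aeval x P / aeval x Q) (bdom H) := by
    refine Measure.integrableOn_of_bounded (M := B) (volume_bdom_lt_top H hbH).ne
      (measurable_rat P Q).aestronglyMeasurable ?_
    exact (ae_restrict_iff' (measurableSet_bdom H)).mpr (Filter.Eventually.of_forall hbd)
  rw [← integral_indicator (measurableSet_bdom H),
    integral_split _ (hIntg.integrable_indicator (measurableSet_bdom H))
    (fun x s => (bdom G).indicator (fun x => aeval x p * aeval x g) x *
      ∏ i, lphi k (aeval x g) (s i))] at hmem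
  · simp only [integral_const_mul] at hmem
    have hk : ∀ x ∈ bdom G, (aeval x p * aeval x g * (Real.log (aeval x g)) ^ k) =
       ((-(k:ℚ)) ^ k) • ((aeval x p * aeval x g) *
        ∫ s : Fin k → ℝ, ∏ i, lphi k (aeval x g) (s i)) := by
      intro x hx
      obtain ⟨g0, g1⟩ := hg _ hx
      rw [integral_fintype_prod_volume_eq_pow, Fintype.card_fin, Rat.smul_def]
      rcases Nat.eq_zero_or_pos k with rfl | hk
      · simp
      · rw [integral_lphi hk.ne' g0 g1]
        push_cast
        have : (k:ℝ) ≠ 0 := by positivity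
        rw [div_pow, neg_pow (Real.log _), neg_pow (k:ℝ)]
        field_simp
        rw [← pow_mul, mul_comm k 2, pow_mul]
        simp
    rw [setIntegral_congr_fun (measurableSet_bdom G) hk]
    simp only [Rat.smul_def, integral_const_mul]
    rw [← Rat.smul_def]
    refine VS.smul_mem _ ?_
    rw [← integral_indicator (measurableSet_bdom G)]
    convert hmem using 1
    refine integral_congr_ae (Filter.Eventually.of_forall fun x => ?_)
    by_cases hx : x ∈ bdom G <;> simp [hx]
  · intro y
    by_cases hy : y ∈ bdom H
    · have hy' := (hH y).mp hy
      rw [indicator_of_mem hy, indicator_of_mem hy'.1, hPv, hQv]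
      have : ∀ i, lphi k (aeval (split _ _ y).1 g) ((split _ _ y).2 i) = ((split _ _ y).2 i)⁻¹ := by
        intro i
        rw [lphi, if_pos (hy'.2 i)]
      simp only [this, Finset.prod_inv_distrib, div_eq_mul_inv]
    · rw [indicator_of_notMem hy]
      by_cases hx : (split _ _ y).1 ∈ bdom G
      · have : ∃ i, ¬ (0 < (split _ _ y).2 i ∧ (split _ _ y).2 i < 1 ∧
          aeval (split _ _ y).1 g < (split _ _ y).2 i ^ k) := by
          by_contra hcon
          push Not at hcon
          exact hy ((hH y).mpr ⟨hx, fun i => by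
            by_contra h3
            exact h3 (by
              have := hcon i
              tauto)⟩)
        obtain ⟨i, hi⟩ := this
        have : ∏ i, lphi k (aeval (split _ _ y).1 g) ((split _ _ y).2 i) = 0 :=
          Finset.prod_eq_zero (Finset.mem_univ i) (by rw [lphi, if_neg hi])
        rw [this, mul_zero]
      · rw [indicator_of_notMem hx, zero_mul]

end PeriodProof

namespace PeriodProof
open MeasureTheory MvPolynomial Set Filter Topology

lemma continuous_eval' {ι : Type} (P : MvPolynomial ι ℝ) :
    Continuous (fun x : ι → ℝ => eval x P) := MvPolynomial.continuous_eval P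

lemma hasLineDeriv_eval {ι : Type} [DecidableEq ι] (i : ι) (p : MvPolynomial ι ℝ) (x : ι → ℝ) :
    HasDerivAt (fun t : ℝ => eval (x + t • (Pi.single i 1 : ι → ℝ)) p) (eval x (pderiv i p)) 0 := by
  induction p using MvPolynomial.induction_on with
  | C a => simpa using hasDerivAt_const (0:ℝ) a
  | add p q hp hq => simp only [map_add]; exact hp.fun_add hq
  | mul_X p j hp =>
    have h : HasDerivAt (fun t : ℝ => (x + t • (Pi.single i 1 : ι → ℝ)) j)
        (Pi.single (M := fun _ => ℝ) i 1 j) 0 := by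
      have := ((hasDerivAt_id (0:ℝ)).mul_const ((Pi.single i 1 : ι → ℝ) j)).const_add (x j)
      simpa using this
    have := hp.fun_mul h
    simp only [map_mul, eval_X, pderiv_mul, map_add, pderiv_X] at this ⊢
    refine this.congr_deriv ?_
    rw [zero_smul, add_zero]
    by_cases hij : i = j
    · subst hij; simp
    · have hji : j ≠ i := fun h => hij h.symm
      simp [Pi.single_apply, hij, hji]

/-- The data for the Mellin type integrals. -/
structure Good {ι : Type} [Fintype ι] (D : Set (ι → ℝ)) (g : MvPolynomial ι ℝ) : Prop where
  op : IsOpen D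
  bd : Bornology.IsBounded D
  pos : ∀ x ∈ D, 0 < eval x g
  lt : ∀ x ∈ D, eval x g < 1
  fr : ∀ x ∈ closure D, x ∉ D → eval x g = 0

/-- The Mellin functional. -/
noncomputable def J {ι : Type} [Fintype ι] (D : Set (ι → ℝ)) (g : MvPolynomial ι ℝ) (s : ℝ)
    (r : MvPolynomial ι ℝ) : ℝ := ∫ x in D, eval x r * (eval x g) ^ s

variable {ι : Type} [Fintype ι] {D : Set (ι → ℝ)} {g : MvPolynomial ι ℝ}

lemma Good.integrable (h : Good D g) {s : ℝ} (hs : 0 ≤ s) (r : MvPolynomial ι ℝ) :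
    IntegrableOn (fun x => eval x r * (eval x g) ^ s) D := by
  obtain ⟨C, hC⟩ := h.bd.isCompact_closure.exists_bound_of_continuousOn
    (continuous_eval' r).continuousOn
  refine Measure.integrableOn_of_bounded (M := C) h.bd.measure_lt_top.ne
    ((continuous_eval' r).measurable.mul
      ((continuous_eval' g).measurable.pow_const s)).aestronglyMeasurable ?_
  refine (ae_restrict_iff' h.op.measurableSet).mpr (Filter.Eventually.of_forall ?_)
  intro x hx
  have h1 := hC x (subset_closure hx)
  have h2 := Real.rpow_le_one (h.pos x hx).le (h.lt x hx).le hs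
  have h3 := Real.rpow_nonneg (h.pos x hx).le s
  rw [norm_mul, Real.norm_of_nonneg h3]
  calc _ ≤ ‖eval x r‖ * 1 := by gcongr
    _ ≤ C := by linarith

lemma Good.ibp [DecidableEq ι] (h : Good D g) {s : ℝ} (hs : 1 ≤ s) (i : ι) (r : MvPolynomial ι ℝ) :
    J D g s (pderiv i r * g + MvPolynomial.C (s + 1) * (r * pderiv i g)) = 0 := by
  set v : ι → ℝ := Pi.single i 1 with hv
  set F : (ι → ℝ) → ℝ := D.indicator (fun x => eval x r * (eval x g) ^ (s + 1)) with hF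
  set F' : (ι → ℝ) → ℝ := D.indicator (fun x =>
    eval x (pderiv i r * g + MvPolynomial.C (s + 1) * (r * pderiv i g)) * (eval x g) ^ s) with hF'
  have hline : ∀ x, HasLineDerivAt ℝ F (F' x) x v := by
    intro x
    unfold HasLineDerivAt
    have hcont : Continuous (fun t : ℝ => x + t • v) := by fun_prop
    have hr := hasLineDeriv_eval i r x
    have hg := hasLineDeriv_eval i g x
    rw [← hv] at hr hg
    by_cases hx : x ∈ D
    · have hev : ∀ᶠ t : ℝ in 𝓝 0, x + t • v ∈ D := by
        apply hcont.continuousAt.eventually_mem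
        simpa using h.op.mem_nhds hx
      have hne : eval (x + (0:ℝ) • v) g ≠ 0 := by simpa using (h.pos x hx).ne'
      have h1 := hr.mul (hg.rpow_const (p := s + 1) (Or.inl hne))
      simp only [zero_smul, add_zero, add_sub_cancel_right] at h1
      have hFx : F' x = eval x (pderiv i r) * eval x g ^ (s + 1) +
        eval x r * (eval x (pderiv i g) * (s + 1) * eval x g ^ s) := by
        rw [hF', indicator_of_mem hx, Real.rpow_add_one (h.pos x hx).ne']
        simp only [map_add, map_mul, eval_C]
        ring
      rw [hFx]
      refine h1.congr_of_eventuallyEq ?_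
      filter_upwards [hev] with t ht
      rw [hF, indicator_of_mem ht]; rfl
    · have hFx : F' x = 0 := by rw [hF', indicator_of_notMem hx]
      rw [hFx]
      by_cases hxc : x ∈ closure D
      · have hgx := h.fr x hxc hx
        have h2 : eval (x + (0:ℝ) • v) g = 0 := by simpa using hgx
        have h3 : HasDerivAt (fun t : ℝ => eval (x + t • v) r * eval (x + t • v) g ^ 2) 0 0 := by
          refine HasDerivAt.congr_deriv (hr.fun_mul (hg.fun_pow 2)) ?_
          simp [hgx]
        rw [hasDerivAt_iff_isLittleO] at h3 ⊢
        refine Asymptotics.IsBigO.trans_isLittleO ?_ h3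
        refine Asymptotics.IsBigO.of_bound 1 (Filter.Eventually.of_forall fun t => ?_)
        have hF0 : F (x + (0:ℝ) • v) = 0 := by
          rw [hF, indicator_of_notMem]; simpa using hx
        rw [hF0]
        simp only [h2, smul_zero, sub_zero, one_mul, ne_eq, OfNat.ofNat_ne_zero, not_false_eq_true,
          zero_pow, mul_zero]
        by_cases ht : x + t • v ∈ D
        · rw [hF, indicator_of_mem ht, norm_mul, norm_mul]
          gcongr
          have p0 := h.pos _ ht
          have p1 := h.lt _ ht
          rw [Real.norm_of_nonneg (Real.rpow_nonneg p0.le _), Real.norm_of_nonneg (by positivity),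
            ← Real.rpow_natCast]
          exact Real.rpow_le_rpow_of_exponent_ge p0 p1.le (by push_cast; linarith)
        · rw [hF, indicator_of_notMem ht, norm_zero]; positivity
      · have hev : ∀ᶠ t : ℝ in 𝓝 0, x + t • v ∈ (closure D)ᶜ := by
          apply hcont.continuousAt.eventually_mem
          simpa using isClosed_closure.isOpen_compl.mem_nhds hxc
        refine (hasDerivAt_const (0:ℝ) (0:ℝ)).congr_of_eventuallyEq ?_
        filter_upwards [hev] with t ht
        rw [hF, indicator_of_notMem (fun h => ht (subset_closure h))]
  have hFi : Integrable F := (h.integrable (by linarith) r).integrable_indicator h.op.measurableSet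
  have hFi' : Integrable F' := (h.integrable (by linarith) _).integrable_indicator h.op.measurableSet
  have key := integral_bilinear_hasLineDerivAt_right_eq_neg_left_of_integrable (μ := volume)
    (f := F) (f' := F') (g := fun _ : ι → ℝ => (1:ℝ)) (g' := fun _ => (0:ℝ)) (v := v)
    (B := ContinuousLinearMap.mul ℝ ℝ) (by simpa using hFi') (by simp) (by simpa using hFi)
    (fun x _ => hline x) (fun x _ => by
      unfold HasLineDerivAt; exact hasDerivAt_const _ _)
  simp only [ContinuousLinearMap.mul_apply', mul_zero, mul_one, integral_zero] at key
  rw [J, ← integral_indicator h.op.measurableSet]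
  linarith

end PeriodProof

namespace PeriodProof
open MeasureTheory MvPolynomial Set

section algebraic

variable {ι : Type}

lemma totalDegree_pderiv_le' {R : Type} [CommRing R] (i : ι) (p : MvPolynomial ι R) :
    (pderiv i p).totalDegree ≤ p.totalDegree := by
  classical
  conv_lhs => rw [p.as_sum, map_sum]
  refine totalDegree_finsetSum_le fun v hv => ?_
  rw [pderiv_monomial]
  refine (totalDegree_monomial_le _ _).trans ?_
  refine le_trans ?_ (le_totalDegree hv)
  have h : (v - Finsupp.single i 1) ≤ v := tsub_le_self
  exact Finsupp.degree_mono h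

/-- The polynomial `q` such that `∂_l (p g^s) = q g^(s - |l|)`. -/
noncomputable def qq {R : Type} [CommRing R] (G p : MvPolynomial ι R) (s : R) :
    List ι → MvPolynomial ι R
  | [] => p
  | i :: l => pderiv i (qq G p s l) * G + C (s - (l.length : R)) * (qq G p s l * pderiv i G)

lemma totalDegree_qq {R : Type} [CommRing R] (G p : MvPolynomial ι R) (s : R) (l : List ι) :
    (qq G p s l).totalDegree ≤ p.totalDegree + l.length * G.totalDegree := by
  induction l with
  | nil => simp [qq]
  | cons i l ih =>
    rw [qq]
    refine (totalDegree_add _ _).trans (max_le ?_ ?_)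
    · refine (totalDegree_mul _ _).trans ?_
      have := totalDegree_pderiv_le' i (qq G p s l)
      simp only [List.length_cons, add_mul, one_mul]
      omega
    · refine (totalDegree_mul _ _).trans ?_
      have h1 := totalDegree_mul (qq G p s l) (pderiv i G)
      have := totalDegree_pderiv_le' i G
      simp only [List.length_cons, add_mul, one_mul, totalDegree_C]
      omega

lemma map_qq {R S : Type} [CommRing R] [CommRing S] (f : R →+* S) (G p : MvPolynomial ι R) (s : R)
    (l : List ι) : map f (qq G p s l) = qq (map f G) (map f p) (f s) l := by
  induction l with
  | nil => rfl
  | cons i l ih =>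
    simp only [qq, map_add, map_mul, ← pderiv_map, ih, map_C, map_sub, map_natCast]

/-- iterated derivative -/
noncomputable def dd : List ι → MvPolynomial ι ℝ → MvPolynomial ι ℝ
  | [], r => r
  | i :: l, r => dd l (pderiv i r)

lemma dd_zero (l : List ι) : dd l (0 : MvPolynomial ι ℝ) = 0 := by
  induction l with
  | nil => rfl
  | cons i l ih => simp [dd, ih]

lemma dd_monomial_zero [DecidableEq ι] (l : List ι) : ∀ (κ : ι →₀ ℕ) (a : ℝ),
    (∃ i, κ i < l.count i) → dd l (monomial κ a) = 0 := by
  induction l with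
  | nil => rintro κ a ⟨i, hi⟩; simp at hi
  | cons j l ih =>
    rintro κ a ⟨i, hi⟩
    rw [dd, pderiv_monomial]
    by_cases hj : κ j = 0
    · simp [hj, dd_zero]
    · apply ih
      refine ⟨i, ?_⟩
      rw [List.count_cons] at hi
      by_cases hij : j = i
      · subst hij; simp at hi ⊢; omega
      · simp [hij] at hi ⊢; omega

lemma dd_monomial_eq [DecidableEq ι] (l : List ι) : ∀ (κ : ι →₀ ℕ) (a : ℝ), a ≠ 0 →
    (∀ i, l.count i = κ i) → ∃ c : ℝ, c ≠ 0 ∧ dd l (monomial κ a) = C c := by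
  induction l with
  | nil =>
    intro κ a ha h
    have : κ = 0 := by ext i; simpa using (h i).symm
    subst this
    exact ⟨a, ha, rfl⟩
  | cons j l ih =>
    intro κ a ha h
    rw [dd, pderiv_monomial]
    apply ih
    · have := h j
      simp at this
      refine mul_ne_zero ha ?_
      rw [← this]; positivity
    · intro i
      have := h i
      rw [List.count_cons] at this
      by_cases hij : j = i
      · subst hij; simp at this ⊢; omega
      · simp [hij] at this ⊢; omega

end algebraic

section mellin
variable {ι : Type} [Fintype ι] {D : Set (ι → ℝ)} {g : MvPolynomial ι ℝ}

lemma Good.J_add (h : Good D g) {s : ℝ} (hs : 0 ≤ s) (r r' : MvPolynomial ι ℝ) :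
    J D g s (r + r') = J D g s r + J D g s r' := by
  unfold J
  rw [← integral_add (h.integrable hs r) (h.integrable hs r')]
  simp only [map_add, add_mul]

lemma J_C_mul (s c : ℝ) (r : MvPolynomial ι ℝ) :
    J D g s (C c * r) = c * J D g s r := by
  unfold J
  rw [← integral_const_mul]
  simp only [map_mul, eval_C, mul_assoc]

lemma J_zero (s : ℝ) : J D g s 0 = 0 := by simp [J]

lemma Good.J_sum (h : Good D g) {s : ℝ} (hs : 0 ≤ s) {κ : Type} (S : Finset κ)
    (r : κ → MvPolynomial ι ℝ) :
    J D g s (∑ k ∈ S, r k) = ∑ k ∈ S, J D g s (r k) := by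
  classical
  induction S using Finset.induction_on with
  | empty => simp [J_zero]
  | insert a S ha ih => rw [Finset.sum_insert ha, Finset.sum_insert ha, h.J_add hs, ih]

lemma Good.J_mul_pow (h : Good D g) (s : ℝ) (r : MvPolynomial ι ℝ) (n : ℕ) :
    J D g s (r * g ^ n) = J D g (s + n) r := by
  unfold J
  refine setIntegral_congr_fun h.op.measurableSet fun x hx => ?_
  simp only [map_mul, map_pow]
  rw [Real.rpow_add (h.pos x hx), Real.rpow_natCast]
  ring

lemma Good.J_qq [DecidableEq ι] (h : Good D g) (p : MvPolynomial ι ℝ) (s : ℝ) (l : List ι) :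
    ∀ (r : MvPolynomial ι ℝ), 1 ≤ s - l.length →
    J D g (s - l.length) (r * qq g p s l) = (-1) ^ l.length * J D g s (dd l r * p) := by
  induction l with
  | nil => intro r _; simp [qq, dd]
  | cons i l ih =>
    intro r hs
    have hs' : 1 ≤ s - (l.length : ℝ) - 1 := by
      simp only [List.length_cons, Nat.cast_add, Nat.cast_one] at hs; linarith
    have h1 := h.ibp hs' i (r * qq g p s l)
    have e1 : s - ((i :: l).length : ℝ) = s - (l.length : ℝ) - 1 := by
      simp only [List.length_cons, Nat.cast_add, Nat.cast_one]; ring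
    rw [e1]
    have h2 := ih (pderiv i r) (by linarith)
    have e2 : pderiv i (r * qq g p s l) * g
        + C (s - (l.length : ℝ) - 1 + 1) * (r * qq g p s l * pderiv i g)
        = (pderiv i r * qq g p s l) * g ^ 1 + r * qq g p s (i :: l) := by
      rw [qq, pderiv_mul, sub_add_cancel]; ring
    rw [e2, h.J_add (by linarith), h.J_mul_pow] at h1
    simp only [Nat.cast_one, sub_add_cancel] at h1
    rw [dd, List.length_cons, pow_succ]
    rw [h2] at h1
    linarith

end mellin

section recurrence
variable {ι : Type} [Fintype ι] [DecidableEq ι]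

/-- a list with prescribed multiplicities -/
noncomputable def lst (k : ι →₀ ℕ) : List ι := (Finsupp.toMultiset k).toList

lemma count_lst (k : ι →₀ ℕ) (i : ι) : (lst k).count i = k i := by
  rw [lst, ← Multiset.coe_count, Multiset.coe_toList, Finsupp.count_toMultiset]

lemma length_lst (k : ι →₀ ℕ) : (lst k).length = ∑ i, k i := by
  rw [lst, Multiset.length_toList, Finsupp.card_toMultiset, Finsupp.sum_fintype]
  · rfl
  · simp

lemma exists_rel (G p : MvPolynomial ι (Polynomial ℚ)) :
    ∃ (N : ℕ) (c : Fin N × (ι → Fin N) → Polynomial ℚ), (∃ a, c a ≠ 0) ∧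
      ∑ a, C (c a) * (qq G p (Polynomial.X + 2 * ((a.1 : ℕ) : Polynomial ℚ))
        (lst (Finsupp.equivFunOnFinite.symm fun i => (a.2 i : ℕ))) *
        G ^ (2 * (a.1 : ℕ) + Fintype.card ι * N - ∑ i, (a.2 i : ℕ))) = 0 := by
  classical
  set n := Fintype.card ι with hn
  set d := G.totalDegree with hd
  set K := p.totalDegree + (n + 2) * d + 1 with hK
  set N := K ^ n + 1 with hN
  set v : Fin N × (ι → Fin N) → MvPolynomial ι (Polynomial ℚ) := fun a =>
    (qq G p (Polynomial.X + 2 * ((a.1 : ℕ) : Polynomial ℚ))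
        (lst (Finsupp.equivFunOnFinite.symm fun i => (a.2 i : ℕ))) *
        G ^ (2 * (a.1 : ℕ) + n * N - ∑ i, (a.2 i : ℕ))) with hv
  set T : MvPolynomial ι (Polynomial ℚ) →ₗ[Polynomial ℚ] ((ι → Fin (K * N)) → Polynomial ℚ) :=
    LinearMap.pi fun e => lcoeff (Polynomial ℚ) (Finsupp.equivFunOnFinite.symm fun i => (e i : ℕ))
    with hT
  have hTinj : ∀ f : MvPolynomial ι (Polynomial ℚ), f.totalDegree < K * N → T f = 0 → f = 0 := by
    intro f hf h0
    ext1 m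
    rw [coeff_zero]
    by_contra hm
    have hm' : m ∈ f.support := mem_support_iff.mpr hm
    have hdeg := le_totalDegree hm'
    have hlt : ∀ i, m i < K * N := fun i => by
      have := Finsupp.le_degree i m
      have h3 : m.degree ≤ f.totalDegree := hdeg
      omega
    have := congrFun h0 (fun i => ⟨m i, hlt i⟩)
    apply hm
    simpa [hT, lcoeff] using this
  have hsum : ∀ a : Fin N × (ι → Fin N), ∑ i, (a.2 i : ℕ) ≤ n * N := by
    intro a
    calc _ ≤ ∑ i : ι, N := Finset.sum_le_sum fun i _ => (a.2 i).2.le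
      _ = n * N := by simp [hn]
  have hdegv : ∀ a, (v a).totalDegree < K * N := by
    intro a
    have h1 : (v a).totalDegree ≤ (p.totalDegree + (∑ i, (a.2 i : ℕ)) * d) +
        (2 * (a.1 : ℕ) + n * N - ∑ i, (a.2 i : ℕ)) * d := by
      refine (totalDegree_mul _ _).trans (add_le_add ?_ (totalDegree_pow _ _))
      refine (totalDegree_qq _ _ _ _).trans ?_
      rw [length_lst]; rfl
    have h2 : (∑ i, (a.2 i : ℕ)) * d + (2 * (a.1 : ℕ) + n * N - ∑ i, (a.2 i : ℕ)) * d
        = (2 * (a.1:ℕ) + n * N) * d := by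
      rw [← add_mul]; congr 1; have := hsum a; omega
    have h3 : (2 * (a.1:ℕ) + n * N) * d ≤ (2 * N + n * N) * d := by
      have := a.1.2; gcongr
    have h4 : p.totalDegree ≤ p.totalDegree * N := Nat.le_mul_of_pos_right _ (by omega)
    have h5 : K * N = p.totalDegree * N + (2 * N + n * N) * d + N := by rw [hK]; ring
    have h6 : 0 < N := by omega
    omega
  have hdep : ¬ LinearIndependent (Polynomial ℚ) (fun a => T (v a)) := by
    intro hli
    have := hli.fintype_card_le_finrank
    rw [Module.finrank_fintype_fun_eq_card] at this
    simp only [Fintype.card_prod, Fintype.card_fun, Fintype.card_fin, ← hn, mul_pow] at this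
    have hpos : 0 < N ^ n := by positivity
    have := Nat.le_of_mul_le_mul_right this hpos
    omega
  rw [Fintype.not_linearIndependent_iff] at hdep
  obtain ⟨c, hc, a, ha⟩ := hdep
  refine ⟨N, c, ⟨a, ha⟩, ?_⟩
  change ∑ a, C (c a) * v a = 0
  apply hTinj
  · refine (totalDegree_finsetSum_le (d := K * N - 1) fun a _ => ?_).trans_lt ?_
    · refine (totalDegree_mul _ _).trans ?_
      rw [totalDegree_C]; have := hdegv a; omega
    · have : 0 < K * N := by positivity
      omega
  · rw [map_sum, ← hc]
    refine Finset.sum_congr rfl fun a _ => ?_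
    rw [← smul_eq_C_mul, map_smul]

lemma exists_rec0 (G p : MvPolynomial ι ℚ) :
    ∃ (N : ℕ) (c : Fin N → Polynomial ℚ), (∃ a, c a ≠ 0) ∧ ∃ s0 : ℝ,
      ∀ D : Set (ι → ℝ), Good D (map (algebraMap ℚ ℝ) G) → ∀ s ≥ s0,
        ∑ a, Polynomial.aeval s (c a) *
          J D (map (algebraMap ℚ ℝ) G) (s + 2 * (a : ℕ)) (map (algebraMap ℚ ℝ) p) = 0 := by
  obtain ⟨N, c, ⟨a0, ha0⟩, hrel⟩ := exists_rel (map Polynomial.C G) (map Polynomial.C p)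
  -- minimal exponent
  set S : Set (ι → Fin N) := {k | ∃ k0, c (k0, k) ≠ 0} with hS
  have hSne : S.Nonempty := ⟨a0.2, a0.1, ha0⟩
  obtain ⟨κ, hκ⟩ := S.toFinite.exists_minimal hSne
  refine ⟨N, fun k0 => c (k0, κ), hκ.1, (Fintype.card ι * N : ℕ) + 1, ?_⟩
  intro D hD s hs
  set g := map (algebraMap ℚ ℝ) G with hg
  set M := Fintype.card ι * N with hM
  set f : Polynomial ℚ →+* ℝ := (Polynomial.aeval s : Polynomial ℚ →ₐ[ℚ] ℝ).toRingHom with hf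
  have hfC : f.comp Polynomial.C = algebraMap ℚ ℝ := by ext q; simp [hf]
  have hfX : f Polynomial.X = s := by simp [hf]
  set x : MvPolynomial ι ℝ := monomial (Finsupp.equivFunOnFinite.symm fun i => (κ i : ℕ)) 1 with hx
  have h1 := congrArg (fun r => J D g (s - M) (x * map f r)) hrel
  simp only [map_sum, map_mul, map_pow, map_qq, map_map, hfC, map_add, map_zero, mul_zero, J_zero,
    Finset.mul_sum, map_C, hfX, map_natCast, map_ofNat] at h1
  rw [← hg, hD.J_sum (by linarith)] at h1
  have hterm : ∀ a : Fin N × (ι → Fin N), J D g (s - M) (x * (C (f (c a)) *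
      (qq g (map (algebraMap ℚ ℝ) p) (s + 2 * (a.1 : ℕ))
        (lst (Finsupp.equivFunOnFinite.symm fun i => (a.2 i : ℕ))) *
      g ^ (2 * (a.1 : ℕ) + M - ∑ i, (a.2 i : ℕ))))) = f (c a) * 
      ((-1) ^ (∑ i, (a.2 i : ℕ)) * J D g (s + 2 * (a.1 : ℕ))
        (dd (lst (Finsupp.equivFunOnFinite.symm fun i => (a.2 i : ℕ))) x *
          map (algebraMap ℚ ℝ) p)) := by
    intro a
    set l := lst (Finsupp.equivFunOnFinite.symm fun i => (a.2 i : ℕ)) with hl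
    have hlen : l.length = ∑ i, (a.2 i : ℕ) := by rw [hl, length_lst]; rfl
    have hsum : ∑ i, (a.2 i : ℕ) ≤ M := by
      calc _ ≤ ∑ i : ι, N := Finset.sum_le_sum fun i _ => (a.2 i).2.le
        _ = M := by simp [hM]
    have hsum' : ((∑ i, (a.2 i : ℕ) : ℕ) : ℝ) ≤ M := by exact_mod_cast hsum
    rw [← mul_assoc, mul_comm x, mul_assoc, J_C_mul, ← mul_assoc, hD.J_mul_pow]
    rw [← hlen, ← hD.J_qq _ _ l x]
    · congr 2
      rw [Nat.cast_sub (by omega)]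
      push_cast
      ring
    · rw [hlen]
      have : (0:ℝ) ≤ 2 * (a.1 : ℕ) := by positivity
      linarith
    
  rw [Finset.sum_congr rfl fun a _ => hterm a, Fintype.sum_prod_type] at h1
  obtain ⟨b, hb, hbx⟩ := dd_monomial_eq (lst (Finsupp.equivFunOnFinite.symm fun i => (κ i : ℕ)))
    (Finsupp.equivFunOnFinite.symm fun i => (κ i : ℕ)) 1 one_ne_zero (fun i => count_lst _ i)
  have h2 : ∀ k0 : Fin N, ∑ k : ι → Fin N, f (c (k0, k)) * 
      ((-1) ^ (∑ i, (k i : ℕ)) * J D g (s + 2 * (k0 : ℕ))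
        (dd (lst (Finsupp.equivFunOnFinite.symm fun i => (k i : ℕ))) x *
          map (algebraMap ℚ ℝ) p)) = ((-1) ^ (∑ i, (κ i : ℕ)) * b) *
      (f (c (k0, κ)) * J D g (s + 2 * (k0:ℕ)) (map (algebraMap ℚ ℝ) p)) := by
    intro k0
    rw [Finset.sum_eq_single κ]
    · rw [hx, hbx, J_C_mul]; ring
    · intro k _ hk
      by_cases hck : c (k0, k) = 0
      · simp [hck]
      · have hkS : k ∈ S := ⟨k0, hck⟩
        have : ∃ i, κ i < k i := by
          by_contra! hle
          exact hk (hκ.eq_of_le hkS hle)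
        obtain ⟨i, hi⟩ := this
        rw [hx, dd_monomial_zero _ _ _ ⟨i, by rw [count_lst]; exact hi⟩, zero_mul, J_zero,
          mul_zero, mul_zero]
    · simp
  simp only [h2] at h1
  rw [← Finset.mul_sum] at h1
  exact (mul_eq_zero.mp h1).resolve_left (mul_ne_zero (by simp) hb)

lemma exists_rec (G p : MvPolynomial ι ℚ) :
    ∃ (N : ℕ) (c : ℕ → Polynomial ℚ), c 0 ≠ 0 ∧ ∃ s0 : ℝ,
      ∀ D : Set (ι → ℝ), Good D (map (algebraMap ℚ ℝ) G) → ∀ s ≥ s0,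
        ∑ a ∈ Finset.range (N + 1), Polynomial.aeval s (c a) *
          J D (map (algebraMap ℚ ℝ) G) (s + 2 * (a : ℕ)) (map (algebraMap ℚ ℝ) p) = 0 := by
  obtain ⟨N, c, ⟨a, ha⟩, s0, h⟩ := exists_rec0 G p
  set c' : ℕ → Polynomial ℚ := fun j => if hj : j < N then c ⟨j, hj⟩ else 0 with hc'
  have hex : ∃ j, c' j ≠ 0 := ⟨a, by simpa [hc'] using ha⟩
  classical
  set m := Nat.find hex with hm
  have hm1 : c' m ≠ 0 := Nat.find_spec hex
  have hm2 : ∀ j < m, c' j = 0 := fun j hj => by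
    have := Nat.find_min hex hj; simpa using this
  refine ⟨N, fun j => Polynomial.taylor (-(2 * (m:ℚ))) (c' (m + j)), ?_, 
    s0 + 2 * m, ?_⟩
  · simp only [add_zero]
    intro h0
    exact hm1 (Polynomial.taylor_injective (-(2 * (m:ℚ))) (by rw [h0, map_zero]))
  · intro D hD s hs
    have h1 := h D hD (s - 2 * m) (by linarith)
    set F : ℕ → ℝ := fun j => Polynomial.aeval (s - 2 * (m:ℝ)) (c' j) *
      J D (map (algebraMap ℚ ℝ) G) (s - 2 * m + 2 * (j : ℕ)) (map (algebraMap ℚ ℝ) p) with hF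
    have hF0 : ∀ j, N ≤ j → F j = 0 := by
      intro j hj; simp [hF, hc', not_lt.mpr hj]
    have h2 : ∑ j ∈ Finset.range N, F j = 0 := by
      rw [← h1, ← Fin.sum_univ_eq_sum_range]
      refine Finset.sum_congr rfl fun a _ => ?_
      simp [hF, hc']
    have h3 : ∑ j ∈ Finset.range (m + (N + 1)), F j = 0 := by
      rw [← h2]
      symm
      refine Finset.sum_subset (by intro a; simp; omega) fun j _ hj => hF0 j (by simpa using hj)
    rw [Finset.sum_range_add, Finset.sum_eq_zero (s := Finset.range m), zero_add] at h3
    · rw [← h3]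
      refine Finset.sum_congr rfl fun a _ => ?_
      simp only [hF, Polynomial.taylor_apply, Polynomial.aeval_comp]
      congr 2
      · simp [sub_eq_add_neg]
      · push_cast; ring
    · intro j hj
      simp [hF, hm2 j (by simpa using hj)]

end recurrence
end PeriodProof

namespace PeriodProof
open MeasureTheory Set Filter Topology ProbabilityTheory

lemma lim_mem (V : Submodule ℚ ℝ) (m : ℕ) : ∀ (F : ℝ → ℝ) (p : FormalMultilinearSeries ℝ ℝ ℝ) (a : ℝ),
    HasFPowerSeriesAt F p 0 → (∀ k, p.coeff k ∈ V) →
    Tendsto (fun t => F t / t ^ m) (𝓝[>] 0) (𝓝 a) → a ∈ V := by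
  induction m with
  | zero =>
    intro F p a hF hp ht
    have h1 : F 0 = a := by
      simp only [pow_zero, div_one] at ht
      exact tendsto_nhds_unique ((hF.analyticAt.continuousAt.tendsto).mono_left nhdsWithin_le_nhds) ht
    rw [← h1, ← hF.coeff_zero (fun _ => 1)]
    exact hp 0
  | succ m ih =>
    intro F p a hF hp ht
    have hpos : ∀ᶠ t : ℝ in 𝓝[>] 0, 0 < t := self_mem_nhdsWithin
    have hid : Tendsto (fun t : ℝ => t) (𝓝[>] 0) (𝓝 0) := tendsto_id.mono_left nhdsWithin_le_nhds
    have h0 : F 0 = 0 := by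
      have h1 : Tendsto F (𝓝[>] 0) (𝓝 (F 0)) :=
        (hF.analyticAt.continuousAt.tendsto).mono_left nhdsWithin_le_nhds
      have h2 : Tendsto (fun t => F t / t ^ (m + 1) * t ^ (m + 1)) (𝓝[>] 0) (𝓝 (a * 0 ^ (m + 1))) :=
        ht.mul (hid.pow (m + 1))
      have h3 : Tendsto F (𝓝[>] 0) (𝓝 (a * 0 ^ (m + 1))) := by
        refine h2.congr' ?_
        filter_upwards [hpos] with t ht
        field_simp
      have := tendsto_nhds_unique h1 h3
      simpa using this
    refine ih (dslope F 0) p.fslope a hF.has_fpower_series_dslope_fslope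
      (fun k => by rw [FormalMultilinearSeries.coeff_fslope]; exact hp _) ?_
    refine ht.congr' ?_
    filter_upwards [hpos] with t ht
    rw [dslope_of_ne _ ht.ne', slope_def_field, h0, sub_zero, sub_zero, pow_succ, div_div, mul_comm]

lemma iteratedDeriv_poly (c : Polynomial ℚ) (k : ℕ) :
    iteratedDeriv k (fun t : ℝ => Polynomial.aeval t c)
      = fun t => Polynomial.aeval t (Polynomial.derivative^[k] c) := by
  induction k with
  | zero => simp
  | succ k ih =>
    rw [iteratedDeriv_succ, ih, Function.iterate_succ_apply']
    ext t
    exact (Polynomial.hasDerivAt_aeval _ t).deriv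

lemma analyticAt_poly (c : Polynomial ℚ) (x : ℝ) :
    AnalyticAt ℝ (fun t : ℝ => Polynomial.aeval t c) x := by
  have : (fun t : ℝ => Polynomial.aeval t c) = fun t => Polynomial.eval t (c.map (algebraMap ℚ ℝ)) := by
    ext t; rw [Polynomial.eval_map_algebraMap]
  rw [this]
  exact AnalyticOnNhd.eval_polynomial _ x (mem_univ _)

lemma rec_mem (V : Submodule ℚ ℝ) (Φ : ℝ → ℝ) (hΦ : ∀ t > 0, AnalyticAt ℝ Φ t) (a : ℝ)
    (ha : Tendsto Φ (𝓝[>] 0) (𝓝 a)) (N : ℕ) (c : ℕ → Polynomial ℚ) (hc : c 0 ≠ 0) (t0 : ℝ)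
    (hrec : ∀ t ≥ t0, ∑ j ∈ Finset.range (N + 1), Polynomial.aeval t (c j) * Φ (t + 2 * j) = 0)
    (hV : ∀ j k : ℕ, iteratedDeriv k Φ (2 * (j + 1)) ∈ V) : a ∈ V := by
  have hanal : ∀ j : ℕ, ∀ t : ℝ, 0 < t + 2 * j →
      AnalyticAt ℝ (fun t => Polynomial.aeval t (c j) * Φ (t + 2 * j)) t := by
    intro j t ht
    refine (analyticAt_poly (c j) t).fun_mul ?_
    exact (hΦ _ ht).comp' (f := fun t : ℝ => t + 2 * (j:ℝ)) (by fun_prop)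
  have hrec' : ∀ t > 0, ∑ j ∈ Finset.range (N + 1), Polynomial.aeval t (c j) * Φ (t + 2 * j) = 0 := by
    have h1 : AnalyticOnNhd ℝ (fun t => ∑ j ∈ Finset.range (N + 1),
        Polynomial.aeval t (c j) * Φ (t + 2 * j)) (Ioi 0) := by
      intro t ht
      have ht' : (0:ℝ) < t := ht
      exact Finset.analyticAt_fun_sum _ fun j _ => hanal j t (by positivity)
    have h2 := h1.eqOn_of_preconnected_of_eventuallyEq (g := fun _ => 0)
      (fun t _ => analyticAt_const) isPreconnected_Ioi (z₀ := max t0 0 + 1)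
      (by have := le_max_right t0 0; simp only [mem_Ioi]; linarith) (by
        filter_upwards [lt_mem_nhds (show max t0 0 < max t0 0 + 1 by linarith)] with t ht
        exact hrec t ((le_max_left _ _).trans ht.le))
    exact fun t ht => h2 ht
  obtain ⟨b, hb, hb0⟩ := Polynomial.exists_eq_pow_rootMultiplicity_mul_and_not_dvd (c 0) hc 0
  set m := Polynomial.rootMultiplicity 0 (c 0)
  simp only [map_zero, sub_zero] at hb hb0
  rw [Polynomial.X_dvd_iff, Polynomial.coeff_zero_eq_eval_zero] at hb0
  set F : ℝ → ℝ := fun t => ∑ j ∈ Finset.range N,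
    Polynomial.aeval t (-(c (j + 1))) * Φ (t + 2 * ((j + 1 : ℕ) : ℝ)) with hF
  have hshift : ∀ j : ℕ, AnalyticAt ℝ (fun t => Φ (t + 2 * ((j + 1 : ℕ) : ℝ))) 0 := fun j =>
    (hΦ (0 + 2 * ((j + 1 : ℕ) : ℝ)) (by positivity)).comp'
      (f := fun t : ℝ => t + 2 * ((j + 1 : ℕ) : ℝ)) (by fun_prop)
  have hFan : AnalyticAt ℝ F 0 :=
    Finset.analyticAt_fun_sum _ fun j _ => (analyticAt_poly _ 0).fun_mul (hshift j)
  have hratpoly : ∀ (q : Polynomial ℚ), Polynomial.aeval (0:ℝ) q = ((q.eval 0 : ℚ) : ℝ) := by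
    intro q
    have := Polynomial.aeval_algebraMap_apply ℝ (0:ℚ) q
    simpa using this
  have hVs : ∀ (q : ℚ) (x : ℝ), x ∈ V → (q:ℝ) * x ∈ V := by
    intro q x hx
    have := V.smul_mem q hx
    rwa [Rat.smul_def] at this
  have hFV : ∀ k, iteratedDeriv k F 0 ∈ V := by
    intro k
    rw [hF, iteratedDeriv_fun_sum]
    · refine V.sum_mem fun j _ => ?_
      rw [iteratedDeriv_fun_mul (analyticAt_poly _ 0).contDiffAt (hshift j).contDiffAt]
      refine V.sum_mem fun i _ => ?_
      rw [iteratedDeriv_poly, iteratedDeriv_comp_add_const]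
      simp only [zero_add, hratpoly]
      have := hVs ((k.choose i : ℚ) * (Polynomial.derivative^[i] (-(c (j + 1)))).eval 0) _
        (hV j (k - i))
      push_cast at this ⊢
      exact this
    · intro j _
      exact ((analyticAt_poly _ 0).fun_mul (hshift j)).contDiffAt
  have hlim : Tendsto (fun t => F t / t ^ m) (𝓝[>] 0) (𝓝 (((b.eval 0 : ℚ) : ℝ) * a)) := by
    have h1 : Tendsto (fun t => Polynomial.aeval t b * Φ t) (𝓝[>] 0)
        (𝓝 (((b.eval 0 : ℚ) : ℝ) * a)) := by
      refine Tendsto.mul ?_ ha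
      rw [← hratpoly]
      exact (analyticAt_poly b 0).continuousAt.tendsto.mono_left nhdsWithin_le_nhds
    refine h1.congr' ?_
    filter_upwards [self_mem_nhdsWithin] with t ht
    have ht' : (0:ℝ) < t := ht
    have h2 := hrec' t ht'
    rw [Finset.sum_range_succ', hb] at h2
    simp only [Nat.cast_zero, mul_zero, add_zero, map_mul, map_pow, Polynomial.aeval_X] at h2
    have h3 : F t = t ^ m * (Polynomial.aeval t) b * Φ t := by
      simp only [hF, map_neg, neg_mul, Finset.sum_neg_distrib]
      linarith
    rw [h3]
    field_simp
  have hmem := lim_mem V m F _ _ hFan.hasFPowerSeriesAt (fun k => by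
    rw [FormalMultilinearSeries.coeff_ofScalars]
    have := hVs ((k.factorial : ℚ)⁻¹) _ (hFV k)
    push_cast at this
    rwa [inv_mul_eq_div] at this) hlim
  have := hVs (b.eval 0)⁻¹ _ hmem
  rw [← mul_assoc] at this
  have hb1 : ((b.eval 0 : ℚ) : ℝ) ≠ 0 := by exact_mod_cast hb0
  push_cast at this
  rwa [inv_mul_cancel₀ hb1, one_mul] at this

section mgf
variable {Ω : Type} [MeasurableSpace Ω] {μ : Measure Ω}

lemma mgf_aux (f L : Ω → ℝ) (hf : Measurable f) (hfi : Integrable f μ)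
    (hL : Measurable L) (hneg : ∀ᵐ x ∂μ, L x ≤ 0) :
    Ioi 0 ⊆ interior (integrableExpSet L (μ.withDensity fun x => ((f x).toNNReal : ENNReal))) := by
  refine interior_maximal ?_ isOpen_Ioi
  intro t ht
  have ht' : (0:ℝ) < t := ht
  change Integrable _ _
  rw [integrable_withDensity_iff_integrable_smul hf.real_toNNReal]
  have hm : Measurable fun x => (f x).toNNReal • Real.exp (t * L x) := by
    simp only [NNReal.smul_def, smul_eq_mul]
    exact hf.real_toNNReal.coe_nnreal_real.mul (Real.measurable_exp.comp (hL.const_mul t))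
  refine hfi.mono hm.aestronglyMeasurable ?_
  filter_upwards [hneg] with x hx
  have h1 : Real.exp (t * L x) ≤ 1 := Real.exp_le_one_iff.mpr (by nlinarith)
  have h2 := Real.exp_pos (t * L x)
  simp only [NNReal.smul_def, smul_eq_mul, norm_mul, Real.coe_toNNReal', Real.norm_eq_abs]
  rw [abs_of_pos h2]
  have h3 : |max (f x) 0| ≤ |f x| := by
    rw [abs_of_nonneg (le_max_right _ _)]
    exact max_le (le_abs_self _) (abs_nonneg _)
  have h4 := abs_nonneg (max (f x) 0)
  nlinarith

lemma mellin_analytic (f L : Ω → ℝ) (hf : Measurable f) (hfi : Integrable f μ)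
    (hL : Measurable L) (hneg : ∀ᵐ x ∂μ, L x ≤ 0) :
    (∀ t > 0, AnalyticAt ℝ (fun t => ∫ x, f x * Real.exp (t * L x) ∂μ) t) ∧
    (∀ t > 0, ∀ k : ℕ, iteratedDeriv k (fun t => ∫ x, f x * Real.exp (t * L x) ∂μ) t
      = ∫ x, f x * (L x ^ k * Real.exp (t * L x)) ∂μ) ∧
    Tendsto (fun t => ∫ x, f x * Real.exp (t * L x) ∂μ) (𝓝[>] 0) (𝓝 (∫ x, f x ∂μ)) := by
  set ν := μ.withDensity fun x => ((f x).toNNReal : ENNReal) with hν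
  set ν' := μ.withDensity fun x => ((-f x).toNNReal : ENNReal) with hν'
  have h1 := mgf_aux f L hf hfi hL hneg
  have h2 := mgf_aux (fun x => - f x) L hf.neg hfi.neg hL hneg
  have hf' : Measurable fun x => (-f x).toNNReal := hf.neg.real_toNNReal
  have key : ∀ t > 0, ∀ k : ℕ, ∫ x, f x * (L x ^ k * Real.exp (t * L x)) ∂μ
      = ∫ x, L x ^ k * Real.exp (t * L x) ∂ν - ∫ x, L x ^ k * Real.exp (t * L x) ∂ν' := by
    intro t ht k
    have i1 := integrable_pow_mul_exp_of_mem_interior_integrableExpSet (h1 ht) k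
    have i2 := integrable_pow_mul_exp_of_mem_interior_integrableExpSet (h2 ht) k
    rw [hν, hν', integral_withDensity_eq_integral_smul hf.real_toNNReal,
      integral_withDensity_eq_integral_smul hf', ← integral_sub]
    · congr 1
      ext x
      simp only [NNReal.smul_def, smul_eq_mul, ← sub_mul, Real.coe_toNNReal']
      congr 1
      rcases le_total 0 (f x) with h | h
      · rw [max_eq_left h, max_eq_right (by linarith)]; ring
      · rw [max_eq_right h, max_eq_left (by linarith)]; ring
    · exact (integrable_withDensity_iff_integrable_smul hf.real_toNNReal).mp i1
    · exact (integrable_withDensity_iff_integrable_smul hf').mp i2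
  have hev : ∀ t > 0, (fun t => ∫ x, f x * Real.exp (t * L x) ∂μ) =ᶠ[𝓝 t]
      (mgf L ν - mgf L ν') := by
    intro t ht
    filter_upwards [lt_mem_nhds ht] with u hu
    have := key u hu 0
    simpa [mgf] using this
  have a1 : ∀ t > 0, AnalyticAt ℝ (mgf L ν) t := fun t ht => analyticOnNhd_mgf t (h1 ht)
  have a2 : ∀ t > 0, AnalyticAt ℝ (mgf L ν') t := fun t ht => analyticOnNhd_mgf t (h2 ht)
  refine ⟨fun t ht => ((a1 t ht).sub (a2 t ht)).congr (hev t ht).symm, ?_, ?_⟩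
  · intro t ht k
    rw [(hev t ht).iteratedDeriv_eq, iteratedDeriv_sub (a1 t ht).contDiffAt (a2 t ht).contDiffAt,
      iteratedDeriv_mgf (h1 ht), iteratedDeriv_mgf (h2 ht), key t ht k]
  · refine tendsto_integral_filter_of_dominated_convergence (fun x => ‖f x‖) ?_ ?_ hfi.norm ?_
    · refine Eventually.of_forall fun t => Measurable.aestronglyMeasurable ?_
      exact hf.mul (Real.measurable_exp.comp (hL.const_mul t))
    · filter_upwards [self_mem_nhdsWithin] with t ht
      have ht' : (0:ℝ) < t := ht
      filter_upwards [hneg] with x hx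
      have h1 : Real.exp (t * L x) ≤ 1 := Real.exp_le_one_iff.mpr (by nlinarith)
      have h2 := Real.exp_pos (t * L x)
      rw [norm_mul, Real.norm_of_nonneg h2.le]
      have := norm_nonneg (f x)
      nlinarith
    · refine Eventually.of_forall fun x => ?_
      have : Continuous fun t : ℝ => f x * Real.exp (t * L x) := by fun_prop
      have h := this.tendsto 0
      simp only [zero_mul, Real.exp_zero, mul_one] at h
      exact h.mono_left nhdsWithin_le_nhds

end mgf

open MvPolynomial in
lemma eval_map' {ι : Type} (p : MvPolynomial ι ℚ) (x : ι → ℝ) :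
    eval x (MvPolynomial.map (algebraMap ℚ ℝ) p) = aeval x p := by
  rw [MvPolynomial.eval_map, MvPolynomial.aeval_def]

open MvPolynomial in
/-- Periods over bounded domains lie in `VS`. -/
lemma core {ι κ : Type} [Fintype ι] [Fintype κ] (G : κ → MvPolynomial ι ℚ)
    (hb : Bornology.IsBounded (bdom G)) (P Q : MvPolynomial ι ℚ)
    (hQ : ∀ x ∈ bdom G, aeval x Q ≠ 0)
    (hi : IntegrableOn (fun x : ι → ℝ => aeval x P / aeval x Q) (bdom G)) :
    ∫ x in bdom G, aeval x P / aeval x Q ∈ VS := by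
  classical
  obtain ⟨B, hB⟩ := exists_bound hb (Q ^ 2 * ∏ j, G j)
  set w : MvPolynomial ι ℚ := MvPolynomial.C ((B + 1 : ℚ)⁻¹) with hw
  set g : MvPolynomial ι ℚ := w * (Q ^ 2 * ∏ j, G j) with hg
  set p : MvPolynomial ι ℚ := w * (P * Q * ∏ j, G j) with hp
  have hwx : ∀ x : ι → ℝ, aeval x w = ((B:ℝ) + 1)⁻¹ := by
    intro x; simp [hw]
  have hprod : ∀ x ∈ bdom G, 0 < aeval x (∏ j, G j) := by
    intro x hx
    rw [map_prod]
    exact Finset.prod_pos fun j _ => hx j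
  have hg0 : ∀ x ∈ bdom G, 0 < aeval x g := by
    intro x hx
    have h1 := hprod x hx
    have h2 := hQ x hx
    rw [hg, map_mul, hwx, map_mul, map_pow]
    positivity
  have hg1 : ∀ x ∈ bdom G, aeval x g < 1 := by
    intro x hx
    have h1 := (abs_lt.mp (hB x hx)).2
    rw [hg, map_mul, hwx, inv_mul_lt_iff₀ (by positivity)]
    linarith
  have hpg : ∀ x ∈ bdom G, aeval x P / aeval x Q = aeval x p / aeval x g := by
    intro x hx
    have h1 := (hprod x hx).ne'
    have h2 := hQ x hx
    rw [hg, hp, map_mul, map_mul, map_mul, map_mul, map_mul, map_pow, hwx]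
    have h3 : ((B:ℝ) + 1) ≠ 0 := by positivity
    field_simp
  have hgood : Good (bdom G) (MvPolynomial.map (algebraMap ℚ ℝ) g) := by
    refine ⟨isOpen_bdom G, hb, fun x hx => ?_, fun x hx => ?_, fun x hx hx' => ?_⟩
    · rw [eval_map']; exact hg0 x hx
    · rw [eval_map']; exact hg1 x hx
    · rw [eval_map']
      rw [mem_bdom] at hx'
      push Not at hx'
      obtain ⟨j, hj⟩ := hx'
      have h2 : 0 ≤ aeval x (G j) := by
        have : closure (bdom G) ⊆ {x | 0 ≤ aeval x (G j)} :=
          closure_minimal (fun y hy => (hy j).le)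
            (isClosed_le continuous_const (continuous_aeval' _))
        exact this hx
      have h3 : aeval x (G j) = 0 := le_antisymm hj h2
      rw [hg, map_mul, map_mul, map_prod, Finset.prod_eq_zero (Finset.mem_univ j) h3, mul_zero,
        mul_zero]
  have hms := measurableSet_bdom G
  have hIntg : IntegrableOn (fun x : ι → ℝ => aeval x p / aeval x g) (bdom G) :=
    hi.congr_fun hpg hms
  rw [setIntegral_congr_fun hms hpg]
  set Φ : ℝ → ℝ := fun t => ∫ x in bdom G, aeval x p / aeval x g *
    Real.exp (t * Real.log (aeval x g)) with hΦ
  obtain ⟨hA, hD, hT⟩ := mellin_analytic (μ := volume.restrict (bdom G))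
    (fun x : ι → ℝ => aeval x p / aeval x g) (fun x => Real.log (aeval x g)) (measurable_rat p g)
    hIntg (Real.measurable_log.comp (continuous_aeval' g).measurable) (by
      refine (ae_restrict_iff' hms).mpr (Filter.Eventually.of_forall fun x hx => ?_)
      exact Real.log_nonpos (hg0 x hx).le (hg1 x hx).le)
  obtain ⟨N, c, hc, s0, hrec⟩ := exists_rec g p
  refine rec_mem VS Φ hA _ hT N (fun j => Polynomial.taylor (-1) (c j)) ?_ (s0 + 1) ?_ ?_
  · intro h0
    exact hc (Polynomial.taylor_injective (-1) (by rw [h0, map_zero]))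
  · intro t ht
    have h1 := hrec _ hgood (t - 1) (by linarith)
    rw [← h1]
    refine Finset.sum_congr rfl fun j _ => ?_
    congr 1
    · simp [Polynomial.taylor_apply, Polynomial.aeval_comp, sub_eq_add_neg]
    · rw [hΦ, J]
      refine setIntegral_congr_fun hms fun x hx => ?_
      have h2 := hg0 x hx
      simp only [eval_map']
      rw [Real.rpow_def_of_pos h2, show (t + 2 * (j:ℝ)) * Real.log (aeval x g) =
        Real.log (aeval x g) * (t - 1 + 2 * j) + Real.log (aeval x g) by ring, Real.exp_add,
        Real.exp_log h2]
      field_simp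
  · intro j k
    rw [hD _ (by positivity)]
    have h1 := log_mem G hb (p * g ^ (2 * j)) g (fun x hx => ⟨hg0 x hx, hg1 x hx⟩) k
    convert h1 using 1
    refine setIntegral_congr_fun hms fun x hx => ?_
    have h2 := hg0 x hx
    simp only [map_mul, map_pow]
    have h3 : Real.exp (2 * ((j:ℝ) + 1) * Real.log (aeval x g)) = aeval x g ^ (2 * j + 2) := by
      rw [← Real.rpow_natCast, Real.rpow_def_of_pos h2]
      congr 1; push_cast; ring
    rw [h3]
    field_simp
    ring
end PeriodProof

namespace PeriodProof
open MeasureTheory MvPolynomial Set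

/-- the compactifying change of variable -/
noncomputable def phi {ι : Type} (y : ι → ℝ) : ι → ℝ := fun i => y i / (1 - y i ^ 2)

section
variable {ι : Type} [Fintype ι] [DecidableEq ι]

noncomputable def ww (ι : Type) [Fintype ι] : MvPolynomial ι ℚ := ∏ i, (1 - X i ^ 2)

lemma ww_pos {y : ι → ℝ} (hy : ∀ i, 0 < 1 - y i ^ 2) : 0 < aeval y (ww ι) := by
  simp only [ww, map_prod, map_sub, map_one, map_pow, aeval_X]
  exact Finset.prod_pos fun i _ => hy i

lemma exists_pull (P : MvPolynomial ι ℚ) : ∃ (N : ℕ) (P' : MvPolynomial ι ℚ),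
    ∀ y : ι → ℝ, (∀ i, 0 < 1 - y i ^ 2) →
      aeval y P' = aeval y (ww ι) ^ N * aeval (phi y) P := by
  induction P using MvPolynomial.induction_on with
  | C a => exact ⟨0, C a, fun y _ => by simp⟩
  | add p q hp hq =>
    obtain ⟨N, p', hp⟩ := hp
    obtain ⟨M, q', hq⟩ := hq
    refine ⟨N + M, p' * ww ι ^ M + q' * ww ι ^ N, fun y hy => ?_⟩
    simp only [map_add, map_mul, map_pow, hp y hy, hq y hy]
    ring
  | mul_X p i hp =>
    obtain ⟨N, p', hp⟩ := hp
    refine ⟨N + 1, p' * X i * ∏ j ∈ Finset.univ.erase i, (1 - X j ^ 2), fun y hy => ?_⟩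
    have h1 : aeval y (ww ι) = (1 - y i ^ 2) * ∏ j ∈ Finset.univ.erase i, (1 - y j ^ 2) := by
      simp only [ww, map_prod, map_sub, map_one, map_pow, aeval_X]
      rw [Finset.mul_prod_erase _ (fun j => 1 - y j ^ 2) (Finset.mem_univ i)]
    have h2 := (hy i).ne'
    simp only [map_mul, map_prod, map_sub, map_one, map_pow, aeval_X, hp y hy]
    rw [pow_succ]
    nth_rewrite 3 [h1]
    simp only [phi]
    field_simp

lemma phi_inj {a b : ℝ} (ha : 0 < 1 - a ^ 2) (hb : 0 < 1 - b ^ 2)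
    (h : a / (1 - a ^ 2) = b / (1 - b ^ 2)) : a = b := by
  rw [div_eq_div_iff ha.ne' hb.ne'] at h
  have h1 : (a - b) * (1 + a * b) = 0 := by linarith
  rcases mul_eq_zero.mp h1 with h2 | h2
  · linarith
  · nlinarith [sq_nonneg (a + b), sq_nonneg (a - b)]

lemma phi_surj (x : ℝ) : ∃ t : ℝ, 0 < 1 - t ^ 2 ∧ t / (1 - t ^ 2) = x := by
  set s := Real.sqrt (1 + 4 * x ^ 2) with hs
  have hs2 : s ^ 2 = 1 + 4 * x ^ 2 := Real.sq_sqrt (by positivity)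
  have hs0 : 0 ≤ s := Real.sqrt_nonneg _
  have h1 : 1 - (2 * x / (1 + s)) ^ 2 = 2 / (1 + s) := by
    field_simp
    linarith
  refine ⟨2 * x / (1 + s), ?_, ?_⟩
  · rw [h1]; positivity
  · rw [h1]; field_simp

lemma hasDerivAt_phi {t : ℝ} (ht : 0 < 1 - t ^ 2) :
    HasDerivAt (fun t : ℝ => t / (1 - t ^ 2)) ((1 + t ^ 2) / (1 - t ^ 2) ^ 2) t := by
  have h1 : HasDerivAt (fun t : ℝ => 1 - t ^ 2) (-(2 * t)) t := by
    have := (hasDerivAt_pow 2 t).const_sub 1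
    simpa using this
  have := (hasDerivAt_id' t).fun_div h1 ht.ne'
  refine this.congr_deriv ?_
  congr 1
  ring

/-- derivative of phi -/
noncomputable def phi' (y : ι → ℝ) : (ι → ℝ) →L[ℝ] (ι → ℝ) :=
  ContinuousLinearMap.pi fun i =>
    (ContinuousLinearMap.toSpanSingleton ℝ ((1 + y i ^ 2) / (1 - y i ^ 2) ^ 2)) ∘SL
      ContinuousLinearMap.proj i

lemma det_phi' (y : ι → ℝ) : (phi' y).det = ∏ i, ((1 + y i ^ 2) / (1 - y i ^ 2) ^ 2) := by
  rw [phi', ContinuousLinearMap.det_pi]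
  refine Finset.prod_congr rfl fun i _ => ?_
  simp [ContinuousLinearMap.det, LinearMap.det_ring]

lemma hasFDerivAt_phi {y : ι → ℝ} (hy : ∀ i, 0 < 1 - y i ^ 2) :
    HasFDerivAt phi (phi' y) y := by
  rw [phi', show (phi : (ι → ℝ) → ι → ℝ) = fun y i => y i / (1 - y i ^ 2) from rfl,
    hasFDerivAt_pi]
  intro i
  have h1 : HasFDerivAt (fun f : ι → ℝ => f i) (ContinuousLinearMap.proj i : (ι → ℝ) →L[ℝ] ℝ) y :=
    hasFDerivAt_apply i y
  exact HasFDerivAt.comp (f := fun f : ι → ℝ => f i) (g := fun t : ℝ => t / (1 - t ^ 2)) y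
    (hasDerivAt_phi (hy i)).hasFDerivAt h1
end

lemma period_mem {ι κ : Type} [Fintype ι] [Fintype κ] (G : κ → MvPolynomial ι ℚ)
    (P Q : MvPolynomial ι ℚ)
    (hQ : ∀ x ∈ bdom G, aeval x Q ≠ 0)
    (hi : IntegrableOn (fun x : ι → ℝ => aeval x P / aeval x Q) (bdom G)) :
    ∫ x in bdom G, aeval x P / aeval x Q ∈ VS := by
  classical
  choose n G' hG' using fun j => exists_pull (G j)
  obtain ⟨a, P', hP'⟩ := exists_pull P
  obtain ⟨b, Q', hQ'⟩ := exists_pull Q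
  set H : κ ⊕ ι → MvPolynomial ι ℚ := Sum.elim G' (fun i => 1 - X i ^ 2) with hH
  have hbox : ∀ y ∈ bdom H, ∀ i, 0 < 1 - y i ^ 2 := by
    intro y hy i
    have := hy (Sum.inr i)
    simpa [hH] using this
  have hmem : ∀ y ∈ bdom H, phi y ∈ bdom G := by
    intro y hy j
    have h1 := hy (Sum.inl j)
    have h2 := ww_pos (hbox y hy)
    simp only [hH, Sum.elim_inl, hG' j y (hbox y hy)] at h1
    exact (pos_iff_pos_of_mul_pos h1).mp (by positivity)
  have himg : phi '' bdom H = bdom G := by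
    ext x
    constructor
    · rintro ⟨y, hy, rfl⟩; exact hmem y hy
    · intro hx
      choose y hy hyx using fun i => phi_surj (x i)
      have hyx' : phi y = x := funext hyx
      refine ⟨y, ?_, hyx'⟩
      rintro (j | i)
      · simp only [hH, Sum.elim_inl, hG' j y hy, hyx']
        have h2 := ww_pos hy
        have h3 := hx j
        positivity
      · simpa [hH] using hy i
  have hbd : Bornology.IsBounded (bdom H) := by
    rw [isBounded_iff_coord]
    refine ⟨1, fun y hy i => ?_⟩
    have := hbox y hy i
    rw [Nat.cast_one, ← sq_lt_one_iff_abs_lt_one]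
    linarith
  have hms := measurableSet_bdom H
  have hder : ∀ y ∈ bdom H, HasFDerivWithinAt phi (phi' y) (bdom H) y := fun y hy =>
    (hasFDerivAt_phi (hbox y hy)).hasFDerivWithinAt
  have hinj : InjOn phi (bdom H) := by
    intro y hy z hz h
    ext i
    exact phi_inj (hbox y hy i) (hbox z hz i) (congrFun h i)
  set PP : MvPolynomial ι ℚ := (∏ i, (1 + X i ^ 2)) * P' * ww ι ^ b with hPP
  set QQ : MvPolynomial ι ℚ := Q' * ww ι ^ (a + 2) with hQQ
  have hQQ0 : ∀ y ∈ bdom H, aeval y QQ ≠ 0 := by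
    intro y hy
    have h2 := (ww_pos (hbox y hy)).ne'
    rw [hQQ, map_mul, map_pow, hQ' y (hbox y hy)]
    have := hQ _ (hmem y hy)
    positivity
  have heq : ∀ y ∈ bdom H, |(phi' y).det| • (aeval (phi y) P / aeval (phi y) Q)
      = aeval y PP / aeval y QQ := by
    intro y hy
    have h2 := (ww_pos (hbox y hy)).ne'
    have h3 := hQ _ (hmem y hy)
    have hw : aeval y (ww ι) = ∏ i, (1 - y i ^ 2) := by simp [ww]
    have hd : |(phi' y).det| = (∏ i, (1 + y i ^ 2)) / aeval y (ww ι) ^ 2 := by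
      rw [det_phi', Finset.prod_div_distrib, Finset.prod_pow, ← hw, abs_of_nonneg]
      positivity
    rw [hd, hPP, hQQ]
    simp only [map_mul, map_pow, hQ' y (hbox y hy), hP' y (hbox y hy), map_prod, map_add, map_one,
      aeval_X, smul_eq_mul]
    field_simp
    ring
  have hIntg := (integrableOn_image_iff_integrableOn_abs_det_fderiv_smul volume hms hder hinj
    (fun x => aeval x P / aeval x Q)).mp (by rw [himg]; exact hi)
  rw [← himg, integral_image_eq_integral_abs_det_fderiv_smul volume hms hder hinj,
    setIntegral_congr_fun hms heq]
  exact core H hbd PP QQ hQQ0 (hIntg.congr_fun heq hms)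

lemma isRealPeriod_mem {a : ℝ} (h : IsRealPeriod a) : a ∈ VS := by
  obtain ⟨ℓ, q, G, P, Q, hQ, hi, rfl⟩ := h
  exact period_mem G P Q hQ hi

end PeriodProof

namespace PeriodProof
open MeasureTheory MvPolynomial Set

/-- the sign, real valued -/
noncomputable def sg : ℝ →*₀ ℝ := (SignType.castHom (α := ℝ)).comp signHom

lemma sg_pos {a : ℝ} (h : 0 < a) : sg a = 1 := by
  simp [sg, signHom, sign_pos h]
lemma sg_neg {a : ℝ} (h : a < 0) : sg a = -1 := by
  simp [sg, signHom, sign_neg h]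

lemma sg_eq (a : ℝ) : sg a = if 0 < a then 1 else if a < 0 then -1 else 0 := by
  split_ifs with h1 h2
  · exact sg_pos h1
  · exact sg_neg h2
  · have : a = 0 := by linarith
    simp [this]

lemma measurable_sg : Measurable (sg : ℝ → ℝ) := by
  have : (sg : ℝ → ℝ) = fun a => if 0 < a then 1 else if a < 0 then -1 else 0 := funext sg_eq
  rw [this]
  exact Measurable.ite measurableSet_Ioi measurable_const
    (Measurable.ite measurableSet_Iio measurable_const measurable_const)

lemma abs_sg_le (a : ℝ) : |sg a| ≤ 1 := by
  rw [sg_eq]; split_ifs <;> simp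

/-- the fibre -/
def U (a : ℝ) : Set ℝ := {u | 0 < (a ^ 2 - u ^ 2) * ((u - 3) * (u - 4))}

lemma U_eq {a : ℝ} (ha : |a| < 1 / 2) : U a = Ioo (-|a|) |a| ∪ Ioo 3 4 := by
  ext u
  have ha2 : a ^ 2 = |a| ^ 2 := (sq_abs a).symm
  have h0 := abs_nonneg a
  simp only [U, mem_ofPred_eq, mem_union, mem_Ioo, ha2]
  set b := |a|
  constructor
  · intro h
    by_cases h1 : u ≤ 3 ∨ 4 ≤ u
    · left
      have h2 : 0 ≤ (u - 3) * (u - 4) := by rcases h1 with h1 | h1 <;> nlinarith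
      have h3 : 0 < b ^ 2 - u ^ 2 := by
        by_contra h4
        push Not at h4
        nlinarith
      exact abs_lt.mp (abs_lt_of_sq_lt_sq (by linarith) h0)
    · right; push Not at h1; exact h1
  · rintro (⟨h1, h2⟩ | ⟨h1, h2⟩)
    · have h3 : 0 < b ^ 2 - u ^ 2 := by nlinarith
      have h4 : 0 < (u - 3) * (u - 4) := by nlinarith
      positivity
    · have h3 : b ^ 2 - u ^ 2 < 0 := by nlinarith
      have h4 : (u - 3) * (u - 4) < 0 := by nlinarith
      exact mul_pos_of_neg_of_neg h3 h4

/-- the weights -/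
noncomputable def k0 (_a u : ℝ) : ℝ := 2 * u / 7
noncomputable def k1 (a u : ℝ) : ℝ :=
  4 * a / (u + 3 * a) ^ 2 - 4 * a / ((3 + 3 * a) * (4 + 3 * a)) * (2 * u / 7)

lemma fibre_aux {a : ℝ} (ha : |a| < 1 / 2) (k : ℝ → ℝ) (hk : Measurable k) (B1 : ℝ)
    (h1 : ∀ u ∈ Ioo (-|a|) |a|, |k u| ≤ B1) (h1' : B1 * (2 * |a|) ≤ 5)
    (h2 : ∀ u ∈ Ioo (3:ℝ) 4, |k u| ≤ 5) :
    IntegrableOn k (U a) ∧ ∫ u in U a, |k u| ≤ 10 ∧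
      ∫ u in U a, k u = (∫ u in (-|a|)..|a|, k u) + ∫ u in (3:ℝ)..4, k u := by
  have h0 := abs_nonneg a
  have i1 : IntegrableOn k (Ioo (-|a|) |a|) := by
    refine Measure.integrableOn_of_bounded (M := B1) (by simp) hk.aestronglyMeasurable ?_
    exact (ae_restrict_iff' measurableSet_Ioo).mpr (Filter.Eventually.of_forall h1)
  have i2 : IntegrableOn k (Ioo (3:ℝ) 4) := by
    refine Measure.integrableOn_of_bounded (M := 5) (by simp) hk.aestronglyMeasurable ?_
    exact (ae_restrict_iff' measurableSet_Ioo).mpr (Filter.Eventually.of_forall h2)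
  have hdis : Disjoint (Ioo (-|a|) |a|) (Ioo (3:ℝ) 4) := by
    rw [Set.disjoint_left]
    rintro u ⟨_, hu⟩ ⟨hu', _⟩
    linarith
  rw [U_eq ha]
  refine ⟨i1.union i2, ?_, ?_⟩
  · rw [setIntegral_union hdis measurableSet_Ioo i1.abs i2.abs]
    have e1 := norm_setIntegral_le_of_norm_le_const (μ := volume) (f := fun u => |k u|) (C := B1)
      (s := Ioo (-|a|) |a|) (by simp) (fun u hu => by simpa using h1 u hu)
    have e2 := norm_setIntegral_le_of_norm_le_const (μ := volume) (f := fun u => |k u|) (C := 5)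
      (s := Ioo (3:ℝ) 4) (by simp) (fun u hu => by simpa using h2 u hu)
    have e3 := le_trans (Real.le_norm_self _) e1
    have e4 := le_trans (Real.le_norm_self _) e2
    rw [measureReal_def, Real.volume_Ioo, ENNReal.toReal_ofReal (by linarith)] at e3
    rw [measureReal_def, Real.volume_Ioo, ENNReal.toReal_ofReal (by norm_num)] at e4
    have : B1 * (|a| - -|a|) = B1 * (2 * |a|) := by ring
    linarith
  · rw [setIntegral_union hdis measurableSet_Ioo i1 i2, intervalIntegral.integral_of_le (by linarith),
      intervalIntegral.integral_of_le (by norm_num), integral_Ioc_eq_integral_Ioo,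
      integral_Ioc_eq_integral_Ioo]

lemma fibre0 {a : ℝ} (ha : |a| < 1 / 2) :
    IntegrableOn (k0 a) (U a) ∧ ∫ u in U a, |k0 a u| ≤ 10 ∧ ∫ u in U a, k0 a u = 1 := by
  have h0 := abs_nonneg a
  obtain ⟨e1, e2, e3⟩ := fibre_aux ha (k0 a) (by unfold k0; fun_prop) 1
    (fun u hu => by rw [k0, abs_le]; constructor <;> linarith [hu.1, hu.2]) (by linarith)
    (fun u hu => by rw [k0, abs_le]; constructor <;> linarith [hu.1, hu.2])
  refine ⟨e1, e2, e3.trans ?_⟩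
  have hd : ∀ u, HasDerivAt (fun u : ℝ => u ^ 2 / 7) (k0 a u) u := by
    intro u
    refine ((hasDerivAt_pow 2 u).div_const 7).congr_deriv ?_
    simp [k0]
  have hc : Continuous (k0 a) := by unfold k0; fun_prop
  rw [intervalIntegral.integral_eq_sub_of_hasDerivAt (fun u _ => hd u) (hc.intervalIntegrable _ _),
    intervalIntegral.integral_eq_sub_of_hasDerivAt (fun u _ => hd u) (hc.intervalIntegrable _ _)]
  norm_num

lemma fibre1 {a : ℝ} (ha : |a| < 1 / 2) :
    IntegrableOn (k1 a) (U a) ∧ ∫ u in U a, |k1 a u| ≤ 10 ∧ ∫ u in U a, k1 a u = sg a := by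
  have h0 := abs_nonneg a
  have ha' := abs_lt.mp ha
  set c := 4 * a / ((3 + 3 * a) * (4 + 3 * a)) with hc
  have hp1 : 0 < 3 + 3 * a := by linarith
  have hp2 : 0 < 4 + 3 * a := by linarith
  have hc1 : |c| ≤ 1 := by
    rw [hc, abs_div, abs_mul, abs_of_pos (show (0:ℝ) < 4 by norm_num),
      abs_of_pos (mul_pos hp1 hp2), div_le_one (mul_pos hp1 hp2)]
    nlinarith
  have hne : ∀ u ∈ Icc (-|a|) |a|, a ≠ 0 → u + 3 * a ≠ 0 := by
    intro u hu h h2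
    have h3 : |u| ≤ |a| := abs_le.mpr hu
    have h4 : u = - (3 * a) := by linarith
    rw [h4, abs_neg, abs_mul, abs_of_pos (show (0:ℝ) < 3 by norm_num)] at h3
    have := abs_pos.mpr h
    linarith
  have hlow : ∀ u ∈ Icc (-|a|) |a|, (2 * a) ^ 2 ≤ (u + 3 * a) ^ 2 := by
    intro u hu
    have h5 : 0 ≤ (u + a) * (u + 5 * a) := by
      rcases le_total 0 a with h | h
      · rw [abs_of_nonneg h] at hu
        exact mul_nonneg (by linarith [hu.1]) (by linarith [hu.1])
      · rw [abs_of_nonpos h] at hu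
        exact mul_nonneg_of_nonpos_of_nonpos (by linarith [hu.2]) (by linarith [hu.2])
    nlinarith
  obtain ⟨e1, e2, e3⟩ := fibre_aux ha (k1 a) (by unfold k1; fun_prop) (1 / |a| + 1)
    (fun u hu => by
      rw [k1, ← hc]
      refine (abs_sub _ _).trans (add_le_add ?_ ?_)
      · by_cases h : a = 0
        · simp [h]
        · have h1 := hlow u (Ioo_subset_Icc_self hu)
          have h2 : 0 < |a| := abs_pos.mpr h
          rw [abs_div, abs_mul, abs_of_pos (show (0:ℝ) < 4 by norm_num), abs_of_nonneg (sq_nonneg (u + 3 * a)),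
            div_le_div_iff₀ (by have : 0 < (2 * a) ^ 2 := by positivity
                                linarith) h2]
          have : |a| * |a| = a ^ 2 := by rw [← sq, sq_abs]
          nlinarith
      · rw [abs_mul]
        have : |2 * u / 7| ≤ 1 := by rw [abs_le]; constructor <;> linarith [hu.1, hu.2]
        nlinarith [abs_nonneg c, abs_nonneg (2 * u / 7)]) (by
      by_cases h : a = 0
      · simp [h]
      · have h2 : 0 < |a| := abs_pos.mpr h
        have : (1 / |a| + 1) * (2 * |a|) = 2 + 2 * |a| := by field_simp
        linarith)
    (fun u hu => by
      rw [k1, ← hc]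
      have h1 : |4 * a / (u + 3 * a) ^ 2| ≤ 2 := by
        have h2 : 1 ≤ u + 3 * a := by linarith [hu.1]
        rw [abs_div, abs_mul, abs_of_pos (show (0:ℝ) < 4 by norm_num), abs_of_nonneg (sq_nonneg (u + 3 * a)),
          div_le_iff₀ (by positivity)]
        nlinarith
      have h2 : |c * (2 * u / 7)| ≤ 2 := by
        rw [abs_mul]
        have : |2 * u / 7| ≤ 2 := by rw [abs_le]; constructor <;> linarith [hu.1, hu.2]
        nlinarith [abs_nonneg c, abs_nonneg (2 * u / 7)]
      have h3 := abs_sub (4 * a / (u + 3 * a) ^ 2) (c * (2 * u / 7))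
      linarith)
  refine ⟨e1, e2, e3.trans ?_⟩
  have hd : ∀ u, u + 3 * a ≠ 0 →
      HasDerivAt (fun u : ℝ => - (4 * a / (u + 3 * a)) - c * (u ^ 2 / 7)) (k1 a u) u := by
    intro u hu
    have h1 : HasDerivAt (fun u : ℝ => u + 3 * a) 1 u := (hasDerivAt_id' u).add_const _
    have h2 := (((hasDerivAt_const u (4 * a)).fun_div h1 hu).fun_neg).fun_sub
      (((hasDerivAt_pow 2 u).div_const 7).const_mul c)
    refine h2.congr_deriv ?_
    rw [k1, ← hc]
    simp
    ring
  have hct : ∀ s : Set ℝ, (∀ u ∈ s, u + 3 * a ≠ 0) → ContinuousOn (k1 a) s := by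
    intro s hs
    unfold k1
    refine ContinuousOn.sub (ContinuousOn.div (by fun_prop) (by fun_prop) ?_) (by fun_prop)
    intro u hu
    exact pow_ne_zero _ (hs u hu)
  have h34 : ∀ u ∈ uIcc (3:ℝ) 4, u + 3 * a ≠ 0 := by
    intro u hu
    rw [uIcc_of_le (by norm_num)] at hu
    have := hu.1
    intro h; linarith
  rw [intervalIntegral.integral_eq_sub_of_hasDerivAt (fun u hu => hd u (h34 u hu))
    (hct _ h34).intervalIntegrable]
  have hz : -(4 * a / (4 + 3 * a)) - c * (4 ^ 2 / 7) - (-(4 * a / (3 + 3 * a)) - c * (3 ^ 2 / 7)) = 0 := by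
    have h4 : 4 * a / (3 + 3 * a) - 4 * a / (4 + 3 * a) = c := by
      rw [hc, div_sub_div _ _ hp1.ne' hp2.ne']
      congr 1; ring
    linear_combination h4
  rw [hz, add_zero]
  by_cases h : a = 0
  · have : k1 a = fun _ => 0 := by ext u; simp [k1, h]
    rw [this]; simp [h]
  · have hn : ∀ u ∈ uIcc (-|a|) |a|, u + 3 * a ≠ 0 := by
      intro u hu
      rw [uIcc_of_le (by linarith)] at hu
      exact hne u hu h
    rw [intervalIntegral.integral_eq_sub_of_hasDerivAt (fun u hu => hd u (hn u hu))
      (hct _ hn).intervalIntegrable]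
    rcases lt_or_gt_of_ne h with h | h
    · rw [abs_of_neg h, sg_neg h]
      have e1 : -a + 3 * a = 2 * a := by ring
      have e2 : - -a + 3 * a = 4 * a := by ring
      have hh := h.ne
      rw [e1, e2]
      field_simp
      ring
    · rw [abs_of_pos h, sg_pos h]
      have e1 : a + 3 * a = 4 * a := by ring
      have e2 : -a + 3 * a = 2 * a := by ring
      rw [e1, e2]
      field_simp
      ring

lemma U_den {a u : ℝ} (ha : |a| < 1 / 2) (hu : u ∈ U a) :
    u + 3 * a ≠ 0 ∧ (3 + 3 * a) * (4 + 3 * a) ≠ 0 := by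
  have ha' := abs_lt.mp ha
  constructor
  · rw [U_eq ha] at hu
    rcases hu with hu | hu
    · intro h
      have h3 : |u| < |a| := abs_lt.mpr hu
      have h4 : u = - (3 * a) := by linarith
      rw [h4, abs_neg, abs_mul, abs_of_pos (show (0:ℝ) < 3 by norm_num)] at h3
      linarith [abs_nonneg a]
    · intro h; linarith [hu.1]
  · exact mul_ne_zero (by intro h; linarith) (by intro h; linarith)

lemma kernel_fubini {X : Type} [MeasureSpace X] [SFinite (volume : Measure X)]
    (H : X → ℝ) (K : X → ℝ → ℝ) (T : X → ℝ)
    (hH : Integrable H) (hK : Measurable (Function.uncurry K))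
    (hb : ∀ x, H x ≠ 0 → Integrable (K x) ∧ ∫ u, |K x u| ≤ 10 ∧ ∫ u, K x u = T x) :
    Integrable (fun z : X × ℝ => H z.1 * K z.1 z.2) ∧
    ∫ z : X × ℝ, H z.1 * K z.1 z.2 = ∫ x, H x * T x := by
  have hm : AEStronglyMeasurable (fun z : X × ℝ => H z.1 * K z.1 z.2) volume :=
    (hH.aestronglyMeasurable.comp_fst).mul hK.aestronglyMeasurable
  have hi : Integrable (fun z : X × ℝ => H z.1 * K z.1 z.2) := by
    refine (integrable_prod_iff hm).mpr ⟨Filter.Eventually.of_forall fun x => ?_, ?_⟩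
    · by_cases h : H x = 0
      · simp [h]
      · exact (hb x h).1.const_mul (H x)
    · refine Integrable.mono' (hH.abs.const_mul 10) hm.norm.integral_prod_right'
        (Filter.Eventually.of_forall fun x => ?_)
      simp only [norm_mul, Real.norm_eq_abs, integral_const_mul]
      by_cases h : H x = 0
      · simp [h]
      · have h1 := (hb x h).2.1
        have h2 : 0 ≤ ∫ u, |K x u| := integral_nonneg fun u => abs_nonneg _
        rw [abs_abs, abs_of_nonneg h2, mul_comm]
        exact mul_le_mul_of_nonneg_right h1 (abs_nonneg _)
  refine ⟨hi, (integral_prod _ hi).trans ?_⟩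
  congr 1
  ext x
  simp only [integral_const_mul]
  by_cases h : H x = 0
  · simp [h]
  · rw [(hb x h).2.2]
end PeriodProof

namespace PeriodProof
open MeasureTheory MvPolynomial Set

/-- rational function, regular on the domain -/
def IsRat {ι κ : Type} (G : κ → MvPolynomial ι ℚ) (W : (ι → ℝ) → ℝ) : Prop :=
  ∃ P Q : MvPolynomial ι ℚ, ∀ x ∈ bdom G, aeval x Q ≠ 0 ∧ W x = aeval x P / aeval x Q

lemma IsRat.mul {ι κ : Type} {G : κ → MvPolynomial ι ℚ} {W W' : (ι → ℝ) → ℝ}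
    (h : IsRat G W) (h' : IsRat G W') : IsRat G (fun x => W x * W' x) := by
  obtain ⟨P, Q, hP⟩ := h
  obtain ⟨P', Q', hP'⟩ := h'
  refine ⟨P * P', Q * Q', fun x hx => ?_⟩
  obtain ⟨h1, h2⟩ := hP x hx
  obtain ⟨h3, h4⟩ := hP' x hx
  beta_reduce
  rw [map_mul, map_mul, h2, h4]
  exact ⟨mul_ne_zero h1 h3, by field_simp⟩

lemma IsRat.add {ι κ : Type} {G : κ → MvPolynomial ι ℚ} {W W' : (ι → ℝ) → ℝ}
    (h : IsRat G W) (h' : IsRat G W') : IsRat G (fun x => W x + W' x) := by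
  obtain ⟨P, Q, hP⟩ := h
  obtain ⟨P', Q', hP'⟩ := h'
  refine ⟨P * Q' + P' * Q, Q * Q', fun x hx => ?_⟩
  obtain ⟨h1, h2⟩ := hP x hx
  obtain ⟨h3, h4⟩ := hP' x hx
  beta_reduce
  rw [map_add, map_mul, map_mul, map_mul, h2, h4]
  exact ⟨mul_ne_zero h1 h3, by field_simp⟩

lemma IsRat.const {ι κ : Type} {G : κ → MvPolynomial ι ℚ} (c : ℚ) :
    IsRat G (fun _ => (c : ℝ)) :=
  ⟨C c, 1, fun x _ => by simp⟩

lemma IsRat.sum {ι κ T : Type} {G : κ → MvPolynomial ι ℚ} (s : Finset T)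
    (W : T → (ι → ℝ) → ℝ) (h : ∀ t, IsRat G (W t)) : IsRat G (fun x => ∑ t ∈ s, W t x) := by
  classical
  induction s using Finset.induction_on with
  | empty => simpa using IsRat.const (G := G) 0
  | insert t s ht ih =>
    simp only [Finset.sum_insert ht]
    exact (h t).add ih

lemma IsRat.comp {ι κ ι' κ' : Type} {G : κ → MvPolynomial ι ℚ} {G' : κ' → MvPolynomial ι' ℚ}
    {W : (ι → ℝ) → ℝ} (h : IsRat G W) (f : ι → ι')
    (hf : ∀ y ∈ bdom G', (fun i => y (f i)) ∈ bdom G) : IsRat G' (fun y => W (fun i => y (f i))) := by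
  obtain ⟨P, Q, hP⟩ := h
  refine ⟨rename f P, rename f Q, fun y hy => ?_⟩
  rw [aeval_rename, aeval_rename]
  exact hP _ (hf y hy)

/-- the weight `W` on the second domain represents the function `τ` on the first -/
def Tot {ι κ ι' κ' : Type} [Fintype ι] [Fintype ι'] (f : ι → ι')
    (G : κ → MvPolynomial ι ℚ) (G' : κ' → MvPolynomial ι' ℚ)
    (W : (ι' → ℝ) → ℝ) (τ : (ι → ℝ) → ℝ) : Prop :=
  ∀ h : (ι → ℝ) → ℝ, IntegrableOn h (bdom G) →
    IntegrableOn (fun y => h (fun i => y (f i)) * W y) (bdom G') ∧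
    ∫ y in bdom G', h (fun i => y (f i)) * W y = ∫ x in bdom G, h x * τ x

lemma Tot.comp {ι κ ι' κ' ι'' κ'' : Type} [Fintype ι] [Fintype ι'] [Fintype ι'']
    {f : ι → ι'} {g : ι' → ι''}
    {G : κ → MvPolynomial ι ℚ} {G' : κ' → MvPolynomial ι' ℚ} {G'' : κ'' → MvPolynomial ι'' ℚ}
    {W : (ι' → ℝ) → ℝ} {w : (ι'' → ℝ) → ℝ} {τ σ : (ι → ℝ) → ℝ}
    (h1 : Tot f G G' W τ) (h2 : Tot g G' G'' w (fun y => σ (fun i => y (f i))))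
    (hσ : ∀ h, IntegrableOn h (bdom G) → IntegrableOn (fun x => h x * σ x) (bdom G)) :
    Tot (fun i => g (f i)) G G'' (fun z => W (fun i => z (g i)) * w z) (fun x => σ x * τ x) := by
  intro h hh
  obtain ⟨a1, a2⟩ := h1 h hh
  obtain ⟨b1, b2⟩ := h2 _ a1
  obtain ⟨c1, c2⟩ := h1 _ (hσ h hh)
  constructor
  · simpa only [mul_assoc] using b1
  · simp only [mul_assoc] at b2 c2 ⊢
    rw [b2, ← c2]
    congr 1; ext y; ring

/-- the one-step extension of the domain -/
noncomputable def stepG {ι κ : Type} (G : κ → MvPolynomial ι ℚ) (F : MvPolynomial ι ℚ) :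
    κ ⊕ Unit → MvPolynomial (ι ⊕ Unit) ℚ :=
  Sum.elim (fun j => rename Sum.inl (G j))
    (fun _ => ((rename Sum.inl F) ^ 2 - X (Sum.inr ()) ^ 2) *
      ((X (Sum.inr ()) - C 3) * (X (Sum.inr ()) - C 4)))

lemma mem_stepG {ι κ : Type} {G : κ → MvPolynomial ι ℚ} {F : MvPolynomial ι ℚ}
    {y : ι ⊕ Unit → ℝ} : y ∈ bdom (stepG G F) ↔
      (fun i => y (Sum.inl i)) ∈ bdom G ∧ y (Sum.inr ()) ∈ U (aeval (fun i => y (Sum.inl i)) F) := by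
  simp only [mem_bdom, stepG, Sum.forall, Sum.elim_inl, Sum.elim_inr, aeval_rename, U,
    mem_ofPred_eq, map_mul, map_sub, map_pow, aeval_X, aeval_C]
  simp [Function.comp_def]

lemma step_tot {ι κ : Type} [Fintype ι] [Fintype κ] (G : κ → MvPolynomial ι ℚ)
    (F : MvPolynomial ι ℚ) (hF : ∀ x ∈ bdom G, |aeval x F| < 1 / 2)
    (k : ℝ → ℝ → ℝ) (hk : Measurable (Function.uncurry k)) (τ : ℝ → ℝ)
    (hfib : ∀ a, |a| < 1 / 2 →
      IntegrableOn (k a) (U a) ∧ ∫ u in U a, |k a u| ≤ 10 ∧ ∫ u in U a, k a u = τ a) :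
    Tot Sum.inl G (stepG G F)
      (fun y => k (aeval (fun i => y (Sum.inl i)) F) (y (Sum.inr ())))
      (fun x => τ (aeval x F)) := by
  intro h hh
  have hUm : ∀ a, MeasurableSet (U a) := fun a =>
    (measurableSet_lt measurable_const (by fun_prop))
  let S : Set ((ι → ℝ) × ℝ) := {z | z.1 ∈ bdom G ∧ z.2 ∈ U (aeval z.1 F)}
  have hS2 : MeasurableSet {z : (ι → ℝ) × ℝ | z.2 ∈ U (aeval z.1 F)} := by
    have := (continuous_aeval' F).comp (continuous_fst (X := ι → ℝ) (Y := ℝ))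
    simp only [Function.comp_def] at this
    have h2 : Continuous fun z : (ι → ℝ) × ℝ =>
      ((aeval z.1 F : ℝ) ^ 2 - z.2 ^ 2) * ((z.2 - 3) * (z.2 - 4)) := by fun_prop
    exact (isOpen_lt continuous_const h2).measurableSet
  have hSm : MeasurableSet S :=
    ((measurableSet_bdom G).preimage measurable_fst).inter hS2
  have hd : bdom (stepG G F) = (split1 ι) ⁻¹' S := by
    ext y; exact mem_stepG
  let Φ : (ι → ℝ) × ℝ → ℝ := fun z => h z.1 * k (aeval z.1 F) z.2
  let H : (ι → ℝ) → ℝ := (bdom G).indicator h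
  let K : (ι → ℝ) → ℝ → ℝ := fun x => (U (aeval x F)).indicator (k (aeval x F))
  have hΦ : S.indicator Φ = fun z => H z.1 * K z.1 z.2 := by
    ext z
    by_cases h1 : z.1 ∈ bdom G <;> by_cases h2 : z.2 ∈ U (aeval z.1 F) <;>
      simp [S, Φ, H, K, Set.indicator, h1, h2]
  have hKm : Measurable (Function.uncurry K) := by
    have e : Function.uncurry K = Set.indicator {z : (ι → ℝ) × ℝ | z.2 ∈ U (aeval z.1 F)}
        (fun z => Function.uncurry k (aeval z.1 F, z.2)) := by
      ext z
      by_cases h2 : z.2 ∈ U (aeval z.1 F) <;> simp [Function.uncurry, K, Set.indicator, h2]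
    rw [e]
    refine Measurable.indicator (hk.comp (Measurable.prodMk ?_ measurable_snd)) hS2
    exact (continuous_aeval' F).measurable.comp measurable_fst
  obtain ⟨r1, r2⟩ := kernel_fubini H K (fun x => τ (aeval x F))
    (hh.integrable_indicator (measurableSet_bdom G)) hKm (by
      intro x hx
      have hx' : x ∈ bdom G := by
        by_contra hn; exact hx (by simp [H, hn])
      obtain ⟨f1, f2, f3⟩ := hfib _ (hF x hx')
      refine ⟨f1.integrable_indicator (hUm _), ?_, ?_⟩
      · have e : ∀ u, |K x u| = (U (aeval x F)).indicator (fun u => |k (aeval x F) u|) u := by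
          intro u
          by_cases h2 : u ∈ U (aeval x F) <;> simp [K, Set.indicator, h2]
        simp only [e]
        rw [integral_indicator (hUm _)]
        exact f2
      · simp only [K]
        rw [integral_indicator (hUm _)]
        exact f3)
  rw [← hΦ] at r1 r2
  constructor
  · rw [hd]
    exact ((split1_mp ι).integrableOn_comp_preimage (split1 ι).measurableEmbedding (f := Φ)).mpr
      ((integrable_indicator_iff hSm).mp r1)
  · rw [hd]
    refine ((split1_mp ι).setIntegral_preimage_emb (split1 ι).measurableEmbedding Φ S).trans ?_
    rw [integral_indicator hSm] at r2
    rw [r2, ← integral_indicator (measurableSet_bdom G)]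
    congr 1; ext x
    by_cases h1 : x ∈ bdom G <;> simp [H, h1]

lemma isRat_w0 {ι κ : Type} (G : κ → MvPolynomial ι ℚ)
    (F : MvPolynomial ι ℚ) :
    IsRat (stepG G F) (fun y => k0 (aeval (fun i => y (Sum.inl i)) F) (y (Sum.inr ()))) :=
  ⟨C 2 * X (Sum.inr ()), C 7, fun y hy => by simp [k0]⟩

lemma isRat_w1 {ι κ : Type} (G : κ → MvPolynomial ι ℚ)
    (F : MvPolynomial ι ℚ) (hF : ∀ x ∈ bdom G, |aeval x F| < 1 / 2) :
    IsRat (stepG G F) (fun y => k1 (aeval (fun i => y (Sum.inl i)) F) (y (Sum.inr ()))) := by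
  let f : MvPolynomial (ι ⊕ Unit) ℚ := rename Sum.inl F
  let u : MvPolynomial (ι ⊕ Unit) ℚ := X (Sum.inr ())
  refine ⟨C 4 * f * ((C 3 + C 3 * f) * (C 4 + C 3 * f) * C 7) -
    (u + C 3 * f) ^ 2 * (C 4 * f * (C 2 * u)),
    (u + C 3 * f) ^ 2 * ((C 3 + C 3 * f) * (C 4 + C 3 * f) * C 7), fun y hy => ?_⟩
  obtain ⟨h1, h2⟩ := mem_stepG.mp hy
  obtain ⟨h3, h4⟩ := U_den (hF _ h1) h2
  have hf : aeval y f = aeval (fun i => y (Sum.inl i)) F := by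
    simp only [f, aeval_rename]; rfl
  have hu : aeval y u = y (Sum.inr ()) := by simp [u]
  simp only [map_mul, map_sub, map_add, map_pow, aeval_C, hf, hu, k1]
  set a := aeval (fun i => y (Sum.inl i)) F
  set t := y (Sum.inr ())
  simp only [eq_ratCast, Rat.cast_ofNat]
  have h5 : (t + 3 * a) ^ 2 ≠ 0 := pow_ne_zero _ h3
  refine ⟨mul_ne_zero h5 (mul_ne_zero h4 (by norm_num)), ?_⟩
  generalize (t + 3 * a) ^ 2 = p at *
  generalize (3 + 3 * a) * (4 + 3 * a) = q at *
  field_simp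

lemma measurable_k0 : Measurable (Function.uncurry k0) := by
  unfold Function.uncurry k0; fun_prop
lemma measurable_k1 : Measurable (Function.uncurry k1) := by
  unfold Function.uncurry k1; fun_prop

lemma integrableOn_mul_sg {ι : Type} [Fintype ι] {S : Set (ι → ℝ)} (F : MvPolynomial ι ℚ)
    (h : (ι → ℝ) → ℝ) (hh : IntegrableOn h S) :
    IntegrableOn (fun x => h x * sg (aeval x F)) S := by
  refine Integrable.mul_bdd (c := 1) hh ?_ (Filter.Eventually.of_forall fun x => ?_)
  · exact (measurable_sg.comp (continuous_aeval' F).measurable).aestronglyMeasurable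
  · simpa using abs_sg_le (aeval x F)

lemma multi {ι κ : Type} [Fintype ι] [Fintype κ] (G : κ → MvPolynomial ι ℚ)
    (T : Finset (MvPolynomial ι ℚ)) (hT : ∀ F ∈ T, ∀ x ∈ bdom G, |aeval x F| < 1 / 2) :
    ∃ (ι' κ' : Type) (_ : Fintype ι') (_ : Fintype κ') (f : ι → ι') (G' : κ' → MvPolynomial ι' ℚ),
      (∀ y ∈ bdom G', (fun i => y (f i)) ∈ bdom G) ∧
      (∃ W, IsRat G' W ∧ Tot f G G' W (fun _ => 1)) ∧
      ∀ F ∈ T, ∃ W, IsRat G' W ∧ Tot f G G' W (fun x => sg (aeval x F)) := by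
  classical
  induction T using Finset.induction_on with
  | empty =>
    refine ⟨ι, κ, inferInstance, inferInstance, id, G, fun y hy => hy, ⟨fun _ => 1, ?_, ?_⟩, by simp⟩
    · simpa using IsRat.const (G := G) 1
    · intro h hh
      simpa using hh
  | insert F T hFT ih =>
    obtain ⟨ι', κ', _, _, f, G', hf, ⟨W1, hW1, hW1t⟩, hW⟩ :=
      ih (fun F' hF' => hT F' (Finset.mem_insert_of_mem hF'))
    have hF : ∀ y ∈ bdom G', |aeval y (rename f F)| < 1 / 2 := by
      intro y hy
      rw [aeval_rename]
      exact hT F (Finset.mem_insert_self _ _) _ (hf y hy)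
    have t0 := step_tot G' (rename f F) hF k0 measurable_k0 (fun _ => 1) (fun a ha => fibre0 ha)
    have t1 := step_tot G' (rename f F) hF k1 measurable_k1 sg (fun a ha => fibre1 ha)
    have r0 := isRat_w0 G' (rename f F)
    have r1 := isRat_w1 G' (rename f F) hF
    have hone : ∀ h : (ι → ℝ) → ℝ, IntegrableOn h (bdom G) →
        IntegrableOn (fun x => h x * 1) (bdom G) := by
      intro h hh
      simpa only [mul_one] using hh
    have hin : ∀ z ∈ bdom (stepG G' (rename f F)), (fun i => z (Sum.inl i)) ∈ bdom G' :=
      fun z hz => (mem_stepG.mp hz).1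
    have t1' : Tot Sum.inl G' (stepG G' (rename f F))
      (fun y => k1 (aeval (fun i => y (Sum.inl i)) (rename f F)) (y (Sum.inr ())))
      (fun y => (fun x => sg (aeval x F)) (fun i => y (f i))) := by
      convert t1 using 3
      rw [aeval_rename]; rfl
    refine ⟨ι' ⊕ Unit, κ' ⊕ Unit, inferInstance, inferInstance, fun i => Sum.inl (f i),
      stepG G' (rename f F), fun z hz => hf (fun i => z (Sum.inl i)) (hin z hz), ⟨_, (hW1.comp Sum.inl hin).mul r0, ?_⟩, ?_⟩
    · have := Tot.comp (σ := fun _ => 1) (τ := fun _ => 1) hW1t t0 hone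
      simp only [mul_one] at this
      exact this
    · intro F' hF'
      rcases Finset.mem_insert.mp hF' with rfl | hF'
      · refine ⟨_, (hW1.comp Sum.inl hin).mul r1, ?_⟩
        have := hW1t.comp t1' (fun h hh => integrableOn_mul_sg F' h hh)
        simp only [mul_one] at this
        exact this
      · obtain ⟨W, hWr, hWt⟩ := hW F' hF'
        refine ⟨_, (hWr.comp Sum.inl hin).mul r0, ?_⟩
        have := Tot.comp (σ := fun _ => 1) (τ := fun x => sg (aeval x F')) hWt t0 hone
        simp only [one_mul] at this
        exact this
end PeriodProof

namespace PeriodProof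
open MeasureTheory MvPolynomial Set

/-- normal form: rational combination of sign integrals over one bounded set of rational volume -/
def NN (α : ℝ) : Prop :=
  ∃ (ι κ T : Type) (_ : Fintype ι) (_ : Fintype κ) (_ : Fintype T) (G : κ → MvPolynomial ι ℚ)
    (q : ℚ) (F : T → MvPolynomial ι ℚ) (c : T → ℚ), q ≠ 0 ∧ Bornology.IsBounded (bdom G) ∧
    (volume (bdom G)).toReal = q ∧ α = ∑ t, (c t : ℝ) * ∫ x in bdom G, sg (aeval x (F t))

lemma integrableOn_sg {ι : Type} [Fintype ι] {S : Set (ι → ℝ)} (hS : Bornology.IsBounded S)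
    (F : MvPolynomial ι ℚ) : IntegrableOn (fun x => sg (aeval x F)) S := by
  have h1 : IntegrableOn (fun _ : ι → ℝ => (1:ℝ)) S :=
    integrableOn_const hS.measure_lt_top.ne
  simpa only [one_mul] using integrableOn_mul_sg F _ h1

lemma NN_zero : NN 0 := by
  refine ⟨Fin 0, Fin 0, Fin 0, inferInstance, inferInstance, inferInstance, fun j => 0, 1,
    fun t => 0, fun t => 0, one_ne_zero, ?_, ?_, ?_⟩
  · rw [isBounded_iff_coord]; exact ⟨0, fun x _ i => i.elim0⟩
  · have h : bdom (ι := Fin 0) (κ := Fin 0) (fun j => 0) = Set.univ := by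
      ext x; simp [mem_bdom]
    rw [h]
    have h2 : (volume (Set.univ : Set (Fin 0 → ℝ))) = 1 := by
      rw [volume_pi, Measure.pi_univ]; simp
    simp [h2]
  · simp

lemma NN_smul {α : ℝ} (r : ℚ) (h : NN α) : NN (r • α) := by
  obtain ⟨ι, κ, T, _, _, _, G, q, F, c, h1, h2, h3, rfl⟩ := h
  refine ⟨ι, κ, T, inferInstance, inferInstance, inferInstance, G, q, F, fun t => r * c t,
    h1, h2, h3, ?_⟩
  rw [Finset.smul_sum]
  refine Finset.sum_congr rfl fun t _ => ?_
  rw [Rat.smul_def]; push_cast; ring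

lemma NN_add {α β : ℝ} (h : NN α) (h' : NN β) : NN (α + β) := by
  obtain ⟨ι, κ, T, _, _, _, G, q, F, c, h1, hG, h3, rfl⟩ := h
  obtain ⟨ι', κ', T', _, _, _, G', q', F', c', h1', hG', h3', rfl⟩ := h'
  let H : κ ⊕ κ' → MvPolynomial (ι ⊕ ι') ℚ :=
    Sum.elim (fun j => rename Sum.inl (G j)) (fun j => rename Sum.inr (G' j))
  have hH : bdom H = (split _ _) ⁻¹' (bdom G ×ˢ bdom G') := by
    ext x
    simp only [mem_bdom, H, Sum.forall, Sum.elim_inl, Sum.elim_inr, aeval_inl, aeval_inr,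
      mem_preimage, mem_prod]
  have hb : Bornology.IsBounded (bdom H) := by
    rw [hH, isBounded_iff_coord]
    rw [isBounded_iff_coord] at hG hG'
    obtain ⟨R, hR⟩ := hG
    obtain ⟨R', hR'⟩ := hG'
    refine ⟨R + R', ?_⟩
    rintro x ⟨h1, h2⟩ (i | i)
    · have := hR _ h1 i
      simp only [split_apply] at this
      push_cast
      have : (0:ℝ) ≤ R' := by positivity
      linarith
    · have := hR' _ h2 i
      simp only [split_apply] at this
      push_cast
      have : (0:ℝ) ≤ R := by positivity
      linarith
  have hv : (volume (bdom H)).toReal = (q * q' : ℚ) := by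
    rw [hH, (split_mp _ _).measure_preimage_equiv, Measure.volume_eq_prod, Measure.prod_prod,
      ENNReal.toReal_mul, h3, h3']
    push_cast; rfl
  have hIntg : ∀ (f : (ι → ℝ) → ℝ) (g : (ι' → ℝ) → ℝ),
      ∫ y in bdom H, f (split ι ι' y).1 * g (split ι ι' y).2 =
        (∫ x in bdom G, f x) * ∫ x in bdom G', g x := by
    intro f g
    rw [hH]
    refine ((split_mp ι ι').setIntegral_preimage_emb (split ι ι').measurableEmbedding
      (fun z => f z.1 * g z.2) (bdom G ×ˢ bdom G')).trans ?_
    exact setIntegral_prod_mul f g _ _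
  have hq : (q:ℝ) ≠ 0 := by exact_mod_cast h1
  have hq' : (q':ℝ) ≠ 0 := by exact_mod_cast h1'
  refine ⟨ι ⊕ ι', κ ⊕ κ', T ⊕ T', inferInstance, inferInstance, inferInstance, H, q * q',
    Sum.elim (fun t => rename Sum.inl (F t)) (fun t => rename Sum.inr (F' t)),
    Sum.elim (fun t => c t / q') (fun t => c' t / q), mul_ne_zero h1 h1', hb, hv, ?_⟩
  rw [Fintype.sum_sum_type]
  simp only [Sum.elim_inl, Sum.elim_inr, aeval_inl, aeval_inr]
  congr 1
  · refine Finset.sum_congr rfl fun t _ => ?_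
    have := hIntg (fun x => sg (aeval x (F t))) (fun _ => 1)
    simp only [mul_one, setIntegral_const, smul_eq_mul, measureReal_def, h3'] at this
    rw [this]
    push_cast; field_simp
  · refine Finset.sum_congr rfl fun t _ => ?_
    have := hIntg (fun _ => 1) (fun x => sg (aeval x (F' t)))
    simp only [one_mul, mul_one, setIntegral_const, smul_eq_mul, measureReal_def, h3] at this
    rw [this]
    push_cast; field_simp

lemma ind_eq (a : ℝ) : (sg a + sg (a ^ 2)) / 2 = if 0 < a then 1 else 0 := by
  rcases lt_trichotomy a 0 with h | rfl | h
  · rw [sg_neg h, sg_pos (sq_pos_of_neg h), if_neg (by linarith)]; norm_num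
  · simp
  · rw [sg_pos h, sg_pos (by positivity), if_pos h]; norm_num

lemma NN_vol {k q : ℕ} (H : Fin q → MvPolynomial (Fin k) ℚ) (hb : Bornology.IsBounded (bdom H)) :
    NN (volume (bdom H)).toReal := by
  classical
  obtain ⟨R, hR⟩ := isBounded_iff_coord.mp hb
  let E : Fin k → MvPolynomial (Fin k) ℚ := fun i => C ((R:ℚ) + 1) ^ 2 - X i ^ 2
  have hE : bdom E = Set.pi univ (fun _ => Ioo (-((R:ℝ) + 1)) (R + 1)) := by
    ext x
    simp only [mem_bdom, E, Set.mem_pi, mem_univ, forall_true_left, map_sub, map_pow, aeval_C,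
      aeval_X, mem_Ioo, eq_ratCast]
    push_cast
    refine forall_congr' fun i => ?_
    rw [sub_pos, sq_lt_sq, abs_of_pos (show (0:ℝ) < R + 1 by positivity), abs_lt]
  have hEb : Bornology.IsBounded (bdom E) := by
    rw [isBounded_iff_coord]
    refine ⟨R + 1, fun x hx i => ?_⟩
    rw [hE] at hx
    push_cast
    exact abs_lt.mpr (hx i (mem_univ i))
  have hv : (volume (bdom E)).toReal = ((2 * ((R:ℚ) + 1)) ^ k : ℚ) := by
    rw [hE, Real.volume_pi_Ioo_toReal (by intro i; simp only; have : (0:ℝ) ≤ R := by positivity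
                                          linarith)]
    simp only [Finset.prod_const, Finset.card_univ, Fintype.card_fin]
    push_cast; ring
  have hsub : bdom H ⊆ bdom E := by
    intro x hx
    rw [hE]
    intro i _
    have := abs_lt.mp (hR x hx i)
    exact ⟨by linarith [this.1], by linarith [this.2]⟩
  let F : Finset (Fin q) → MvPolynomial (Fin k) ℚ := fun s =>
    (∏ j ∈ s, H j) * ∏ j ∈ Finset.univ \ s, (H j) ^ 2
  have hind : ∀ x, (bdom H).indicator (fun _ => (1:ℝ)) x =
      ∑ s : Finset (Fin q), (((1/2) ^ q : ℚ) : ℝ) * sg (aeval x (F s)) := by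
    intro x
    have e1 : (bdom H).indicator (fun _ => (1:ℝ)) x =
        ∏ j, (sg (aeval x (H j)) + sg ((aeval x (H j)) ^ 2)) / 2 := by
      simp only [ind_eq]
      by_cases hx : x ∈ bdom H
      · rw [Set.indicator_of_mem hx, Finset.prod_eq_one]
        intro j _; exact if_pos (hx j)
      · rw [Set.indicator_of_notMem hx]
        have hx' : ¬ ∀ j, 0 < aeval x (H j) := hx
        push Not at hx'
        obtain ⟨j, hj⟩ := hx'
        exact (Finset.prod_eq_zero (Finset.mem_univ j) (if_neg (not_lt.mpr hj))).symm
    rw [e1, Finset.prod_div_distrib, Finset.prod_add, ← Finset.mul_sum]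
    simp only [Finset.powerset_univ, F, map_mul, map_prod, map_pow, Finset.prod_const,
      Finset.card_univ, Fintype.card_fin]
    push_cast
    rw [div_eq_inv_mul]
    simp
  refine ⟨Fin k, Fin k, Finset (Fin q), inferInstance, inferInstance, inferInstance, E,
    (2 * ((R:ℚ) + 1)) ^ k, F, fun _ => (1/2) ^ q, by positivity, hEb, hv, ?_⟩
  have e2 : (volume (bdom H)).toReal = ∫ x in bdom E, (bdom H).indicator (fun _ => (1:ℝ)) x := by
    rw [setIntegral_indicator (measurableSet_bdom H), inter_eq_self_of_subset_right hsub]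
    simp [measureReal_def]
  rw [e2]
  simp only [hind]
  rw [integral_finset_sum]
  · simp only [integral_const_mul]
  · intro s _
    exact (integrableOn_sg hEb (F s)).const_mul _

lemma NN_of_mem {α : ℝ} (h : α ∈ VS) : NN α := by
  rw [VS] at h
  induction h using Submodule.span_induction with
  | mem x hx =>
    obtain ⟨k, q, G, hG, rfl⟩ := hx
    exact NN_vol G hG
  | zero => exact NN_zero
  | add x y _ _ hx hy => exact NN_add hx hy
  | smul r x _ hx => exact NN_smul r hx

lemma period_of_NN {α : ℝ} (h : NN α) : IsRealPeriod α := by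
  classical
  obtain ⟨ι, κ, T, _, _, _, G, q, F, c, h1, hG, h3, rfl⟩ := h
  choose B hB using fun t => exists_bound hG (F t)
  let F' : T → MvPolynomial ι ℚ := fun t => C (1 / (2 * ((B t : ℚ) + 1))) * F t
  have hF' : ∀ t x, aeval x (F' t) = (1 / (2 * ((B t : ℝ) + 1))) * aeval x (F t) := by
    intro t x
    simp only [F', map_mul, aeval_C, eq_ratCast]
    push_cast; rfl
  have hsg : ∀ t x, sg (aeval x (F' t)) = sg (aeval x (F t)) := by
    intro t x
    rw [hF', map_mul, sg_pos (by positivity), one_mul]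
  obtain ⟨ι', κ', _, _, f, G', hf, -, hW⟩ := multi G (Finset.univ.image F') (by
    intro P hP x hx
    obtain ⟨t, -, rfl⟩ := Finset.mem_image.mp hP
    rw [hF', abs_mul, abs_of_pos (by positivity)]
    have := hB t x hx
    have hp : (0:ℝ) < 2 * ((B t : ℝ) + 1) := by positivity
    rw [one_div_mul_eq_div, div_lt_iff₀ hp]
    linarith)
  choose W hWr hWt using fun t => hW (F' t) (Finset.mem_image_of_mem F' (Finset.mem_univ t))
  have key : ∀ t, IntegrableOn (fun y => (c t : ℝ) * W t y) (bdom G') ∧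
      ∫ y in bdom G', (c t : ℝ) * W t y = (c t : ℝ) * ∫ x in bdom G, sg (aeval x (F t)) := by
    intro t
    obtain ⟨a1, a2⟩ := hWt t (fun _ => (c t : ℝ)) (integrableOn_const hG.measure_lt_top.ne)
    refine ⟨a1, a2.trans ?_⟩
    simp only [hsg]
    rw [integral_const_mul]
  obtain ⟨P, Q, hPQ⟩ := IsRat.sum (G := G') Finset.univ (fun t y => (c t : ℝ) * W t y)
    (fun t => (IsRat.const (c t)).mul (hWr t))
  have hsum : IntegrableOn (fun y => ∑ t, (c t : ℝ) * W t y) (bdom G') :=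
    integrable_finset_sum _ fun t _ => (key t).1
  have hfin := isRealPeriod_of G' P Q (fun x hx => (hPQ x hx).1)
    (hsum.congr_fun (fun x hx => (hPQ x hx).2) (measurableSet_bdom G'))
  convert hfin using 1
  rw [← setIntegral_congr_fun (measurableSet_bdom G') (fun x hx => (hPQ x hx).2),
    integral_finset_sum _ fun t _ => (key t).1]
  exact Finset.sum_congr rfl fun t _ => (key t).2.symm
end PeriodProof

/-- The set of real periods equals the ℚ-subalgebra of ℝ
generated by the volumes of bounded basic open semialgebraic sets. -/
theorem realPeriods_eq_adjoin_volumes :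
    {α : ℝ | IsRealPeriod α}
      = (Algebra.adjoin ℚ BasicSemialgebraicVolumes : Subalgebra ℚ ℝ) := by
  ext α
  constructor
  · intro h
    exact Algebra.span_le_adjoin ℚ _ (PeriodProof.isRealPeriod_mem h)
  · intro h
    exact PeriodProof.period_of_NN (PeriodProof.NN_of_mem (PeriodProof.adjoin_sub h))
end

section
/- Let D ⊆ ℝ^ℓ be a bounded basic open semialgebraic set defined by integer-coefficient polynomials, contained in [0,r]^ℓ for a positive rational r. Then there exists an elementary function φ : ℕ^{ℓ+1} → ℕ such that for all n ≥ 1 and all k = (k_1,…,k_ℓ) with 0 ≤ k_i < n, φ(n, k_1, …, k_ℓ) = 1 if the cube C_n(k) is contained in D, and φ(n, k_1, …, k_ℓ) = 0 otherwise. -/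
/-- The class of elementary functions `ℕ^n → ℕ`: the smallest class containing the
zero function, successor, projections, addition, multiplication and truncated
subtraction, and closed under composition, bounded summation and bounded product. -/
inductive Elem : ∀ {n : ℕ}, ((Fin n → ℕ) → ℕ) → Prop
  | zero {n : ℕ} : Elem (fun _ : Fin n → ℕ => 0)
  | succ : Elem (fun x : Fin 1 → ℕ => x 0 + 1)
  | proj {n : ℕ} (i : Fin n) : Elem (fun x : Fin n → ℕ => x i)
  | add : Elem (fun x : Fin 2 → ℕ => x 0 + x 1)
  | mul : Elem (fun x : Fin 2 → ℕ => x 0 * x 1)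
  | tsub : Elem (fun x : Fin 2 → ℕ => x 0 - x 1)
  | comp {m n : ℕ} {f : (Fin m → ℕ) → ℕ} {g : Fin m → (Fin n → ℕ) → ℕ} :
      Elem f → (∀ i, Elem (g i)) → Elem (fun x => f (fun i => g i x))
  | bsum {n : ℕ} {f : (Fin (n + 1) → ℕ) → ℕ} : Elem f →
      Elem (fun x : Fin (n + 1) → ℕ =>
        ∑ t ∈ Finset.range (x 0 + 1), f (Fin.cons t (fun i => x i.succ)))
  | bprod {n : ℕ} {f : (Fin (n + 1) → ℕ) → ℕ} : Elem f →
      Elem (fun x : Fin (n + 1) → ℕ =>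
        ∏ t ∈ Finset.range (x 0 + 1), f (Fin.cons t (fun i => x i.succ)))

/-- A one-variable function `ℕ → ℕ` is elementary. -/
def Elem1 (f : ℕ → ℕ) : Prop :=
  Elem (fun x : Fin 1 → ℕ => f (x 0))

/-- A (nonnegative) real number is elementary if it is approximated, with an
elementary modulus, by an elementary rational Cauchy sequence. -/
def ElemReal (α : ℝ) : Prop :=
  ∃ a b c : ℕ → ℕ, Elem1 a ∧ Elem1 b ∧ Elem1 c ∧
    ∀ k : ℕ, 1 ≤ k → ∀ x : ℕ, c k ≤ x →
      |(a x : ℝ) / ((b x : ℝ) + 1) - α| < 1 / (k : ℝ)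

/-- The small cube `C_n(k) = Π_{i} [kᵢ·r/n, (kᵢ+1)·r/n] ⊆ ℝ^ℓ`. -/
def smallCube (ℓ : ℕ) (r : ℚ) (n : ℕ) (k : Fin ℓ → ℕ) : Set (Fin ℓ → ℝ) :=
  Set.univ.pi fun i => Set.Icc ((k i : ℝ) * r / n) (((k i : ℝ) + 1) * r / n)


theorem Elem.of_eq {n : ℕ} {f g : (Fin n → ℕ) → ℕ} (h : Elem f) (e : ∀ x, f x = g x) : Elem g := by
  have : f = g := funext e
  exact this ▸ h

theorem Elem.add' {n : ℕ} {f g : (Fin n → ℕ) → ℕ} (hf : Elem f) (hg : Elem g) :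
    Elem (fun x => f x + g x) := by
  have := Elem.comp (g := ![f, g]) Elem.add (by intro i; fin_cases i <;> assumption)
  exact this.of_eq (by intro x; simp)

theorem Elem.mul' {n : ℕ} {f g : (Fin n → ℕ) → ℕ} (hf : Elem f) (hg : Elem g) :
    Elem (fun x => f x * g x) := by
  have := Elem.comp (g := ![f, g]) Elem.mul (by intro i; fin_cases i <;> assumption)
  exact this.of_eq (by intro x; simp)

theorem Elem.sub' {n : ℕ} {f g : (Fin n → ℕ) → ℕ} (hf : Elem f) (hg : Elem g) :
    Elem (fun x => f x - g x) := by
  have := Elem.comp (g := ![f, g]) Elem.tsub (by intro i; fin_cases i <;> assumption)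
  exact this.of_eq (by intro x; simp)

theorem Elem.const' {n : ℕ} (c : ℕ) : Elem (fun _ : Fin n → ℕ => c) := by
  induction c with
  | zero => exact Elem.zero
  | succ c ih =>
    have := Elem.comp (g := ![fun _ : Fin n → ℕ => c]) Elem.succ
      (by intro i; fin_cases i; assumption)
    exact this.of_eq (by intro x; simp)

theorem Elem.pow' {n : ℕ} {f : (Fin n → ℕ) → ℕ} (hf : Elem f) (d : ℕ) :
    Elem (fun x => f x ^ d) := by
  induction d with
  | zero => exact (Elem.const' 1).of_eq (by simp)
  | succ d ih => exact (ih.mul' hf).of_eq (by intro x; rw [pow_succ])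

theorem Elem.sum' {n : ℕ} {ι : Type*} (s : Finset ι) {f : ι → (Fin n → ℕ) → ℕ}
    (hf : ∀ i, Elem (f i)) : Elem (fun x => ∑ i ∈ s, f i x) := by
  classical
  induction s using Finset.induction_on with
  | empty => exact (Elem.const' 0).of_eq (by simp)
  | insert a s ha ih => exact ((hf a).add' ih).of_eq (by intro x; rw [Finset.sum_insert ha])

/-- Elementary decidable predicates. -/
def EP {n : ℕ} (P : (Fin n → ℕ) → Prop) : Prop :=
  ∃ f : (Fin n → ℕ) → ℕ, Elem f ∧ ∀ x, (P x → f x = 1) ∧ (¬ P x → f x = 0)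

theorem EP.of_iff {n : ℕ} {P Q : (Fin n → ℕ) → Prop} (h : EP P) (e : ∀ x, P x ↔ Q x) : EP Q := by
  have : P = Q := funext fun x => propext (e x)
  exact this ▸ h

theorem EP.le {n : ℕ} {f g : (Fin n → ℕ) → ℕ} (hf : Elem f) (hg : Elem g) :
    EP (fun x => f x ≤ g x) :=
  ⟨_, (Elem.const' 1).sub' (hf.sub' hg), fun x => ⟨fun h => by omega, fun h => by omega⟩⟩

theorem EP.and {n : ℕ} {P Q : (Fin n → ℕ) → Prop} (hP : EP P) (hQ : EP Q) :
    EP (fun x => P x ∧ Q x) := by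
  obtain ⟨f, hf, hf'⟩ := hP
  obtain ⟨g, hg, hg'⟩ := hQ
  refine ⟨_, hf.mul' hg, fun x => ⟨fun h => ?_, fun h => ?_⟩⟩
  · rw [(hf' x).1 h.1, (hg' x).1 h.2]
  · by_cases h1 : P x
    · rw [(hg' x).2 (fun h2 => h ⟨h1, h2⟩), mul_zero]
    · rw [(hf' x).2 h1, zero_mul]

theorem EP.fall {n : ℕ} {ι : Type*} [Fintype ι] {P : ι → (Fin n → ℕ) → Prop} (hP : ∀ i, EP (P i)) :
    EP (fun x => ∀ i, P i x) := by
  classical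
  have : ∀ s : Finset ι, EP (fun x => ∀ i ∈ s, P i x) := by
    intro s
    induction s using Finset.induction_on with
    | empty => exact ⟨_, Elem.const' 1, by simp⟩
    | insert a s ha ih => exact ((hP a).and ih).of_iff (by simp)
  exact (this Finset.univ).of_iff (by simp)

theorem EP.ball1 {n : ℕ} {P : (Fin (n + 1) → ℕ) → Prop} (hP : EP P) {b : (Fin n → ℕ) → ℕ}
    (hb : Elem b) : EP (fun x => ∀ t ≤ b x, P (Fin.cons t x)) := by
  obtain ⟨f, hf, hf'⟩ := hP
  have h := Elem.comp (g := fun i : Fin (n + 1) =>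
    (Fin.cons b (fun j => fun x => x j) : Fin (n + 1) → (Fin n → ℕ) → ℕ) i) (Elem.bprod hf) (by
      intro i
      refine Fin.cases ?_ (fun j => ?_) i
      · simpa using hb
      · simpa using Elem.proj j)
  refine ⟨_, h, fun x => ⟨fun H => ?_, fun H => ?_⟩⟩
  · simp only [Fin.cons_zero, Fin.cons_succ]
    refine Finset.prod_eq_one fun t ht => (hf' _).1 (H t ?_)
    simp at ht; omega
  · push Not at H
    obtain ⟨t, ht, hPt⟩ := H
    simp only [Fin.cons_zero, Fin.cons_succ]
    exact Finset.prod_eq_zero (i := t) (by simp; omega) ((hf' _).2 hPt)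

theorem EP.ball {l : ℕ} : ∀ {n : ℕ} {P : (Fin n → ℕ) → (Fin l → ℕ) → Prop},
    (∀ (m : ℕ) (G : Fin n → (Fin m → ℕ) → ℕ) (T : Fin l → (Fin m → ℕ) → ℕ),
      (∀ i, Elem (G i)) → (∀ j, Elem (T j)) → EP (fun x => P (fun i => G i x) (fun j => T j x))) →
    ∀ {b : (Fin n → ℕ) → ℕ}, Elem b → EP (fun x => ∀ t, (∀ j, t j ≤ b x) → P x t) := by
  induction l with
  | zero =>
    intro n P hP b hb
    refine (hP n (fun i x => x i) (fun j => j.elim0) (fun i => Elem.proj i)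
      (fun j => j.elim0)).of_iff ?_
    intro x
    constructor
    · intro h t _
      have h2 := h
      rw [show (fun j : Fin 0 => (j.elim0 : (Fin n → ℕ) → ℕ) x) = t from
        funext fun j => j.elim0] at h2
      exact h2
    · intro h
      exact h _ (fun j => j.elim0)
  | succ l ih =>
    intro n P hP b hb
    have h1 := ih (n := n + 1) (P := fun y t => P (fun i => y i.succ) (Fin.cons (y 0) t))
      (by
        intro m G T hG hT
        refine (hP m (fun i => G i.succ) (Fin.cons (G 0) T) (fun i => hG _) ?_).of_iff ?_
        · intro j
          refine Fin.cases ?_ (fun j => ?_) j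
          · simpa using hG 0
          · simpa using hT j
        · intro x
          have : (fun j => (Fin.cons (G 0) T : Fin (l+1) → (Fin m → ℕ) → ℕ) j x)
              = (Fin.cons (G 0 x) (fun j => T j x) : Fin (l+1) → ℕ) := by
            funext j
            refine Fin.cases ?_ (fun j => ?_) j <;> simp
          rw [this])
      (b := fun y => b (fun i => y i.succ)) (Elem.comp hb (fun i => Elem.proj i.succ))
    refine (h1.ball1 hb).of_iff ?_
    intro x
    simp only [Fin.cons_zero, Fin.cons_succ]
    constructor
    · intro h t ht
      have := h (t 0) (ht 0) (fun j => t j.succ) (fun j => ht _)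
      rwa [show (Fin.cons (t 0) (fun j => t j.succ) : Fin (l+1) → ℕ) = t from
        Fin.cons_self_tail t] at this
    · intro h t0 ht0 t ht
      apply h
      intro j
      refine Fin.cases ?_ (fun j => ?_) j
      · simpa using ht0
      · simpa using ht j

/-- Integer-valued elementary functions. -/
def IE {n : ℕ} (f : (Fin n → ℕ) → ℤ) : Prop :=
  ∃ a b : (Fin n → ℕ) → ℕ, Elem a ∧ Elem b ∧ ∀ x, f x = (a x : ℤ) - (b x : ℤ)

theorem IE.of_eq {n : ℕ} {f g : (Fin n → ℕ) → ℤ} (h : IE f) (e : ∀ x, f x = g x) : IE g := by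
  have : f = g := funext e
  exact this ▸ h

theorem IE.nat {n : ℕ} {f : (Fin n → ℕ) → ℕ} (hf : Elem f) : IE (fun x => (f x : ℤ)) :=
  ⟨f, _, hf, Elem.zero, by simp⟩

theorem IE.const {n : ℕ} (c : ℤ) : IE (fun _ : Fin n → ℕ => c) :=
  ⟨_, _, Elem.const' c.toNat, Elem.const' (-c).toNat, by intro x; show c = _; omega⟩

theorem IE.add {n : ℕ} {f g : (Fin n → ℕ) → ℤ} (hf : IE f) (hg : IE g) :
    IE (fun x => f x + g x) := by
  obtain ⟨a, b, ha, hb, h⟩ := hf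
  obtain ⟨c, d, hc, hd, h'⟩ := hg
  exact ⟨_, _, ha.add' hc, hb.add' hd, by intro x; simp only [h, h']; push_cast; ring⟩

theorem IE.mul {n : ℕ} {f g : (Fin n → ℕ) → ℤ} (hf : IE f) (hg : IE g) :
    IE (fun x => f x * g x) := by
  obtain ⟨a, b, ha, hb, h⟩ := hf
  obtain ⟨c, d, hc, hd, h'⟩ := hg
  exact ⟨_, _, (ha.mul' hc).add' (hb.mul' hd), (ha.mul' hd).add' (hb.mul' hc), by
    intro x; simp only [h, h']; push_cast; ring⟩

theorem IE.le {n : ℕ} {f g : (Fin n → ℕ) → ℤ} (hf : IE f) (hg : IE g) :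
    EP (fun x => f x ≤ g x) := by
  obtain ⟨a, b, ha, hb, h⟩ := hf
  obtain ⟨c, d, hc, hd, h'⟩ := hg
  refine (EP.le (ha.add' hd) (hc.add' hb)).of_iff ?_
  intro x
  rw [h, h']; omega

theorem IE.abs_le {n : ℕ} {f : (Fin n → ℕ) → ℤ} (hf : IE f) :
    ∃ K : (Fin n → ℕ) → ℕ, Elem K ∧ ∀ x, |f x| ≤ K x := by
  obtain ⟨a, b, ha, hb, h⟩ := hf
  refine ⟨_, ha.add' hb, fun x => ?_⟩
  rw [h, _root_.abs_le]; push_cast; constructor <;> omega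

theorem IE.poly {n m : ℕ} {U : Fin n → (Fin m → ℕ) → ℕ} (hU : ∀ i, Elem (U i))
    (p : MvPolynomial (Fin n) ℤ) : IE (fun x => MvPolynomial.eval (fun i => (U i x : ℤ)) p) := by
  induction p using MvPolynomial.induction_on with
  | C a => exact (IE.const a).of_eq (by simp)
  | add p q hp hq => exact (hp.add hq).of_eq (by simp)
  | mul_X p i hp => exact (hp.mul (IE.nat (hU i))).of_eq (by simp)

/-- Evaluation of a polynomial with polynomial coefficients. -/
noncomputable def ev {s l : ℕ} (u : Fin s → ℕ) (t : Fin l → ℝ) :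
    MvPolynomial (Fin l) (MvPolynomial (Fin s) ℤ) →+* ℝ :=
  MvPolynomial.eval₂Hom
    ((Int.castRingHom ℝ).comp (MvPolynomial.eval (fun i => (u i : ℤ)))) t

theorem ev_C {s l : ℕ} (u : Fin s → ℕ) (t : Fin l → ℝ) (a) :
    ev u t (MvPolynomial.C a) = ((MvPolynomial.eval (fun i => (u i : ℤ)) a : ℤ) : ℝ) := by
  simp [ev]

theorem ev_X {s l : ℕ} (u : Fin s → ℕ) (t : Fin l → ℝ) (i) :
    ev u t (MvPolynomial.X i) = t i := by
  simp [ev]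

theorem grid_EP {s l : ℕ} (F : MvPolynomial (Fin l) (MvPolynomial (Fin s) ℤ)) {m : ℕ}
    {U : Fin s → (Fin m → ℕ) → ℕ} (hU : ∀ i, Elem (U i))
    {T : Fin l → (Fin m → ℕ) → ℕ} (hT : ∀ i, Elem (T i))
    {M : (Fin m → ℕ) → ℕ} (hM : Elem M) :
    ∃ d : ℕ, ∃ h : (Fin m → ℕ) → ℤ, IE h ∧ ∀ x, 0 < M x →
      (h x : ℝ) = (M x : ℝ) ^ d * ev (fun i => U i x) (fun j => (T j x : ℝ) / M x) F := by
  induction F using MvPolynomial.induction_on with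
  | C a => exact ⟨0, _, IE.poly hU a, by intro x _; rw [ev_C]; simp⟩
  | add p q hp hq =>
    obtain ⟨d, h, hh, H⟩ := hp
    obtain ⟨d', h', hh', H'⟩ := hq
    refine ⟨d + d', _, ((IE.nat (hM.pow' d')).mul hh).add ((IE.nat (hM.pow' d)).mul hh'), ?_⟩
    intro x hx
    push_cast
    rw [H x hx, H' x hx, map_add]; ring
  | mul_X p i hp =>
    obtain ⟨d, h, hh, H⟩ := hp
    refine ⟨d + 1, _, hh.mul (IE.nat (hT i)), ?_⟩
    intro x hx
    push_cast
    rw [H x hx, map_mul, ev_X]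
    have : (M x : ℝ) ≠ 0 := by positivity
    field_simp
    ring

theorem grid_EP' {s l : ℕ} (F : MvPolynomial (Fin l) (MvPolynomial (Fin s) ℤ)) {m : ℕ}
    {U : Fin s → (Fin m → ℕ) → ℕ} (hU : ∀ i, Elem (U i))
    {T : Fin l → (Fin m → ℕ) → ℕ} (hT : ∀ i, Elem (T i))
    {M : (Fin m → ℕ) → ℕ} (hM : Elem M) (hM0 : ∀ x, 0 < M x)
    {B : (Fin m → ℕ) → ℕ} (hB : Elem B) :
    EP (fun x => (1 : ℝ) ≤ B x * ev (fun i => U i x) (fun j => (T j x : ℝ) / M x) F) := by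
  obtain ⟨d, h, hh, H⟩ := grid_EP F hU hT hM
  refine ((IE.nat (hM.pow' d)).le ((IE.nat hB).mul hh)).of_iff ?_
  intro x
  have h0 : (0 : ℝ) < (M x : ℝ) ^ d := by have := hM0 x; positivity
  rw [← Int.cast_le (R := ℝ)]
  push_cast
  rw [H x (hM0 x)]
  rw [show (B x : ℝ) * ((M x : ℝ) ^ d * ev (fun i => U i x) (fun j => (T j x : ℝ) / M x) F)
    = (M x : ℝ) ^ d * (B x * ev (fun i => U i x) (fun j => (T j x : ℝ) / M x) F) by ring]
  exact le_mul_iff_one_le_right h0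

theorem lip {s l : ℕ} (F : MvPolynomial (Fin l) (MvPolynomial (Fin s) ℤ)) :
    ∃ K : (Fin s → ℕ) → ℕ, Elem K ∧ ∀ u, ∀ t t' : Fin l → ℝ, (∀ i, |t i| ≤ 1) → (∀ i, |t' i| ≤ 1) →
      ∀ δ : ℝ, 0 ≤ δ → (∀ i, |t i - t' i| ≤ δ) →
      |ev u t F| ≤ K u ∧ |ev u t F - ev u t' F| ≤ K u * δ := by
  induction F using MvPolynomial.induction_on with
  | C a =>
    obtain ⟨K, hK, h⟩ := (IE.poly (fun i => Elem.proj i) a).abs_le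
    refine ⟨K, hK, fun u t t' _ _ δ hδ _ => ?_⟩
    simp only [ev_C, sub_self, abs_zero]
    exact ⟨by exact_mod_cast h u, by positivity⟩
  | add p q hp hq =>
    obtain ⟨K, hK, h⟩ := hp
    obtain ⟨K', hK', h'⟩ := hq
    refine ⟨_, hK.add' hK', fun u t t' ht ht' δ hδ hd => ?_⟩
    obtain ⟨a, b⟩ := h u t t' ht ht' δ hδ hd
    obtain ⟨a', b'⟩ := h' u t t' ht ht' δ hδ hd
    simp only [map_add]
    rw [abs_le] at *
    push_cast
    exact ⟨⟨by linarith, by linarith⟩, abs_le.2 ⟨by linarith, by linarith⟩⟩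
  | mul_X p i hp =>
    obtain ⟨K, hK, h⟩ := hp
    refine ⟨_, hK.add' hK, fun u t t' ht ht' δ hδ hd => ?_⟩
    obtain ⟨a, b⟩ := h u t t' ht ht' δ hδ hd
    simp only [map_mul, ev_X]
    push_cast
    have hK0 : (0 : ℝ) ≤ K u := by positivity
    constructor
    · rw [abs_mul]
      calc _ ≤ (K u : ℝ) * 1 := mul_le_mul a (ht i) (abs_nonneg _) hK0
        _ ≤ _ := by linarith
    · calc _ = |ev u t p * (t i - t' i) + (ev u t p - ev u t' p) * t' i| := by ring_nf
        _ ≤ |ev u t p * (t i - t' i)| + |(ev u t p - ev u t' p) * t' i| := abs_add_le _ _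
        _ = |ev u t p| * |t i - t' i| + |ev u t p - ev u t' p| * |t' i| := by rw [abs_mul, abs_mul]
        _ ≤ K u * δ + (K u * δ) * 1 := by
          gcongr
          · exact hd i
          · exact ht' i
        _ = _ := by ring


open MvPolynomial in
theorem exists_monic {R : Type*} [CommRing R] {l : ℕ} (g : Fin l → MvPolynomial (Fin l) R) (e : ℕ)
    (hg : ∀ i, (g i).totalDegree < e) (F : MvPolynomial (Fin l) R) :
    ∃ χ : Polynomial R, χ.Monic ∧
      Polynomial.aeval F χ ∈ Ideal.span (Set.range fun i => X i ^ e - g i) := by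
  classical
  set I := Ideal.span (Set.range fun i => X i ^ e - g i) with hI
  set V : Set (MvPolynomial (Fin l) R) :=
    Set.range (fun a : Fin l → Fin e =>
      monomial (Finsupp.equivFunOnFinite.symm fun i => (a i : ℕ)) (1 : R)) with hV
  have hVf : V.Finite := Set.finite_range _
  have key : ∀ D : ℕ, ∀ p : MvPolynomial (Fin l) R, p.totalDegree < D →
      p ∈ Submodule.span R V ⊔ I.restrictScalars R := by
    intro D
    induction D with
    | zero => intro p hp; omega
    | succ D ih =>
      intro p hp
      rw [p.as_sum]
      refine Submodule.sum_mem _ fun β hβ => ?_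
      have hdeg : (β.sum fun _ k => k) < D + 1 := lt_of_le_of_lt (le_totalDegree hβ) hp
      generalize coeff β p = c
      by_cases h : ∀ i, β i < e
      · apply Submodule.mem_sup_left
        have : monomial β c = c • monomial β (1 : R) := by rw [smul_monomial, smul_eq_mul, mul_one]
        rw [this]
        refine Submodule.smul_mem _ _ (Submodule.subset_span ⟨fun i => ⟨β i, h i⟩, ?_⟩)
        have hb : (Finsupp.equivFunOnFinite.symm fun i => β i) = β := by ext i; simp
        simp only [hb]
      · push Not at h
        obtain ⟨i, hi⟩ := h
        have hle : Finsupp.single i e ≤ β := by simpa using hi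
        have hsplit : monomial β c = monomial (β - Finsupp.single i e) c * (X i ^ e - g i)
            + monomial (β - Finsupp.single i e) c * g i := by
          rw [← mul_add, sub_add_cancel, X_pow_eq_monomial, monomial_mul, mul_one,
            tsub_add_cancel_of_le hle]
        rw [hsplit]
        refine Submodule.add_mem _ ?_ ?_
        · apply Submodule.mem_sup_right
          exact I.mul_mem_left _ (Ideal.subset_span ⟨i, rfl⟩)
        · apply ih
          refine lt_of_le_of_lt (totalDegree_mul _ _) ?_
          have h1 := totalDegree_monomial_le (β - Finsupp.single i e) c
          have h2 : ((β - Finsupp.single i e).sum fun _ k => k) + e = β.sum fun _ k => k := by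
            conv_rhs => rw [← tsub_add_cancel_of_le hle]
            rw [Finsupp.sum_add_index' (by simp) (by simp), Finsupp.sum_single_index rfl]
          have h1' : (monomial (β - Finsupp.single i e) c).totalDegree
            ≤ ((β - Finsupp.single i e).sum fun _ k => k) := h1
          have := hg i
          omega
  have hfin : Module.Finite R (MvPolynomial (Fin l) R ⧸ I) := by
    refine ⟨⟨(hVf.image (Ideal.Quotient.mkₐ R I)).toFinset, ?_⟩⟩
    rw [Set.Finite.coe_toFinset, eq_top_iff]
    rintro x -
    obtain ⟨p, rfl⟩ := Ideal.Quotient.mk_surjective x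
    obtain ⟨a, ha, b, hb, rfl⟩ := Submodule.mem_sup.1 (key (p.totalDegree + 1) p (by omega))
    have hb0 : Ideal.Quotient.mk I b = 0 := Ideal.Quotient.eq_zero_iff_mem.2 hb
    rw [map_add, hb0, add_zero]
    have := Submodule.mem_map_of_mem (f := (Ideal.Quotient.mkₐ R I).toLinearMap) ha
    rw [Submodule.map_span] at this
    exact this
  obtain ⟨χ, hχ, h0⟩ := IsIntegral.of_finite R (Ideal.Quotient.mk I F)
  refine ⟨χ, hχ, ?_⟩
  rw [← Ideal.Quotient.eq_zero_iff_mem]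
  have h1 : Ideal.Quotient.mk I (Polynomial.aeval F χ)
      = Polynomial.aeval (Ideal.Quotient.mkₐ R I F) χ := by
    rw [Polynomial.aeval_algHom_apply]; rfl
  rw [h1]
  exact h0

theorem root_bound (K : ℕ) : ∀ (c : ℕ → ℤ), (∃ j < K, c j ≠ 0) → ∀ m : ℝ, 0 < m →
    ∑ j ∈ Finset.range K, (c j : ℝ) * m ^ j = 0 →
    1 ≤ m * (1 + ∑ j ∈ Finset.range K, |(c j : ℝ)|) := by
  induction K with
  | zero => rintro c ⟨j, hj, _⟩; omega
  | succ K ih =>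
    rintro c ⟨j, hj, hc⟩ m hm hsum
    rw [Finset.sum_range_succ'] at hsum ⊢
    have hnn : (0 : ℝ) ≤ ∑ j ∈ Finset.range K, |(c (j + 1) : ℝ)| :=
      Finset.sum_nonneg fun _ _ => abs_nonneg _
    have hS : ∑ j ∈ Finset.range K, (c (j + 1) : ℝ) * m ^ (j + 1)
        = m * ∑ j ∈ Finset.range K, (c (j + 1) : ℝ) * m ^ j := by
      rw [Finset.mul_sum]
      exact Finset.sum_congr rfl fun _ _ => by ring
    by_cases h0 : c 0 = 0
    · have hj0 : j ≠ 0 := by rintro rfl; exact hc h0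
      obtain ⟨i, rfl⟩ := Nat.exists_eq_succ_of_ne_zero hj0
      rw [hS, h0] at hsum
      simp only [Int.cast_zero, zero_mul, add_zero, mul_eq_zero, hm.ne', false_or] at hsum
      have := ih (fun j => c (j + 1)) ⟨i, by omega, hc⟩ m hm hsum
      simpa [h0] using this
    · by_cases hm1 : 1 ≤ m
      · have := abs_nonneg (c 0 : ℝ)
        nlinarith
      · push Not at hm1
        have h1 : (1 : ℝ) ≤ |(c 0 : ℝ)| := by exact_mod_cast Int.one_le_abs h0
        have h2 : |∑ j ∈ Finset.range K, (c (j + 1) : ℝ) * m ^ j|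
            ≤ ∑ j ∈ Finset.range K, |(c (j + 1) : ℝ)| := by
          refine (Finset.abs_sum_le_sum_abs _ _).trans (Finset.sum_le_sum fun j _ => ?_)
          rw [abs_mul, abs_of_pos (pow_pos hm j)]
          exact mul_le_of_le_one_right (abs_nonneg _) (pow_le_one₀ hm.le hm1.le)
        have h3 : |(c 0 : ℝ)| = m * |∑ j ∈ Finset.range K, (c (j + 1) : ℝ) * m ^ j| := by
          rw [hS, pow_zero, mul_one] at hsum
          rw [← abs_of_pos hm, ← abs_mul, abs_of_pos hm, ← abs_neg]
          congr 1
          linarith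
        have := abs_nonneg (c 0 : ℝ)
        nlinarith

open Filter Topology in
theorem arr_bound (K : ℕ) (y : ℕ → ℝ) (m : ℝ) (hm : 0 < m) (hy : Tendsto y atTop (𝓝 m)) (I : ℕ) :
    ∀ c : ℕ → ℕ → ℤ, (∃ i < I, ∃ j < K, c i j ≠ 0) →
    (∀ N : ℕ, 1 ≤ N → ∑ i ∈ Finset.range I,
      (∑ j ∈ Finset.range K, (c i j : ℝ) * y N ^ j) * (N : ℝ) ^ i = 0) →
    1 ≤ m * (1 + ∑ i ∈ Finset.range I, ∑ j ∈ Finset.range K, |(c i j : ℝ)|) := by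
  induction I with
  | zero => rintro c ⟨i, hi, _⟩; omega
  | succ I ih =>
    rintro c ⟨i, hi, j, hj, hc⟩ h
    simp only [Finset.sum_range_succ] at h ⊢
    have hn1 : (0 : ℝ) ≤ ∑ i ∈ Finset.range I, ∑ j ∈ Finset.range K, |(c i j : ℝ)| :=
      Finset.sum_nonneg fun _ _ => Finset.sum_nonneg fun _ _ => abs_nonneg _
    have hn2 : (0 : ℝ) ≤ ∑ j ∈ Finset.range K, |(c I j : ℝ)| :=
      Finset.sum_nonneg fun _ _ => abs_nonneg _
    by_cases h0 : ∀ j < K, c I j = 0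
    · have hz : ∀ N, ∑ j ∈ Finset.range K, (c I j : ℝ) * y N ^ j = 0 := fun N =>
        Finset.sum_eq_zero fun j hj => by rw [h0 j (Finset.mem_range.1 hj)]; simp
      simp only [hz, zero_mul, add_zero] at h
      have hi' : i < I := by
        rcases Nat.lt_succ_iff_lt_or_eq.1 hi with h' | rfl
        · exact h'
        · exact absurd (h0 j hj) hc
      have := ih c ⟨i, hi', j, hj, hc⟩ h
      nlinarith
    · push Not at h0
      have hf : ∀ i, Tendsto (fun N => ∑ j ∈ Finset.range K, (c i j : ℝ) * y N ^ j) atTop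
          (𝓝 (∑ j ∈ Finset.range K, (c i j : ℝ) * m ^ j)) := fun i =>
        tendsto_finsetSum _ fun j _ => (hy.pow j).const_mul _
      have hlim : Tendsto (fun N : ℕ => -∑ i ∈ Finset.range I,
          (∑ j ∈ Finset.range K, (c i j : ℝ) * y N ^ j) * ((N : ℝ) ^ i / (N : ℝ) ^ I)) atTop (𝓝 0) := by
        rw [show (0 : ℝ) = -∑ i ∈ Finset.range I,
          (∑ j ∈ Finset.range K, (c i j : ℝ) * m ^ j) * 0 by simp]
        refine (tendsto_finsetSum _ fun i hi => (hf i).mul ?_).neg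
        exact (tendsto_pow_div_pow_atTop_zero (𝕜 := ℝ) (Finset.mem_range.1 hi)).comp
          tendsto_natCast_atTop_atTop
      have hroot : ∑ j ∈ Finset.range K, (c I j : ℝ) * m ^ j = 0 := by
        refine tendsto_nhds_unique (hf I) (hlim.congr' ?_)
        filter_upwards [eventually_ge_atTop 1] with N hN
        have hN0 : (N : ℝ) ^ I ≠ 0 := by positivity
        have h' := h N hN
        have : ∑ i ∈ Finset.range I,
          (∑ j ∈ Finset.range K, (c i j : ℝ) * y N ^ j) * ((N : ℝ) ^ i / (N : ℝ) ^ I)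
          = (∑ i ∈ Finset.range I,
          (∑ j ∈ Finset.range K, (c i j : ℝ) * y N ^ j) * (N : ℝ) ^ i) / (N : ℝ) ^ I := by
          rw [Finset.sum_div]
          exact Finset.sum_congr rfl fun _ _ => by ring
        rw [this]
        field_simp
        linarith
      have := root_bound K (c I) h0 m hm hroot
      nlinarith

theorem hasDeriv_pderiv {l : ℕ} (P : MvPolynomial (Fin l) ℝ) (p : Fin l → ℝ) (i : Fin l) (s : ℝ) :
    HasDerivAt (fun s => MvPolynomial.eval (Function.update p i s) P)
      (MvPolynomial.eval (Function.update p i s) (MvPolynomial.pderiv i P)) s := by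
  induction P using MvPolynomial.induction_on with
  | C a => simpa using hasDerivAt_const s a
  | add P Q hP hQ => simp only [map_add]; exact hP.fun_add hQ
  | mul_X P j hP =>
    simp only [map_mul, MvPolynomial.eval_X, MvPolynomial.pderiv_mul, map_add]
    refine hP.fun_mul ?_
    by_cases h : j = i
    · subst h
      simpa using hasDerivAt_id' s
    · rw [MvPolynomial.pderiv_X_of_ne h]
      simpa [h] using hasDerivAt_const s (p j)

theorem crit {l : ℕ} (P : MvPolynomial (Fin l) ℝ) (p : Fin l → ℝ) (hp : p ∈ Set.Icc (0 : Fin l → ℝ) 1)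
    (hmin : ∀ t ∈ Set.Icc (0 : Fin l → ℝ) 1, MvPolynomial.eval p P ≤ MvPolynomial.eval t P)
    (i : Fin l) : (p i - p i ^ 2) * MvPolynomial.eval p (MvPolynomial.pderiv i P) = 0 := by
  by_cases h0 : p i = 0
  · simp [h0]
  by_cases h1 : p i = 1
  · simp [h1]
  have hp0 : 0 < p i := lt_of_le_of_ne (hp.1 i) (Ne.symm h0)
  have hp1 : p i < 1 := lt_of_le_of_ne (hp.2 i) h1
  have hloc : IsLocalMin (fun s => MvPolynomial.eval (Function.update p i s) P) (p i) := by
    filter_upwards [Ioo_mem_nhds hp0 hp1] with s hs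
    rw [Function.update_eq_self]
    apply hmin
    constructor <;> intro j <;> by_cases hj : j = i
    · subst hj; simpa using hs.1.le
    · simpa [hj] using hp.1 j
    · subst hj; simpa using hs.2.le
    · simpa [hj] using hp.2 j
  have := hloc.hasDerivAt_eq_zero (hasDeriv_pderiv P p i (p i))
  rw [Function.update_eq_self] at this
  rw [this, mul_zero]


/-- Evaluation with the additional large parameter. -/
noncomputable def evN {s l : ℕ} (u : Fin s → ℕ) (N : ℝ) (t : Fin l → ℝ) :
    MvPolynomial (Fin l) (Polynomial (MvPolynomial (Fin s) ℤ)) →+* ℝ :=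
  MvPolynomial.eval₂Hom (Polynomial.eval₂RingHom
    ((Int.castRingHom ℝ).comp (MvPolynomial.eval (fun i => (u i : ℤ)))) N) t

theorem evN_map {s l : ℕ} (u : Fin s → ℕ) (N : ℝ) (t : Fin l → ℝ)
    (F : MvPolynomial (Fin l) (MvPolynomial (Fin s) ℤ)) :
    evN u N t (MvPolynomial.map Polynomial.C F) = ev u t F := by
  simp only [evN, ev, MvPolynomial.coe_eval₂Hom, MvPolynomial.eval₂_map]
  congr 1
  ext <;> simp

theorem ev_eq {s l : ℕ} (u : Fin s → ℕ) (t : Fin l → ℝ)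
    (F : MvPolynomial (Fin l) (MvPolynomial (Fin s) ℤ)) :
    ev u t F = MvPolynomial.eval t (MvPolynomial.map
      ((Int.castRingHom ℝ).comp (MvPolynomial.eval (fun i => (u i : ℤ)))) F) := by
  rw [MvPolynomial.eval_map]; rfl

theorem exists_min {l : ℕ} (P : MvPolynomial (Fin l) ℝ) :
    ∃ p ∈ Set.Icc (0 : Fin l → ℝ) 1, ∀ t ∈ Set.Icc (0 : Fin l → ℝ) 1,
      MvPolynomial.eval p P ≤ MvPolynomial.eval t P := by
  have hc : IsCompact (Set.Icc (0 : Fin l → ℝ) 1) := isCompact_Icc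
  obtain ⟨p, hp, h⟩ := hc.exists_isMinOn ⟨0, by simp⟩
    (MvPolynomial.continuous_eval P).continuousOn
  exact ⟨p, hp, fun t ht => h ht⟩

theorem lower {s l : ℕ} (F : MvPolynomial (Fin l) (MvPolynomial (Fin s) ℤ)) :
    ∃ B : (Fin s → ℕ) → ℕ, Elem B ∧ ∀ u, (∀ t ∈ Set.Icc (0 : Fin l → ℝ) 1, 0 < ev u t F) →
      ∀ t ∈ Set.Icc (0 : Fin l → ℝ) 1, 1 ≤ (B u : ℝ) * ev u t F := by
  classical
  let h : Fin l → MvPolynomial (Fin l) (MvPolynomial (Fin s) ℤ) := fun i =>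
    (MvPolynomial.X i - MvPolynomial.X i ^ 2) * MvPolynomial.pderiv i F
  let g0 : Fin l → MvPolynomial (Fin l) (Polynomial (MvPolynomial (Fin s) ℤ)) := fun i =>
    MvPolynomial.C Polynomial.X * MvPolynomial.map Polynomial.C (h i)
  obtain ⟨d, hd⟩ : ∃ d, ∀ i, (g0 i).totalDegree ≤ d :=
    ⟨Finset.univ.sup fun i => (g0 i).totalDegree, fun i =>
      Finset.le_sup (f := fun i => (g0 i).totalDegree) (Finset.mem_univ i)⟩
  obtain ⟨χ, hχ, hmem⟩ := exists_monic (fun i => MvPolynomial.X i ^ (d + 1) + g0 i) (d + 2)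
    (by
      intro i
      refine lt_of_le_of_lt (MvPolynomial.totalDegree_add _ _) ?_
      rw [MvPolynomial.totalDegree_X_pow]
      have := hd i
      omega) (MvPolynomial.map Polynomial.C F)
  obtain ⟨K, hK⟩ : ∃ K, K = χ.natDegree + 1 := ⟨_, rfl⟩
  obtain ⟨I, hI⟩ : ∃ I, ∀ j < K, (χ.coeff j).natDegree < I :=
    ⟨(Finset.range K).sup (fun j => (χ.coeff j).natDegree) + 1, fun j hj =>
      Nat.lt_succ_of_le (Finset.le_sup (f := fun j => (χ.coeff j).natDegree)
        (Finset.mem_range.2 hj))⟩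
  let c : (Fin s → ℕ) → ℕ → ℕ → ℤ := fun u i j =>
    MvPolynomial.eval (fun i => (u i : ℤ)) ((χ.coeff j).coeff i)
  have hex : ∀ i j, ∃ b : (Fin s → ℕ) → ℕ, Elem b ∧ ∀ u, |c u i j| ≤ b u := fun i j =>
    (IE.poly (fun i => Elem.proj i) ((χ.coeff j).coeff i)).abs_le
  choose b hb hbc using hex
  refine ⟨fun u => 1 + ∑ i ∈ Finset.range I, ∑ j ∈ Finset.range K, b i j u,
    (Elem.const' 1).add' (Elem.sum' _ fun i => Elem.sum' _ fun j => hb i j), ?_⟩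
  intro u hpos
  set φ := ((Int.castRingHom ℝ).comp (MvPolynomial.eval (fun i => (u i : ℤ)))) with hφ
  set P := MvPolynomial.map φ F with hP
  have hev : ∀ t, ev u t F = MvPolynomial.eval t P := fun t => ev_eq u t F
  obtain ⟨p0, hp0, hmin0⟩ := exists_min P
  set m := MvPolynomial.eval p0 P with hmdef
  have hm : 0 < m := by rw [hmdef, ← hev]; exact hpos p0 hp0
  let Q : ℕ → MvPolynomial (Fin l) ℝ := fun N =>
    P + MvPolynomial.C (1 / (((d : ℝ) + 1) * N)) * ∑ i, MvPolynomial.X i ^ (d + 1)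
  have hQev : ∀ N t, MvPolynomial.eval t (Q N)
      = MvPolynomial.eval t P + 1 / (((d : ℝ) + 1) * N) * ∑ i, t i ^ (d + 1) := by
    intro N t; simp [Q]
  have hQd : ∀ N t i, MvPolynomial.eval t (MvPolynomial.pderiv i (Q N))
      = MvPolynomial.eval t (MvPolynomial.pderiv i P)
        + 1 / (((d : ℝ) + 1) * N) * ((d + 1) * t i ^ d) := by
    intro N t i
    simp only [Q, map_add, MvPolynomial.pderiv_C_mul, map_sum, MvPolynomial.pderiv_pow, map_mul,
      MvPolynomial.eval_C]
    congr 2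
    rw [Finset.sum_eq_single i]
    · simp
    · intro j _ hj
      rw [MvPolynomial.pderiv_X_of_ne hj]; simp
    · simp
  choose p hp hmin using fun N => exists_min (Q N)
  have hlow : ∀ N, m ≤ MvPolynomial.eval (p N) P := fun N => hmin0 _ (hp N)
  have hup : ∀ N : ℕ, MvPolynomial.eval (p N) P ≤ m + 1 / (((d : ℝ) + 1) * N) * l := by
    intro N
    have h1 := hmin N p0 hp0
    rw [hQev, hQev] at h1
    have h2 : 0 ≤ 1 / (((d : ℝ) + 1) * N) * ∑ i, p N i ^ (d + 1) :=
      mul_nonneg (by positivity) (Finset.sum_nonneg fun i _ => pow_nonneg ((hp N).1 i) _)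
    have h3 : ∑ i, p0 i ^ (d + 1) ≤ l := by
      calc _ ≤ ∑ i : Fin l, (1 : ℝ) :=
            Finset.sum_le_sum fun i _ => pow_le_one₀ (hp0.1 i) (hp0.2 i)
        _ = l := by simp
    have h4 : 1 / (((d : ℝ) + 1) * N) * ∑ i, p0 i ^ (d + 1) ≤ 1 / (((d : ℝ) + 1) * N) * l :=
      mul_le_mul_of_nonneg_left h3 (by positivity)
    linarith
  have hlim : Filter.Tendsto (fun N => MvPolynomial.eval (p N) P) Filter.atTop (nhds m) := by
    refine tendsto_of_tendsto_of_tendsto_of_le_of_le tendsto_const_nhds ?_ hlow hup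
    have h1 : Filter.Tendsto (fun N : ℕ => ((l : ℝ) / (d + 1)) / (N : ℝ)) Filter.atTop (nhds 0) :=
      tendsto_const_div_atTop_nhds_zero_nat _
    have h2 := h1.const_add m
    rw [add_zero] at h2
    refine h2.congr fun N => ?_
    congr 1
    rw [div_div]; ring
  have hcrit : ∀ N : ℕ, 1 ≤ N → ∀ i, p N i ^ (d + 2) = p N i ^ (d + 1)
      + N * ((p N i - p N i ^ 2) * MvPolynomial.eval (p N) (MvPolynomial.pderiv i P)) := by
    intro N hN i
    have h1 := crit (Q N) (p N) (hp N) (hmin N) i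
    rw [hQd] at h1
    have hN0 : (N : ℝ) ≠ 0 := by positivity
    have hd0 : (d : ℝ) + 1 ≠ 0 := by positivity
    have h2 : 1 / (((d : ℝ) + 1) * N) * ((d + 1) * p N i ^ d) = p N i ^ d / N := by
      field_simp
    rw [h2] at h1
    have h3 : (N : ℝ) * ((p N i - p N i ^ 2) * (MvPolynomial.eval (p N) (MvPolynomial.pderiv i P)
      + p N i ^ d / N)) = N * ((p N i - p N i ^ 2) *
        MvPolynomial.eval (p N) (MvPolynomial.pderiv i P)) + (p N i - p N i ^ 2) * p N i ^ d := by
      field_simp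
    rw [h1, mul_zero] at h3
    have h4 : (p N i - p N i ^ 2) * p N i ^ d = p N i ^ (d + 1) - p N i ^ (d + 2) := by ring
    linarith
  have hzero : ∀ N : ℕ, 1 ≤ N → evN u N (p N)
      (Polynomial.aeval (MvPolynomial.map Polynomial.C F) χ) = 0 := by
    intro N hN
    refine Ideal.span_le (I := RingHom.ker (evN u N (p N))).2 ?_ hmem
    rintro _ ⟨i, rfl⟩
    simp only [SetLike.mem_coe, RingHom.mem_ker, map_sub, map_add, map_pow, g0, map_mul, evN_map]
    have e1 : evN u N (p N) (MvPolynomial.X i) = p N i := by simp [evN]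
    have e2 : evN u N (p N) (MvPolynomial.C Polynomial.X) = N := by simp [evN]
    have e3 : ev u (p N) (h i) = (p N i - p N i ^ 2) *
        MvPolynomial.eval (p N) (MvPolynomial.pderiv i P) := by
      simp only [h, map_mul, map_sub, map_pow, ev_X]
      rw [ev_eq, hP, MvPolynomial.pderiv_map]
    rw [e1, e2, e3, hcrit N hN i, sub_self]
  have hbd := arr_bound K (fun N => MvPolynomial.eval (p N) P) m hm hlim I (c u)
    (by
      refine ⟨0, ?_, χ.natDegree, by omega, ?_⟩
      · have := hI χ.natDegree (by omega); omega
      · simp only [c]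
        rw [Polynomial.coeff_natDegree, hχ.leadingCoeff]
        simp)
    (by
      intro N hN
      rw [← hzero N hN, Polynomial.aeval_def, Polynomial.hom_eval₂, evN_map, hev,
        Polynomial.eval₂_eq_sum_range, ← hK]
      simp only [Finset.sum_mul]
      rw [Finset.sum_comm]
      refine Finset.sum_congr rfl fun j hj => ?_
      have e1 : ((evN u N (p N)).comp (algebraMap (Polynomial (MvPolynomial (Fin s) ℤ)) _))
          (χ.coeff j) = Polynomial.eval₂ φ (N : ℝ) (χ.coeff j) := by
        simp [evN, MvPolynomial.algebraMap_eq, hφ]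
      rw [e1, Polynomial.eval₂_eq_sum_range' φ (hI j (Finset.mem_range.1 hj)), Finset.sum_mul]
      refine Finset.sum_congr rfl fun i _ => ?_
      simp only [c, hφ, RingHom.comp_apply, eq_intCast]
      ring)
  intro t ht
  have hle : m ≤ ev u t F := by rw [hev]; exact hmin0 t ht
  have hB : (1 + ∑ i ∈ Finset.range I, ∑ j ∈ Finset.range K, |(c u i j : ℝ)|)
      ≤ ((1 + ∑ i ∈ Finset.range I, ∑ j ∈ Finset.range K, b i j u : ℕ) : ℝ) := by
    push_cast
    gcongr with i _ j _
    exact_mod_cast hbc i j u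
  calc (1 : ℝ) ≤ _ := hbd
    _ ≤ m * ((1 + ∑ i ∈ Finset.range I, ∑ j ∈ Finset.range K, b i j u : ℕ) : ℝ) := by gcongr
    _ ≤ ev u t F * ((1 + ∑ i ∈ Finset.range I, ∑ j ∈ Finset.range K, b i j u : ℕ) : ℝ) := by gcongr
    _ = _ := mul_comm _ _

/-- Positivity of a parametrized polynomial on the unit cube is elementary. -/
theorem pos_EP {s l : ℕ} (F : MvPolynomial (Fin l) (MvPolynomial (Fin s) ℤ)) :
    EP (fun u : Fin s → ℕ => ∀ t ∈ Set.Icc (0 : Fin l → ℝ) 1, 0 < ev u t F) := by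
  obtain ⟨B, hB, hlow⟩ := lower F
  obtain ⟨K, hK, hlip⟩ := lip F
  have hMel : Elem (fun u => B u * K u + 1) := (hB.mul' hK).add' (Elem.const' 1)
  have h := EP.ball (l := l) (n := s) (P := fun u g =>
      (1 : ℝ) ≤ B u * ev u (fun j => (g j : ℝ) / ((B u * K u + 1 : ℕ) : ℝ)) F)
    (by
      intro m G T hG hT
      exact grid_EP' F hG hT (M := fun x => B (fun i => G i x) * K (fun i => G i x) + 1)
        (Elem.comp hMel hG) (fun x => Nat.succ_pos _) (Elem.comp hB hG))
    hMel
  refine h.of_iff fun u => ⟨fun H => ?_, fun H => ?_⟩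
  · by_contra hcon
    push Not at hcon
    obtain ⟨t, ht, hle⟩ := hcon
    set M : ℕ := B u * K u + 1 with hM
    have hM0 : (0 : ℝ) < M := by positivity
    have hfl : ∀ j, (⌊t j * M⌋₊ : ℝ) ≤ t j * M := fun j =>
      Nat.floor_le (mul_nonneg (ht.1 j) hM0.le)
    have hfl' : ∀ j, t j * M < (⌊t j * M⌋₊ : ℝ) + 1 := fun j => Nat.lt_floor_add_one _
    have ht1 : ∀ j, t j * M ≤ M := fun j => mul_le_of_le_one_left hM0.le (ht.2 j)
    have h1 := H (fun j => ⌊t j * M⌋₊) (fun j => by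
      have : (⌊t j * M⌋₊ : ℝ) ≤ M := (hfl j).trans (ht1 j)
      exact_mod_cast this)
    have h2 := (hlip u (fun j => (⌊t j * M⌋₊ : ℝ) / M) t
      (fun j => by
        rw [abs_of_nonneg (by positivity), div_le_one hM0]
        exact (hfl j).trans (ht1 j))
      (fun j => by rw [abs_of_nonneg (ht.1 j)]; exact ht.2 j)
      (1 / M) (by positivity)
      (fun j => by
        have e : (⌊t j * M⌋₊ : ℝ) / M - t j = ((⌊t j * M⌋₊ : ℝ) - t j * M) / M := by field_simp
        rw [e, abs_div, abs_of_pos hM0]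
        have : |(⌊t j * M⌋₊ : ℝ) - t j * M| ≤ 1 := by
          rw [abs_le]; constructor <;> linarith [hfl j, hfl' j]
        gcongr)).2
    have h3 : ev u (fun j => (⌊t j * M⌋₊ : ℝ) / M) F ≤ K u * (1 / M) := by
      linarith [le_abs_self (ev u (fun j => (⌊t j * M⌋₊ : ℝ) / M) F - ev u t F)]
    have h4 : (B u : ℝ) * ev u (fun j => (⌊t j * M⌋₊ : ℝ) / M) F ≤ B u * (K u * (1 / M)) := by
      gcongr
    have h5 : (B u : ℝ) * (K u * (1 / M)) < 1 := by
      rw [mul_one_div, ← mul_div_assoc, div_lt_one hM0, hM]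
      push_cast
      linarith
    linarith
  · intro g hg
    apply hlow u H
    have hM0 : (0 : ℝ) < ((B u * K u + 1 : ℕ) : ℝ) := by positivity
    constructor
    · intro j
      show (0 : ℝ) ≤ _
      positivity
    · intro j
      show _ ≤ (1 : ℝ)
      rw [div_le_one hM0]
      exact_mod_cast hg j

theorem homog {l : ℕ} (a b : ℕ) (hb : 0 < b) (G : MvPolynomial (Fin l) ℤ) :
    ∃ d : ℕ, ∃ F : MvPolynomial (Fin l) (MvPolynomial (Fin (l + 1)) ℤ),
      ∀ u : Fin (l + 1) → ℕ, 0 < u 0 → ∀ t : Fin l → ℝ,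
      ev u t F = ((b : ℝ) * u 0) ^ d *
        MvPolynomial.aeval (fun i => ((u i.succ : ℝ) + t i) * (a / b) / (u 0 : ℝ)) G := by
  induction G using MvPolynomial.induction_on with
  | C c => exact ⟨0, MvPolynomial.C (MvPolynomial.C c), by intro u hu t; rw [ev_C]; simp⟩
  | add p q hp hq =>
    obtain ⟨d, F, H⟩ := hp
    obtain ⟨d', F', H'⟩ := hq
    refine ⟨d + d', MvPolynomial.C (((b : MvPolynomial (Fin (l + 1)) ℤ) * MvPolynomial.X 0) ^ d') * F
      + MvPolynomial.C (((b : MvPolynomial (Fin (l + 1)) ℤ) * MvPolynomial.X 0) ^ d) * F', ?_⟩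
    intro u hu t
    simp only [map_add, map_mul, map_pow, H u hu t, H' u hu t, ev_C]
    simp
    ring
  | mul_X p i hp =>
    obtain ⟨d, F, H⟩ := hp
    refine ⟨d + 1, F * (MvPolynomial.C ((a : MvPolynomial (Fin (l + 1)) ℤ) * MvPolynomial.X i.succ)
      + MvPolynomial.C ((a : MvPolynomial (Fin (l + 1)) ℤ)) * MvPolynomial.X i), ?_⟩
    intro u hu t
    have hu' : (u 0 : ℝ) ≠ 0 := by positivity
    have hb' : (b : ℝ) ≠ 0 := by positivity
    simp only [map_mul, map_add, H u hu t, MvPolynomial.aeval_X, ev_C, ev_X]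
    simp only [MvPolynomial.eval_X, map_natCast, Int.cast_natCast]
    generalize (MvPolynomial.aeval (fun i => ((u i.succ : ℝ) + t i) * (a / b) / (u 0 : ℝ)) p) = w
    field_simp
    ring

/-- For a bounded basic open semialgebraic set `D ⊆ [0,r]^ℓ`
defined by integer-coefficient polynomials, there is an elementary function
`φ : ℕ^{ℓ+1} → ℕ` deciding whether the cube `C_n(k)` is contained in `D`. -/
theorem cube_in_domain_elementary
    (ℓ q : ℕ) (r : ℚ) (hr : 0 < r)
    (G : Fin q → MvPolynomial (Fin ℓ) ℤ)
    (D : Set (Fin ℓ → ℝ))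
    (hD : D = {x : Fin ℓ → ℝ | ∀ i, 0 < MvPolynomial.aeval x (G i)})
    (hsub : D ⊆ Set.univ.pi fun _ => Set.Icc (0 : ℝ) (r : ℝ)) :
    ∃ φ : (Fin (ℓ + 1) → ℕ) → ℕ, Elem φ ∧
      ∀ n : ℕ, 1 ≤ n → ∀ k : Fin ℓ → ℕ, (∀ i, k i < n) →
        (smallCube ℓ r n k ⊆ D → φ (Fin.cons n k) = 1) ∧
        (¬ smallCube ℓ r n k ⊆ D → φ (Fin.cons n k) = 0) := by
  obtain ⟨a, b, hb, ha, hrab⟩ : ∃ a b : ℕ, 0 < b ∧ 0 < a ∧ (r : ℝ) = a / b := by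
    refine ⟨r.num.toNat, r.den, r.den_pos, ?_, ?_⟩
    · have := Rat.num_pos.2 hr; omega
    · have h0 : ((r.num.toNat : ℤ) : ℝ) = (r.num : ℝ) := by
        rw [Int.toNat_of_nonneg (Rat.num_pos.2 hr).le]
      rw [Rat.cast_def, ← h0, Int.cast_natCast]
  choose d F hF using fun i => homog a b hb (G i)
  obtain ⟨φ, hφ, h⟩ := EP.fall (fun i => pos_EP (F i))
  refine ⟨φ, hφ, fun n hn k _ => ?_⟩
  have hn0 : (0 : ℝ) < n := by positivity
  have hr0 : (0 : ℝ) < r := by exact_mod_cast hr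
  have key : smallCube ℓ r n k ⊆ D ↔
      ∀ i, ∀ t ∈ Set.Icc (0 : Fin ℓ → ℝ) 1, 0 < ev (Fin.cons n k) t (F i) := by
    have hcb : (0 : ℝ) < (b : ℝ) * n := by positivity
    have hev : ∀ i t, 0 < ev (Fin.cons n k) t (F i) ↔
        0 < MvPolynomial.aeval (fun j => ((k j : ℝ) + t j) * r / (n : ℝ)) (G i) := by
      intro i t
      rw [hF i (Fin.cons n k) (by rw [Fin.cons_zero]; omega) t]
      simp only [Fin.cons_zero, Fin.cons_succ, ← hrab]
      exact mul_pos_iff_of_pos_left (pow_pos hcb _)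
    simp only [hev]
    rw [hD]
    constructor
    · intro H i t ht
      refine H ?_ i
      intro j _
      have h1 : 0 ≤ t j := ht.1 j
      have h2 : t j ≤ 1 := ht.2 j
      constructor
      · show (k j : ℝ) * r / n ≤ ((k j : ℝ) + t j) * r / (n : ℝ)
        gcongr
        linarith
      · show ((k j : ℝ) + t j) * r / (n : ℝ) ≤ ((k j : ℝ) + 1) * r / n
        gcongr
    · intro H x hx i
      have hx' : ∀ j, (k j : ℝ) * r / n ≤ x j ∧ x j ≤ ((k j : ℝ) + 1) * r / n := fun j => hx j trivial
      have := H i (fun j => x j * n / r - k j) ⟨fun j => ?_, fun j => ?_⟩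
      · convert this using 3
        funext j
        field_simp
        ring
      · have := (hx' j).1
        rw [div_le_iff₀ hn0] at this
        show (0 : ℝ) ≤ _
        rw [sub_nonneg, le_div_iff₀ hr0]
        exact this
      · have := (hx' j).2
        rw [le_div_iff₀ hn0] at this
        show _ ≤ (1 : ℝ)
        rw [sub_le_iff_le_add, div_le_iff₀ hr0]
        linarith
  exact ⟨fun H => (h _).1 (key.1 H), fun H => (h _).2 (fun H' => H (key.2 H'))⟩
end
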